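/- Let k ≥ 1 and s ≥ 1 be integers and F(y) = Σ_{j=1}^k a_j y^j with a_k ≠ 0; set A_k := max{ j·|a_j| : 1 ≤ j ≤ k }. There exists a constant c_s = c(s,k,|a_k|) > 0 such that for all constants c₀, C₀, C > 0 and every T > 0 there exists a constant C̃_s > 0 depending only on s, k, T, c₀, C₀, C and a_1,…,a_k with the following property: for every ε > 0, every Schwartz-class solution u of the KdV equation on [0,T] and every Schwartz-class solution U of the gKdV equation on [0,T] whose initial data u₀ := u(0) ≠ 0 and U₀ := U(0) ≠ 0 satisfy T ≤ c_s · min{ (A_k Σ_{j=1}^k ‖U₀‖_{H^{s+1}}^j)^{-1}, ‖u₀‖_{H^{s+1}}^{-1} }, ‖u₀‖_{H^{s+1}} ≤ c₀ ε, ‖U₀‖_{H^{s+1}} ≤ C₀ ε, and ‖u₀ − U₀‖_{H^s} ≤ C·max{ε², ε^{k+1}}, one has sup_{t ∈ [0,T]} ‖u(t) − U(t)‖_{L^∞} ≤ sup_{t ∈ [0,T]} ‖u(t) − U(t)‖_{H^s} ≤ C̃_s·max{ε², ε^{k+1}}. -/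

import Mathlib

open MeasureTheory Real

/-- The Sobolev `H^s` norm of a function `f : ℝ → ℝ`. -/
noncomputable def hNorm (s : ℕ) (f : ℝ → ℝ) : ℝ :=
  Real.sqrt (∑ n ∈ Finset.range (s + 1), ∫ x : ℝ, (iteratedDeriv n f x) ^ 2)

/-- The `L^∞` (sup) norm of `f : ℝ → ℝ`. -/
noncomputable def linfNorm (f : ℝ → ℝ) : ℝ := ⨆ x : ℝ, |f x|

/-- A Schwartz-class solution of `∂ₜU + ∂ₓ³U + F(U) ∂ₓU = 0` on `[0,T]`. -/
def IsSchwartzSolution (F : ℝ → ℝ) (T : ℝ) (U : ℝ → SchwartzMap ℝ ℝ) : Prop :=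
  ContDiff ℝ (⊤ : ℕ∞) (fun p : ℝ × ℝ => U p.1 p.2) ∧
  ∀ t ∈ Set.Icc (0 : ℝ) T, ∀ x : ℝ,
    deriv (fun τ : ℝ => U τ x) t + iteratedDeriv 3 (⇑(U t)) x
      + F (U t x) * deriv (⇑(U t)) x = 0

/-- `A_k = max { j·|a_j| : 1 ≤ j ≤ k }`. -/
noncomputable def coefA (k : ℕ) (a : ℕ → ℝ) : ℝ :=
  (((Finset.Icc 1 k).sup fun j => (j : NNReal) * ‖a j‖₊) : NNReal).toReal

namespace KG

def IsS (f : ℝ → ℝ) : Prop := ∃ g : SchwartzMap ℝ ℝ, f = ⇑g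

lemma isS (g : SchwartzMap ℝ ℝ) : IsS ⇑g := ⟨g, rfl⟩

lemma IsS.congr {f g : ℝ → ℝ} (hf : IsS f) (h : ∀ x, g x = f x) : IsS g := by
  have : g = f := funext h
  rw [this]; exact hf

lemma IsS.contDiff {f : ℝ → ℝ} (hf : IsS f) {n : ℕ∞} : ContDiff ℝ n f := by
  obtain ⟨g, rfl⟩ := hf
  exact g.smooth n

lemma IsS.continuous {f : ℝ → ℝ} (hf : IsS f) : Continuous f :=
  (hf.contDiff (n := 0)).continuous

lemma IsS.differentiable {f : ℝ → ℝ} (hf : IsS f) : Differentiable ℝ f :=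
  (hf.contDiff (n := 1)).differentiable (by simp)

lemma IsS.hasDerivAt {f : ℝ → ℝ} (hf : IsS f) (x : ℝ) : HasDerivAt f (deriv f x) x :=
  (hf.differentiable x).hasDerivAt

lemma IsS.zero : IsS (fun _ => 0) := ⟨0, by ext; simp⟩

lemma IsS.add {f g : ℝ → ℝ} (hf : IsS f) (hg : IsS g) : IsS (fun x => f x + g x) := by
  obtain ⟨f, rfl⟩ := hf
  obtain ⟨g, rfl⟩ := hg
  exact ⟨f + g, by ext; simp⟩

lemma IsS.sub {f g : ℝ → ℝ} (hf : IsS f) (hg : IsS g) : IsS (fun x => f x - g x) := by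
  obtain ⟨f, rfl⟩ := hf
  obtain ⟨g, rfl⟩ := hg
  exact ⟨f - g, by ext; simp⟩

lemma IsS.neg {f : ℝ → ℝ} (hf : IsS f) : IsS (fun x => - f x) := by
  obtain ⟨f, rfl⟩ := hf
  exact ⟨-f, by ext; simp⟩

lemma IsS.const_mul {f : ℝ → ℝ} (c : ℝ) (hf : IsS f) : IsS (fun x => c * f x) := by
  obtain ⟨f, rfl⟩ := hf
  exact ⟨c • f, by ext; simp⟩

lemma IsS.mul {f g : ℝ → ℝ} (hf : IsS f) (hg : IsS g) : IsS (fun x => f x * g x) := by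
  obtain ⟨f, rfl⟩ := hf
  obtain ⟨g, rfl⟩ := hg
  exact ⟨SchwartzMap.pairing (ContinuousLinearMap.mul ℝ ℝ) f g, by
    ext; simp [SchwartzMap.pairing_apply_apply]⟩

lemma IsS.sq {f : ℝ → ℝ} (hf : IsS f) : IsS (fun x => f x ^ 2) :=
  (hf.mul hf).congr fun x => by ring

lemma IsS.sum {ι : Type*} (s : Finset ι) {f : ι → ℝ → ℝ} (hf : ∀ i ∈ s, IsS (f i)) :
    IsS (fun x => ∑ i ∈ s, f i x) := by
  classical
  induction s using Finset.induction_on with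
  | empty => exact IsS.zero.congr fun x => by simp
  | insert a s ha ih =>
    refine ((hf a (by simp)).add (ih fun i hi => hf i (by simp [hi]))).congr fun x => ?_
    rw [Finset.sum_insert ha]

lemma IsS.deriv {f : ℝ → ℝ} (hf : IsS f) : IsS (deriv f) := by
  obtain ⟨f, rfl⟩ := hf
  exact ⟨SchwartzMap.derivCLM ℝ ℝ f, by ext; simp [SchwartzMap.derivCLM_apply]⟩

lemma IsS.iter {f : ℝ → ℝ} (hf : IsS f) (n : ℕ) : IsS (iteratedDeriv n f) := by
  induction n with
  | zero => simpa [iteratedDeriv_zero] using hf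
  | succ n ih => rw [iteratedDeriv_succ]; exact ih.deriv

lemma IsS.shift {f : ℝ → ℝ} (hf : IsS f) (h : ℝ) : IsS (fun x => f (x + h)) := by
  obtain ⟨f, rfl⟩ := hf
  exact ⟨SchwartzMap.compSubConstCLM ℝ (-h) f, by ext; simp⟩

lemma IsS.integrable {f : ℝ → ℝ} (hf : IsS f) : Integrable f := by
  obtain ⟨f, rfl⟩ := hf
  exact f.integrable

lemma IsS.polymul {f g : ℝ → ℝ} (hf : IsS f) (hg : IsS g) (P : Polynomial ℝ) :
    IsS (fun x => P.eval (f x) * g x) := by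
  induction P using Polynomial.induction_on' with
  | add p q hp hq => exact (hp.add hq).congr fun x => by simp; ring
  | monomial n a =>
    induction n with
    | zero => exact (hg.const_mul a).congr fun x => by simp
    | succ n ih => exact (hf.mul ih).congr fun x => by simp; ring

lemma IsS.poly {f : ℝ → ℝ} (hf : IsS f) (P : Polynomial ℝ) (hP : P.eval 0 = 0) :
    IsS (fun x => P.eval (f x)) := by
  have h : Polynomial.X ∣ P := by
    rw [Polynomial.X_dvd_iff, Polynomial.coeff_zero_eq_eval_zero, hP]
  obtain ⟨Q, rfl⟩ := h
  exact (hf.polymul hf Q).congr fun x => by simp; ring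

lemma IsS.bdd {f : ℝ → ℝ} (hf : IsS f) : ∃ C, 0 ≤ C ∧ ∀ x, |f x| ≤ C := by
  obtain ⟨f, rfl⟩ := hf
  refine ⟨SchwartzMap.seminorm ℝ 0 0 f, apply_nonneg _ _, fun x => ?_⟩
  simpa using SchwartzMap.norm_le_seminorm ℝ f x

lemma IsS.decay2 {f : ℝ → ℝ} (hf : IsS f) : ∃ C, 0 ≤ C ∧ ∀ x, (1 + x ^ 2) * |f x| ≤ C := by
  obtain ⟨f, rfl⟩ := hf
  refine ⟨SchwartzMap.seminorm ℝ 0 0 f + SchwartzMap.seminorm ℝ 2 0 f, by positivity, fun x => ?_⟩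
  have h1 := SchwartzMap.norm_le_seminorm ℝ f x
  have h2 := SchwartzMap.norm_pow_mul_le_seminorm ℝ f 2 x
  simp only [Real.norm_eq_abs, sq_abs] at h1 h2
  nlinarith

lemma IsS.tendsto_top {f : ℝ → ℝ} (hf : IsS f) : Filter.Tendsto f Filter.atTop (nhds 0) := by
  obtain ⟨f, rfl⟩ := hf
  exact f.tendsto_cocompact.mono_left atTop_le_cocompact

lemma IsS.tendsto_bot {f : ℝ → ℝ} (hf : IsS f) : Filter.Tendsto f Filter.atBot (nhds 0) := by
  obtain ⟨f, rfl⟩ := hf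
  exact f.tendsto_cocompact.mono_left atBot_le_cocompact

/-- L2 norm. -/
noncomputable def nrm (f : ℝ → ℝ) : ℝ := Real.sqrt (∫ x, f x ^ 2)

lemma nrm_nonneg (f : ℝ → ℝ) : 0 ≤ nrm f := Real.sqrt_nonneg _

lemma int_sq_nonneg (f : ℝ → ℝ) : 0 ≤ ∫ x, f x ^ 2 := integral_nonneg fun _ => sq_nonneg _

lemma nrm_sq (f : ℝ → ℝ) : nrm f ^ 2 = ∫ x, f x ^ 2 := Real.sq_sqrt (int_sq_nonneg f)

lemma IsS.abs_int {f : ℝ → ℝ} (hf : IsS f) : Integrable (fun x => |f x|) := hf.integrable.abs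

lemma cs_abs {f g : ℝ → ℝ} (hf : IsS f) (hg : IsS g) :
    ∫ x, |f x * g x| ≤ nrm f * nrm g := by
  have hfg := (hf.mul hg).abs_int
  have key : ∀ a b : ℝ, 2 * (a * b) * ∫ x, |f x * g x| ≤ a ^ 2 * nrm f ^ 2 + b ^ 2 * nrm g ^ 2 := by
    intro a b
    rw [nrm_sq, nrm_sq, ← integral_const_mul, ← integral_const_mul, ← integral_const_mul,
      ← integral_add (hf.sq.integrable.const_mul _) (hg.sq.integrable.const_mul _)]
    refine integral_mono (hfg.const_mul _)
      ((hf.sq.integrable.const_mul _).add (hg.sq.integrable.const_mul _)) fun x => ?_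
    rw [abs_mul]
    have := sq_nonneg (a * |f x| - b * |g x|)
    have h1 := sq_abs (f x)
    have h2 := sq_abs (g x)
    nlinarith
  have hI : 0 ≤ ∫ x, |f x * g x| := integral_nonneg fun _ => abs_nonneg _
  have h1 := nrm_nonneg f
  have h2 := nrm_nonneg g
  rcases h1.eq_or_lt with h | h
  · have := key ((∫ x, |f x * g x|)⁻¹ * (1 + nrm g ^ 2)) 1
    rw [← h] at this ⊢
    rcases hI.eq_or_lt with h' | h'
    · rw [← h']; simp
    · have e : (∫ x, |f x * g x|)⁻¹ * (∫ x, |f x * g x|) = 1 := inv_mul_cancel₀ h'.ne'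
      nlinarith [sq_nonneg (nrm g)]
  · rcases h2.eq_or_lt with h3 | h3
    · have := key 1 ((∫ x, |f x * g x|)⁻¹ * (1 + nrm f ^ 2))
      rw [← h3] at this ⊢
      rcases hI.eq_or_lt with h' | h'
      · rw [← h']; simp
      · have e : (∫ x, |f x * g x|)⁻¹ * (∫ x, |f x * g x|) = 1 := inv_mul_cancel₀ h'.ne'
        nlinarith [sq_nonneg (nrm f)]
    · have := key (nrm g) (nrm f)
      have hp : 0 < 2 * (nrm g * nrm f) := by positivity
      refine le_of_mul_le_mul_left (a := 2 * (nrm g * nrm f)) ?_ hp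
      nlinarith

lemma cs_int {f g : ℝ → ℝ} (hf : IsS f) (hg : IsS g) :
    |∫ x, f x * g x| ≤ nrm f * nrm g :=
  (abs_integral_le_integral_abs).trans (cs_abs hf hg)

lemma nrm_add {f g : ℝ → ℝ} (hf : IsS f) (hg : IsS g) :
    nrm (fun x => f x + g x) ≤ nrm f + nrm g := by
  have h := cs_int hf hg
  refine Real.sqrt_le_iff.2 ⟨add_nonneg (nrm_nonneg _) (nrm_nonneg _), ?_⟩
  have : ∫ x, (f x + g x) ^ 2 = (∫ x, f x ^ 2) + 2 * (∫ x, f x * g x) + ∫ x, g x ^ 2 := by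
    rw [← integral_const_mul, ← integral_add hf.sq.integrable ((hf.mul hg).integrable.const_mul _),
      ← integral_add (f := fun x => f x ^ 2 + 2 * (f x * g x))
        (hf.sq.add ((hf.mul hg).const_mul 2)).integrable hg.sq.integrable]
    congr 1; ext x; ring
  rw [this, ← nrm_sq, ← nrm_sq]
  nlinarith [abs_le.1 h]

lemma nrm_const_mul (c : ℝ) (f : ℝ → ℝ) : nrm (fun x => c * f x) = |c| * nrm f := by
  unfold nrm
  simp_rw [mul_pow]
  rw [integral_const_mul, Real.sqrt_mul (sq_nonneg c), Real.sqrt_sq_eq_abs]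

lemma nrm_neg (f : ℝ → ℝ) : nrm (fun x => - f x) = nrm f := by
  unfold nrm; simp

lemma nrm_sub {f g : ℝ → ℝ} (hf : IsS f) (hg : IsS g) :
    nrm (fun x => f x - g x) ≤ nrm f + nrm g := by
  have := nrm_add hf hg.neg
  rw [nrm_neg] at this
  simpa [sub_eq_add_neg] using this

lemma nrm_zero : nrm (fun _ => 0) = 0 := by simp [nrm]

lemma nrm_sum {ι : Type*} (s : Finset ι) {f : ι → ℝ → ℝ} (hf : ∀ i ∈ s, IsS (f i)) :
    nrm (fun x => ∑ i ∈ s, f i x) ≤ ∑ i ∈ s, nrm (f i) := by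
  classical
  induction s using Finset.induction_on with
  | empty => simp [nrm]
  | insert a s ha ih =>
    simp_rw [Finset.sum_insert ha]
    refine (nrm_add (hf a (by simp)) (IsS.sum s fun i hi => hf i (by simp [hi]))).trans ?_
    gcongr
    exact ih fun i hi => hf i (by simp [hi])

lemma nrm_mono {f g : ℝ → ℝ} (hf : IsS f) (hg : IsS g) (h : ∀ x, |f x| ≤ |g x|) :
    nrm f ≤ nrm g := by
  refine Real.sqrt_le_sqrt (integral_mono hf.sq.integrable hg.sq.integrable fun x => ?_)
  exact sq_le_sq.2 (h x)

lemma nrm_mul_le {f g : ℝ → ℝ} (hf : IsS f) (hg : IsS g) {B : ℝ} (h : ∀ x, |f x| ≤ B) :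
    nrm (fun x => f x * g x) ≤ B * nrm g := by
  have hB : 0 ≤ B := (abs_nonneg _).trans (h 0)
  have := nrm_mono (hf.mul hg) (hg.const_mul B) fun x => by
    rw [abs_mul, abs_mul, abs_of_nonneg hB]
    exact mul_le_mul_of_nonneg_right (h x) (abs_nonneg _)
  rwa [nrm_const_mul, abs_of_nonneg hB] at this

lemma nrm_shift (f : ℝ → ℝ) (h : ℝ) : nrm (fun x => f (x + h)) = nrm f := by
  unfold nrm
  rw [integral_add_right_eq_self (fun x => f x ^ 2) h]

lemma int_parts {f g : ℝ → ℝ} (hf : IsS f) (hg : IsS g) :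
    ∫ x, f x * deriv g x = - ∫ x, deriv f x * g x := by
  refine integral_mul_deriv_eq_deriv_mul_of_integrable (fun x _ => hf.hasDerivAt x)
    (fun x _ => hg.hasDerivAt x) (hf.mul hg.deriv).integrable (hf.deriv.mul hg).integrable
    (hf.mul hg).integrable

/-- 1D Sobolev. -/
lemma sobolev {f : ℝ → ℝ} (hf : IsS f) (x : ℝ) : f x ^ 2 ≤ nrm f * nrm (deriv f) := by
  have hd : ∀ y, HasDerivAt (fun y => f y ^ 2) (2 * (f y * deriv f y)) y := fun y => by
    refine ((hf.hasDerivAt y).fun_pow 2).congr_deriv ?_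
    push_cast; ring
  have hff := hf.mul hf.deriv
  have hI : Integrable (fun y => 2 * (f y * deriv f y)) := hff.integrable.const_mul 2
  have h1 : ∫ y in Set.Iic x, 2 * (f y * deriv f y) = f x ^ 2 - 0 :=
    integral_Iic_of_hasDerivAt_of_tendsto' (fun y _ => hd y) hI.integrableOn hf.sq.tendsto_bot
  have h2 : ∫ y in Set.Ioi x, 2 * (f y * deriv f y) = 0 - f x ^ 2 :=
    integral_Ioi_of_hasDerivAt_of_tendsto' (fun y _ => hd y) hI.integrableOn hf.sq.tendsto_top
  have h3 : |∫ y in Set.Iic x, 2 * (f y * deriv f y)| ≤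
      ∫ y in Set.Iic x, |2 * (f y * deriv f y)| := abs_integral_le_integral_abs
  have h4 : |∫ y in Set.Ioi x, 2 * (f y * deriv f y)| ≤
      ∫ y in Set.Ioi x, |2 * (f y * deriv f y)| := abs_integral_le_integral_abs
  have h5 : (∫ y in Set.Iic x, |2 * (f y * deriv f y)|) + ∫ y in Set.Ioi x, |2 * (f y * deriv f y)|
      = ∫ y, |2 * (f y * deriv f y)| := by
    have := integral_add_compl (measurableSet_Iic (a := x)) hI.abs
    rwa [Set.compl_Iic] at this
  have h6 : ∫ y, |2 * (f y * deriv f y)| = 2 * ∫ y, |f y * deriv f y| := by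
    rw [← integral_const_mul]; congr 1; ext y; rw [abs_mul]; simp
  have h7 := cs_abs hf hf.deriv
  rw [h1, sub_zero] at h3
  rw [h2, zero_sub, abs_neg] at h4
  have := le_abs_self (f x ^ 2)
  linarith

end KG

namespace KG

lemma hNorm_nonneg (m : ℕ) (f : ℝ → ℝ) : 0 ≤ hNorm m f := Real.sqrt_nonneg _

lemma hNorm_sq (m : ℕ) (f : ℝ → ℝ) :
    hNorm m f ^ 2 = ∑ n ∈ Finset.range (m + 1), nrm (iteratedDeriv n f) ^ 2 := by
  unfold hNorm
  rw [Real.sq_sqrt (Finset.sum_nonneg fun n _ => int_sq_nonneg _)]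
  exact Finset.sum_congr rfl fun n _ => (nrm_sq _).symm

lemma hNorm_sq_succ (m : ℕ) (f : ℝ → ℝ) :
    hNorm (m + 1) f ^ 2 = hNorm m f ^ 2 + nrm (iteratedDeriv (m + 1) f) ^ 2 := by
  rw [hNorm_sq, hNorm_sq, Finset.sum_range_succ]

lemma nrm_le_hNorm {n m : ℕ} (h : n ≤ m) (f : ℝ → ℝ) : nrm (iteratedDeriv n f) ≤ hNorm m f := by
  refine abs_le_of_sq_le_sq' ?_ (hNorm_nonneg _ _) |>.2
  rw [hNorm_sq]
  exact Finset.single_le_sum (f := fun n => nrm (iteratedDeriv n f) ^ 2)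
    (fun i _ => sq_nonneg _) (Finset.mem_range.2 (by omega))

lemma hNorm_mono {n m : ℕ} (h : n ≤ m) (f : ℝ → ℝ) : hNorm n f ≤ hNorm m f := by
  refine abs_le_of_sq_le_sq' ?_ (hNorm_nonneg _ _) |>.2
  rw [hNorm_sq, hNorm_sq]
  exact Finset.sum_le_sum_of_subset_of_nonneg (Finset.range_mono (by omega))
    fun i _ _ => sq_nonneg _

lemma hNorm_le_of {m : ℕ} {f : ℝ → ℝ} {B : ℝ} (hB : 0 ≤ B)
    (h : ∀ n ≤ m, nrm (iteratedDeriv n f) ≤ B) : hNorm m f ≤ (m + 1) * B := by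
  refine abs_le_of_sq_le_sq' ?_ (by positivity) |>.2
  rw [hNorm_sq]
  have : ∑ n ∈ Finset.range (m + 1), nrm (iteratedDeriv n f) ^ 2 ≤
      ∑ n ∈ Finset.range (m + 1), B ^ 2 := Finset.sum_le_sum fun n hn => by
    have := h n (by have := Finset.mem_range.1 hn; omega)
    have h0 := nrm_nonneg (iteratedDeriv n f)
    gcongr
  refine this.trans ?_
  rw [Finset.sum_const, Finset.card_range, nsmul_eq_mul, mul_pow]
  push_cast
  have : (0:ℝ) ≤ m := Nat.cast_nonneg m
  nlinarith [mul_nonneg this (sq_nonneg B), mul_nonneg (mul_nonneg this this) (sq_nonneg B)]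

lemma sup_le_hNorm {n m : ℕ} (h : n + 1 ≤ m) {f : ℝ → ℝ} (hf : IsS f) (x : ℝ) :
    |iteratedDeriv n f x| ≤ hNorm m f := by
  refine abs_le_of_sq_le_sq ?_ (hNorm_nonneg _ _)
  have h1 := sobolev (hf.iter n) x
  rw [← iteratedDeriv_succ] at h1
  refine h1.trans ?_
  rw [sq]
  have := nrm_le_hNorm (show n ≤ m by omega) f
  have := nrm_le_hNorm h f
  have := nrm_nonneg (iteratedDeriv n f)
  have := nrm_nonneg (iteratedDeriv (n + 1) f)
  have := hNorm_nonneg m f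
  gcongr

lemma sup_le_hNorm0 {m : ℕ} (h : 1 ≤ m) {f : ℝ → ℝ} (hf : IsS f) (x : ℝ) :
    |f x| ≤ hNorm m f := by
  have := sup_le_hNorm (n := 0) (m := m) (by omega) hf x
  simpa using this

lemma iter_mul {f g : ℝ → ℝ} (hf : IsS f) (hg : IsS g) (n : ℕ) :
    iteratedDeriv n (fun x => f x * g x) = fun x => ∑ i ∈ Finset.range (n + 1),
      (n.choose i : ℝ) * (iteratedDeriv i f x * iteratedDeriv (n - i) g x) := by
  ext x
  have := iteratedDeriv_mul (n := n) (x := x) (f := f) (g := g)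
    ((hf.contDiff (n := n)).contDiffAt) ((hg.contDiff (n := n)).contDiffAt)
  have e : (fun x => f x * g x) = f * g := rfl
  rw [e, this]
  exact Finset.sum_congr rfl fun i _ => by ring

lemma iter_add {f g : ℝ → ℝ} (hf : IsS f) (hg : IsS g) (n : ℕ) :
    iteratedDeriv n (fun x => f x + g x) = fun x => iteratedDeriv n f x + iteratedDeriv n g x := by
  ext x
  exact iteratedDeriv_fun_add ((hf.contDiff (n := n)).contDiffAt) ((hg.contDiff (n := n)).contDiffAt)

lemma iter_sub {f g : ℝ → ℝ} (hf : IsS f) (hg : IsS g) (n : ℕ) :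
    iteratedDeriv n (fun x => f x - g x) = fun x => iteratedDeriv n f x - iteratedDeriv n g x := by
  ext x
  exact iteratedDeriv_fun_sub ((hf.contDiff (n := n)).contDiffAt) ((hg.contDiff (n := n)).contDiffAt)

lemma iter_cmul (c : ℝ) (f : ℝ → ℝ) (n : ℕ) :
    iteratedDeriv n (fun x => c * f x) = fun x => c * iteratedDeriv n f x := by
  ext x
  exact iteratedDeriv_const_mul_field c f

lemma iter_iter (f : ℝ → ℝ) (n m : ℕ) :
    iteratedDeriv n (iteratedDeriv m f) = iteratedDeriv (n + m) f := by
  rw [iteratedDeriv_eq_iterate, iteratedDeriv_eq_iterate, iteratedDeriv_eq_iterate,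
    Function.iterate_add_apply]

lemma iter_deriv (f : ℝ → ℝ) (n : ℕ) :
    iteratedDeriv n (deriv f) = iteratedDeriv (n + 1) f := by
  rw [iteratedDeriv_succ']

lemma hNorm_deriv_le (m : ℕ) (f : ℝ → ℝ) : hNorm m (deriv f) ≤ hNorm (m + 1) f := by
  refine abs_le_of_sq_le_sq' ?_ (hNorm_nonneg _ _) |>.2
  rw [hNorm_sq, hNorm_sq, Finset.sum_range_succ' _ (m + 1)]
  simp_rw [iter_deriv]
  have := sq_nonneg (nrm (iteratedDeriv 0 f))
  linarith

lemma hNorm_add {f g : ℝ → ℝ} (hf : IsS f) (hg : IsS g) (m : ℕ) :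
    hNorm m (fun x => f x + g x) ≤ (m + 1) * (hNorm m f + hNorm m g) := by
  refine hNorm_le_of (add_nonneg (hNorm_nonneg _ _) (hNorm_nonneg _ _)) fun n hn => ?_
  rw [iter_add hf hg]
  exact (nrm_add (hf.iter n) (hg.iter n)).trans
    (add_le_add (nrm_le_hNorm hn f) (nrm_le_hNorm hn g))

lemma hNorm_sub {f g : ℝ → ℝ} (hf : IsS f) (hg : IsS g) (m : ℕ) :
    hNorm m (fun x => f x - g x) ≤ (m + 1) * (hNorm m f + hNorm m g) := by
  refine hNorm_le_of (add_nonneg (hNorm_nonneg _ _) (hNorm_nonneg _ _)) fun n hn => ?_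
  rw [iter_sub hf hg]
  exact (nrm_sub (hf.iter n) (hg.iter n)).trans
    (add_le_add (nrm_le_hNorm hn f) (nrm_le_hNorm hn g))

lemma hNorm_cmul (c : ℝ) (f : ℝ → ℝ) (m : ℕ) :
    hNorm m (fun x => c * f x) = |c| * hNorm m f := by
  refine (sq_eq_sq₀ (hNorm_nonneg _ _) (mul_nonneg (abs_nonneg _) (hNorm_nonneg _ _))).1 ?_
  rw [mul_pow, hNorm_sq, hNorm_sq, Finset.mul_sum]
  refine Finset.sum_congr rfl fun n _ => ?_
  rw [iter_cmul, nrm_const_mul, mul_pow]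

lemma nrm_mul_iter {f g : ℝ → ℝ} (hf : IsS f) (hg : IsS g) {m i j : ℕ} (hm : 1 ≤ m)
    (hij : i + j ≤ m) :
    nrm (fun x => iteratedDeriv i f x * iteratedDeriv j g x) ≤ hNorm m f * hNorm m g := by
  by_cases h : i + 1 ≤ m
  · refine (nrm_mul_le (hf.iter i) (hg.iter j) (sup_le_hNorm h hf)).trans ?_
    have := hNorm_nonneg m f
    gcongr
    exact nrm_le_hNorm (by omega) g
  · have : (fun x => iteratedDeriv i f x * iteratedDeriv j g x) =
        fun x => iteratedDeriv j g x * iteratedDeriv i f x := by ext x; ring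
    rw [this]
    refine (nrm_mul_le (hg.iter j) (hf.iter i) (sup_le_hNorm (m := m) (by omega) hg)).trans ?_
    rw [mul_comm]
    have := hNorm_nonneg m g
    gcongr
    exact nrm_le_hNorm (by omega) f

lemma hNorm_mul {f g : ℝ → ℝ} (hf : IsS f) (hg : IsS g) {m : ℕ} (hm : 1 ≤ m) :
    hNorm m (fun x => f x * g x) ≤ (m + 1) * 2 ^ m * (hNorm m f * hNorm m g) := by
  have h0 := mul_nonneg (hNorm_nonneg m f) (hNorm_nonneg m g)
  rw [mul_assoc]
  refine hNorm_le_of (by positivity) fun n hn => ?_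
  rw [iter_mul hf hg]
  refine (nrm_sum _ fun i hi => ((hf.iter i).mul (hg.iter _)).const_mul _).trans ?_
  have : ∀ i ∈ Finset.range (n + 1), nrm (fun x => (n.choose i : ℝ) *
      (iteratedDeriv i f x * iteratedDeriv (n - i) g x)) ≤
      (n.choose i : ℝ) * (hNorm m f * hNorm m g) := fun i hi => by
    rw [nrm_const_mul, abs_of_nonneg (Nat.cast_nonneg _)]
    have := Finset.mem_range.1 hi
    gcongr
    exact nrm_mul_iter hf hg hm (by omega)
  refine (Finset.sum_le_sum this).trans ?_
  rw [← Finset.sum_mul]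
  have e : ∑ i ∈ Finset.range (n + 1), (n.choose i : ℝ) = 2 ^ n := by
    exact_mod_cast Nat.sum_range_choose n
  rw [e]
  gcongr
  norm_num

/-- constant for powers -/
noncomputable def cm (m : ℕ) : ℝ := (m + 1) * 2 ^ m

lemma cm_ge_one (m : ℕ) : 1 ≤ cm m := by
  unfold cm
  have : (1:ℝ) ≤ 2 ^ m := one_le_pow₀ (by norm_num)
  have : (0:ℝ) ≤ m := Nat.cast_nonneg m
  nlinarith

lemma IsS.pow_succ {f : ℝ → ℝ} (hf : IsS f) (j : ℕ) : IsS (fun x => f x ^ (j + 1)) := by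
  induction j with
  | zero => exact hf.congr fun x => by ring
  | succ j ih => exact (ih.mul hf).congr fun x => by ring

lemma hNorm_pow {f : ℝ → ℝ} (hf : IsS f) {m : ℕ} (hm : 1 ≤ m) (j : ℕ) :
    hNorm m (fun x => f x ^ (j + 1)) ≤ cm m ^ j * hNorm m f ^ (j + 1) := by
  induction j with
  | zero => simp
  | succ j ih =>
    have e : (fun x => f x ^ (j + 1 + 1)) = fun x => f x ^ (j + 1) * f x := by ext x; ring
    rw [e]
    refine (hNorm_mul (hf.pow_succ j) hf hm).trans ?_
    have h0 := hNorm_nonneg m f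
    have h1 := cm_ge_one m
    calc (m + 1) * 2 ^ m * (hNorm m (fun x => f x ^ (j + 1)) * hNorm m f)
        ≤ cm m * ((cm m ^ j * hNorm m f ^ (j + 1)) * hNorm m f) := by
          unfold cm at *; gcongr
      _ = _ := by ring

lemma hNorm_sum {ι : Type*} (s : Finset ι) {f : ι → ℝ → ℝ} (hf : ∀ i ∈ s, IsS (f i)) (m : ℕ) :
    hNorm m (fun x => ∑ i ∈ s, f i x) ≤ (m + 1) * ∑ i ∈ s, hNorm m (f i) := by
  refine hNorm_le_of (Finset.sum_nonneg fun i _ => hNorm_nonneg _ _) fun n hn => ?_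
  have : iteratedDeriv n (fun x => ∑ i ∈ s, f i x) = fun x => ∑ i ∈ s, iteratedDeriv n (f i) x := by
    ext x
    exact iteratedDeriv_fun_sum fun i hi => ((hf i hi).contDiff (n := n)).contDiffAt
  rw [this]
  refine (nrm_sum _ fun i hi => (hf i hi).iter n).trans ?_
  exact Finset.sum_le_sum fun i _ => nrm_le_hNorm hn _

/-- quantitative bound for F(U). -/
lemma hNorm_polyF {f : ℝ → ℝ} (hf : IsS f) {m : ℕ} (hm : 1 ≤ m) (k : ℕ) (a : ℕ → ℝ) {A : ℝ}
    (hA : ∀ j ∈ Finset.Icc 1 k, |a j| ≤ A) :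
    hNorm m (fun x => ∑ j ∈ Finset.Icc 1 k, a j * f x ^ j) ≤
      (m + 1) * cm m ^ k * (A * ∑ j ∈ Finset.Icc 1 k, hNorm m f ^ j) := by
  refine (hNorm_sum _ (fun j hj => ?_) m).trans ?_
  · obtain ⟨i, rfl⟩ := Nat.exists_eq_add_of_le' (Finset.mem_Icc.1 hj).1
    exact (hf.pow_succ i).const_mul _
  rw [mul_assoc]
  gcongr
  rw [Finset.mul_sum, Finset.mul_sum]
  refine Finset.sum_le_sum fun j hj => ?_
  have hA0 : 0 ≤ A := (abs_nonneg _).trans (hA j hj)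
  have hj' := hA j hj
  rw [hNorm_cmul]
  obtain ⟨i, rfl⟩ := Nat.exists_eq_add_of_le' (Finset.mem_Icc.1 hj).1
  have := hNorm_pow hf hm i
  have h0 := hNorm_nonneg m f
  have hik : i ≤ k := by have := (Finset.mem_Icc.1 hj).2; omega
  have h1 : cm m ^ i ≤ cm m ^ k := pow_le_pow_right₀ (cm_ge_one m) hik
  have h3 : 0 ≤ cm m := by linarith [cm_ge_one m]
  calc |a (i + 1)| * hNorm m (fun x => f x ^ (i + 1)) ≤ A * (cm m ^ k * hNorm m f ^ (i + 1)) := by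
        exact mul_le_mul hj' (this.trans (by gcongr)) (hNorm_nonneg _ _) hA0
    _ = _ := by ring

/-- qualitative bound for P(U). -/
lemma hNorm_polyP {m : ℕ} (hm : 1 ≤ m) (P : Polynomial ℝ) (hP : P.eval 0 = 0) (B : ℝ) :
    ∃ L, 0 ≤ L ∧ ∀ f, IsS f → hNorm m f ≤ B → hNorm m (fun x => P.eval (f x)) ≤ L := by
  have h : Polynomial.X ∣ P := by
    rw [Polynomial.X_dvd_iff, Polynomial.coeff_zero_eq_eval_zero, hP]
  obtain ⟨Q, rfl⟩ := h
  clear hP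
  suffices H : ∃ L, 0 ≤ L ∧ ∀ f, IsS f → hNorm m f ≤ B →
      hNorm m (fun x => Q.eval (f x) * f x) ≤ L by
    obtain ⟨L, hL, H⟩ := H
    refine ⟨L, hL, fun f hf hB => ?_⟩
    have e : (fun x => (Polynomial.X * Q).eval (f x)) = fun x => Q.eval (f x) * f x := by
      ext x; simp; ring
    rw [e]; exact H f hf hB
  induction Q using Polynomial.induction_on' with
  | add p q hp hq =>
    obtain ⟨L1, h1, H1⟩ := hp
    obtain ⟨L2, h2, H2⟩ := hq
    refine ⟨(m + 1) * (L1 + L2), by positivity, fun f hf hB => ?_⟩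
    have e : (fun x => (p + q).eval (f x) * f x) =
        fun x => p.eval (f x) * f x + q.eval (f x) * f x := by ext x; simp; ring
    rw [e]
    refine (hNorm_add (hf.polymul hf p) (hf.polymul hf q) m).trans ?_
    have := H1 f hf hB
    have := H2 f hf hB
    gcongr
  | monomial n a =>
    refine ⟨|a| * (cm m ^ n * |B| ^ (n + 1)), ?_, fun f hf hB => ?_⟩
    · have := cm_ge_one m
      positivity
    have e : (fun x => ((Polynomial.monomial n) a).eval (f x) * f x) =
        fun x => a * f x ^ (n + 1) := by ext x; simp; ring
    rw [e, hNorm_cmul]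
    refine mul_le_mul_of_nonneg_left ((hNorm_pow hf hm n).trans ?_) (abs_nonneg _)
    have := cm_ge_one m
    have := hNorm_nonneg m f
    gcongr
    exact hB.trans (le_abs_self B)

/-- commutator -/
lemma commutator {b g : ℝ → ℝ} (hb : IsS b) (hg : IsS g) (n : ℕ) {S : ℝ}
    (hS : ∀ i, 1 ≤ i → i ≤ n → nrm (fun x => iteratedDeriv i b x * iteratedDeriv (n - i) g x) ≤ S)
    (hS0 : 0 ≤ S) :
    nrm (fun x => iteratedDeriv n (fun x => b x * g x) x - b x * iteratedDeriv n g x) ≤ 2 ^ n * S := by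
  rw [iter_mul hb hg]
  have e : (fun x => (∑ i ∈ Finset.range (n + 1),
      (n.choose i : ℝ) * (iteratedDeriv i b x * iteratedDeriv (n - i) g x)) -
      b x * iteratedDeriv n g x) = fun x => ∑ i ∈ Finset.range n,
      (n.choose (i + 1) : ℝ) * (iteratedDeriv (i + 1) b x * iteratedDeriv (n - (i + 1)) g x) := by
    ext x
    rw [Finset.sum_range_succ']
    simp
  rw [e]
  refine (nrm_sum _ fun i hi => ((hb.iter _).mul (hg.iter _)).const_mul _).trans ?_
  have : ∀ i ∈ Finset.range n, nrm (fun x => (n.choose (i + 1) : ℝ) *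
      (iteratedDeriv (i + 1) b x * iteratedDeriv (n - (i + 1)) g x)) ≤
      (n.choose (i + 1) : ℝ) * S := fun i hi => by
    rw [nrm_const_mul, abs_of_nonneg (Nat.cast_nonneg _)]
    have := Finset.mem_range.1 hi
    gcongr
    exact hS (i + 1) (by omega) (by omega)
  refine (Finset.sum_le_sum this).trans ?_
  rw [← Finset.sum_mul]
  gcongr
  have e : ∑ i ∈ Finset.range (n + 1), (n.choose i : ℝ) = 2 ^ n := by
    exact_mod_cast Nat.sum_range_choose n
  rw [← e, Finset.sum_range_succ']
  simp

/-- quantitative commutator estimate -/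
lemma comm_quant {b f : ℝ → ℝ} (hb : IsS b) (hf : IsS f) {n m : ℕ} (hnm : n ≤ m) (hm : 2 ≤ m) :
    nrm (fun x => iteratedDeriv n (fun x => b x * deriv f x) x - b x * iteratedDeriv (n + 1) f x) ≤
      2 ^ m * (hNorm m b * hNorm m f) := by
  have h0 := hNorm_nonneg m f
  have h1 := hNorm_nonneg m b
  have := commutator hb hf.deriv n (S := hNorm m b * hNorm m f) (fun i hi hin => ?_) (by positivity)
  · rw [iter_deriv] at this
    refine this.trans ?_
    gcongr
    norm_num
  · rw [iter_deriv]
    by_cases h2 : i = 1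
    · refine (nrm_mul_le (hb.iter i) (hf.iter _) (sup_le_hNorm (m := m) (by omega) hb)).trans ?_
      gcongr
      exact nrm_le_hNorm (by omega) f
    · have e : (fun x => iteratedDeriv i b x * iteratedDeriv (n - i + 1) f x) =
          fun x => iteratedDeriv (n - i + 1) f x * iteratedDeriv i b x := by ext x; ring
      rw [e, mul_comm]
      refine (nrm_mul_le (hf.iter _) (hb.iter i) (sup_le_hNorm (m := m) (by omega) hf)).trans ?_
      gcongr
      exact nrm_le_hNorm (by omega) b

/-- tame commutator estimate at the top level `N + 1` -/
lemma comm_tame {b f : ℝ → ℝ} (hb : IsS b) (hf : IsS f) {N : ℕ} (hm : 2 ≤ N) :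
    nrm (fun x => iteratedDeriv (N + 1) (fun x => b x * deriv f x) x
      - b x * iteratedDeriv (N + 1 + 1) f x) ≤
      2 ^ (N + 1) * (hNorm N b * hNorm (N + 1) f + hNorm (N + 1) b * hNorm N f) := by
  have h0 := hNorm_nonneg N f
  have h1 := hNorm_nonneg N b
  have h2 := hNorm_nonneg (N + 1) f
  have h3 := hNorm_nonneg (N + 1) b
  have := commutator hb hf.deriv (N + 1)
    (S := hNorm N b * hNorm (N + 1) f + hNorm (N + 1) b * hNorm N f) (fun i hi hin => ?_)
    (by positivity)
  · rwa [iter_deriv] at this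
  · rw [iter_deriv]
    have e : (fun x => iteratedDeriv i b x * iteratedDeriv (N + 1 - i + 1) f x) =
          fun x => iteratedDeriv (N + 1 - i + 1) f x * iteratedDeriv i b x := by ext x; ring
    have h4 := mul_nonneg h1 h2
    have h5 := mul_nonneg h3 h0
    by_cases hi1 : i = 1
    · refine (nrm_mul_le (hb.iter i) (hf.iter _) (sup_le_hNorm (m := N) (by omega) hb)).trans ?_
      have := nrm_le_hNorm (n := N + 1 - i + 1) (m := N + 1) (by omega) f
      have := mul_le_mul_of_nonneg_left this h1
      linarith
    · rw [e]
      by_cases hi2 : i = N + 1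
      · refine (nrm_mul_le (hf.iter _) (hb.iter i) (sup_le_hNorm (m := N) (by omega) hf)).trans ?_
        have := nrm_le_hNorm (n := i) (m := N + 1) (by omega) b
        have := mul_le_mul_of_nonneg_left this h0
        linarith
      · refine (nrm_mul_le (hf.iter _) (hb.iter i)
          (sup_le_hNorm (m := N + 1) (by omega) hf)).trans ?_
        have := nrm_le_hNorm (n := i) (m := N) (by omega) b
        have := mul_le_mul_of_nonneg_left this h2
        linarith

/-- tame bound for composition -/
lemma poly_tame {m : ℕ} (hm : 1 ≤ m) (P : Polynomial ℝ) (hP : P.eval 0 = 0) (B : ℝ) :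
    ∃ L, 0 ≤ L ∧ ∀ f, IsS f → hNorm m f ≤ B →
      hNorm (m + 1) (fun x => P.eval (f x)) ≤ L * (1 + hNorm (m + 1) f) := by
  obtain ⟨L1, hL1, H1⟩ := hNorm_polyP hm P hP B
  set c := P.derivative.eval 0
  have hQ : (P.derivative - Polynomial.C c).eval 0 = 0 := by simp [c]
  obtain ⟨L2, hL2, H2⟩ := hNorm_polyP hm _ hQ B
  have hc := cm_ge_one m
  refine ⟨L1 + (|c| + cm m * L2), by positivity, fun f hf hB => ?_⟩
  have h1 := H1 f hf hB
  have h2 := H2 f hf hB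
  set q : ℝ → ℝ := fun x => (P.derivative - Polynomial.C c).eval (f x)
  have hqS : IsS q := hf.poly _ hQ
  have hd : deriv (fun x => P.eval (f x)) = fun x => c * deriv f x + q x * deriv f x := by
    ext x
    have := (P.hasDerivAt (f x)).comp x (hf.hasDerivAt x)
    have e := this.deriv
    simp only [Function.comp_def] at e
    rw [e]
    simp [q]; ring
  have h3 : nrm (iteratedDeriv (m + 1) (fun x => P.eval (f x))) ≤
      (|c| + cm m * L2) * hNorm (m + 1) f := by
    rw [← iter_deriv, hd, iter_add (hf.deriv.const_mul c) (hqS.mul hf.deriv)]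
    refine (nrm_add ((hf.deriv.const_mul c).iter m) ((hqS.mul hf.deriv).iter m)).trans ?_
    have a1 : nrm (iteratedDeriv m (fun x => c * deriv f x)) ≤ |c| * hNorm (m + 1) f := by
      rw [iter_cmul, nrm_const_mul, iter_deriv]
      have := nrm_le_hNorm (le_refl (m + 1)) f
      gcongr
    have a2 := (nrm_le_hNorm (le_refl m) (fun x => q x * deriv f x)).trans
      (hNorm_mul hqS hf.deriv hm)
    have a3 : (m + 1) * 2 ^ m * (hNorm m q * hNorm m (deriv f)) ≤
        cm m * (L2 * hNorm (m + 1) f) := by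
      have := hNorm_deriv_le m f
      have := hNorm_nonneg m (deriv f)
      unfold cm at *
      gcongr
    nlinarith
  have hf0 := hNorm_nonneg (m + 1) f
  have hq0 : 0 ≤ (|c| + cm m * L2) := by positivity
  refine abs_le_of_sq_le_sq' ?_ (by positivity) |>.2
  rw [hNorm_sq_succ]
  have h4 : hNorm m (fun x => P.eval (f x)) ^ 2 ≤ L1 ^ 2 :=
    pow_le_pow_left₀ (hNorm_nonneg _ _) h1 2
  have h5 := pow_le_pow_left₀ (nrm_nonneg _) h3 2
  refine (add_le_add h4 h5).trans ?_
  set X := (|c| + cm m * L2)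
  have e : ((L1 + X) * (1 + hNorm (m + 1) f)) = (L1 + X * hNorm (m + 1) f) + (L1 * hNorm (m + 1) f + X) := by ring
  rw [e]
  have e1 : 0 ≤ L1 * hNorm (m + 1) f + X := by positivity
  have e2 : 0 ≤ L1 * (X * hNorm (m + 1) f) := by positivity
  have e3 : 0 ≤ L1 + (X * hNorm (m + 1) f) := by positivity
  nlinarith [mul_nonneg e1 e3]

end KG

namespace KG

lemma dq_point {f : ℝ → ℝ} (hf : IsS f) {h : ℝ} (hh : 0 < h) (x : ℝ) :
    ∃ y ∈ Set.Ioo x (x + h), h⁻¹ * (f (x + h) - f x) = deriv f y := by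
  obtain ⟨y, hy, e⟩ := exists_deriv_eq_slope f (show x < x + h by linarith)
    hf.continuous.continuousOn hf.differentiable.differentiableOn
  refine ⟨y, hy, ?_⟩
  rw [e, add_sub_cancel_left, div_eq_inv_mul]

lemma dq_isS {f : ℝ → ℝ} (hf : IsS f) (h : ℝ) : IsS (fun x => h⁻¹ * (f (x + h) - f x)) :=
  ((hf.shift h).sub hf).const_mul _

lemma dq_tendsto {f : ℝ → ℝ} (hf : IsS f) :
    Filter.Tendsto (fun h : ℝ => nrm (fun x => h⁻¹ * (f (x + h) - f x))) (nhdsWithin 0 (Set.Ioi 0))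
      (nhds (nrm (deriv f))) := by
  unfold nrm
  refine (Real.continuous_sqrt.tendsto _).comp ?_
  obtain ⟨C, hC, hCb⟩ := hf.deriv.decay2
  refine tendsto_integral_filter_of_dominated_convergence (fun x => 9 * C ^ 2 * (1 + x ^ 2)⁻¹)
    ?_ ?_ ?_ ?_
  · exact Filter.Eventually.of_forall fun h => (dq_isS hf h).sq.continuous.aestronglyMeasurable
  · have : Set.Ioc (0:ℝ) 1 ∈ nhdsWithin (0:ℝ) (Set.Ioi 0) := Ioc_mem_nhdsGT (by norm_num)
    filter_upwards [this] with h hh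
    refine Filter.Eventually.of_forall fun x => ?_
    obtain ⟨y, hy, e⟩ := dq_point hf hh.1 x
    rw [e, Real.norm_eq_abs, abs_of_nonneg (sq_nonneg _), ← sq_abs]
    have h1 := hCb y
    have h2 : 1 + x ^ 2 ≤ 3 * (1 + y ^ 2) := by
      have a1 : 0 < y - x := by linarith [hy.1]
      have a2 : y - x < 1 := by linarith [hy.2, hh.2]
      nlinarith [sq_nonneg (x - 2 * y), sq_nonneg (x + y)]
    have h3 : (1 + x ^ 2) * |deriv f y| ≤ 3 * C := by
      have := mul_le_mul_of_nonneg_right h2 (abs_nonneg (deriv f y))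
      linarith
    have h4 : (0:ℝ) < 1 + x ^ 2 := by positivity
    rw [← div_eq_mul_inv, le_div_iff₀ h4]
    have h5 : ((1 + x ^ 2) * |deriv f y|) ^ 2 ≤ (3 * C) ^ 2 := by gcongr
    have h6 : |deriv f y| ^ 2 * (1 + x ^ 2) ≤ ((1 + x ^ 2) * |deriv f y|) ^ 2 := by
      have : 0 ≤ |deriv f y| ^ 2 := by positivity
      nlinarith [mul_nonneg this (mul_nonneg h4.le (sq_nonneg x))]
    linarith
  · exact integrable_inv_one_add_sq.const_mul _
  · refine Filter.Eventually.of_forall fun x => ?_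
    have h1 := (hf.hasDerivAt x).tendsto_slope_zero
    have h2 := h1.mono_left (nhdsWithin_mono (0:ℝ) (show Set.Ioi (0:ℝ) ⊆ {0}ᶜ from fun y hy => by
      simpa using (ne_of_gt hy)))
    simpa using h2.pow 2

lemma dq_le {f : ℝ → ℝ} (hf : IsS f) {h : ℝ} (hh : 0 < h) :
    nrm (fun x => h⁻¹ * (f (x + h) - f x)) ≤ nrm (deriv f) := by
  have sub : ∀ (δ : ℝ) (m : ℕ), nrm (fun x => f (x + m * δ) - f x) ≤
      m * nrm (fun x => f (x + δ) - f x) := by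
    intro δ m
    induction m with
    | zero => simp [nrm]
    | succ m ih =>
      have e : (fun x => f (x + (m + 1 : ℕ) * δ) - f x) = fun x =>
          ((fun x => f (x + δ) - f x) (x + m * δ)) + (f (x + m * δ) - f x) := by
        ext x
        simp only
        rw [show x + ((m + 1 : ℕ) : ℝ) * δ = x + m * δ + δ by push_cast; ring]
        ring
      rw [e]
      refine (nrm_add (((hf.shift δ).sub hf).shift _) ((hf.shift _).sub hf)).trans ?_
      rw [nrm_shift (fun x => f (x + δ) - f x)]
      push_cast
      linarith
  have key : ∀ m : ℕ, nrm (fun x => h⁻¹ * (f (x + h) - f x)) ≤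
      nrm (fun x => (h / (m + 1 : ℕ))⁻¹ * (f (x + h / (m + 1 : ℕ)) - f x)) := by
    intro m
    have hm : (0:ℝ) < ((m + 1 : ℕ) : ℝ) := by positivity
    have := sub (h / (m + 1 : ℕ)) (m + 1)
    rw [mul_div_cancel₀ _ hm.ne'] at this
    rw [nrm_const_mul, nrm_const_mul, abs_of_pos (by positivity), abs_of_pos (by positivity)]
    rw [inv_div, div_eq_mul_inv, mul_comm ((m + 1 : ℕ) : ℝ), mul_assoc]
    gcongr
  refine ge_of_tendsto' ((dq_tendsto hf).comp (?_ : Filter.Tendsto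
    (fun m : ℕ => h / ((m + 1 : ℕ) : ℝ)) Filter.atTop (nhdsWithin 0 (Set.Ioi 0)))) key
  refine tendsto_nhdsWithin_iff.2 ⟨?_, Filter.Eventually.of_forall fun m => ?_⟩
  · have := (tendsto_const_div_atTop_nhds_zero_nat h).comp (Filter.tendsto_add_atTop_nat 1)
    exact this
  · exact div_pos hh (by positivity)

lemma sup_gronwall_fwd {y : ℝ → ℝ} {a b C M : ℝ}
    (hM : ∀ t ∈ Set.Icc a b, y t ≤ M) (hC : 0 ≤ C)
    (H : ∀ c d K, a ≤ c → c ≤ d → d ≤ b → (∀ τ ∈ Set.Icc c d, y τ ≤ K) →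
      |y d - y c| ≤ C * (d - c) * (1 + K)) :
    ∀ t ∈ Set.Icc a b, 1 + y t ≤ (1 + y a) * Real.exp (C * (t - a)) := by
  have hcont : ContinuousOn y (Set.Icc a b) := by
    have : LipschitzOnWith (Real.toNNReal (C * |1 + M|)) y (Set.Icc a b) := by
      refine LipschitzOnWith.of_dist_le_mul fun s hs t ht => ?_
      rw [Real.coe_toNNReal _ (by positivity), Real.dist_eq, Real.dist_eq]
      have aux : ∀ s ∈ Set.Icc a b, ∀ t ∈ Set.Icc a b, s ≤ t → |y t - y s| ≤ C * |1 + M| * |t - s| := by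
        intro s hs t ht hst
        refine (H s t M hs.1 hst ht.2 fun τ hτ => hM τ ⟨hs.1.trans hτ.1, hτ.2.trans ht.2⟩).trans ?_
        rw [abs_of_nonneg (sub_nonneg.2 hst)]
        have := le_abs_self (1 + M)
        have h1 : 0 ≤ C * (t - s) := mul_nonneg hC (sub_nonneg.2 hst)
        nlinarith
      rcases le_total s t with h | h
      · rw [abs_sub_comm, abs_sub_comm s]; exact aux s hs t ht h
      · exact aux t ht s hs h
    exact this.continuousOn
  have := le_gronwallBound_of_liminf_deriv_right_le (f := fun t => 1 + y t)
    (f' := fun t => C * (1 + y t)) (δ := 1 + y a) (K := C) (ε := 0) (a := a) (b := b)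
    (continuousOn_const.add hcont) ?_ le_rfl (fun x _ => by simp)
  · intro t ht
    have := this t ht
    rwa [gronwallBound_ε0] at this
  · intro x hx r hr
    obtain ⟨η, hη, hηr⟩ : ∃ η > 0, C * (1 + (y x + η)) < r := by
      refine ⟨(r - C * (1 + y x)) / (2 * (C + 1)), div_pos (by linarith) (by linarith), ?_⟩
      have e : 0 < r - C * (1 + y x) := by linarith
      have : C * ((r - C * (1 + y x)) / (2 * (C + 1))) ≤ (r - C * (1 + y x)) / 2 := by
        rw [mul_div_assoc', div_le_div_iff₀ (by linarith) (by norm_num)]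
        nlinarith
      nlinarith
    have hcx : ContinuousWithinAt y (Set.Icc a b) x := hcont x ⟨hx.1, hx.2.le⟩
    have hev := hcx.eventually (gt_mem_nhds (show y x < y x + η by linarith))
    rw [Filter.Eventually, Metric.mem_nhdsWithin_iff] at hev
    obtain ⟨ρ, hρ, hball⟩ := hev
    refine Filter.Eventually.frequently ?_
    have hmem : Set.Ioo x (min b (x + ρ)) ∈ nhdsWithin x (Set.Ioi x) :=
      Ioo_mem_nhdsGT (lt_min hx.2 (by linarith))
    filter_upwards [hmem] with z hz
    have hzb := lt_of_lt_of_le hz.2 (min_le_left _ _)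
    have hzr := lt_of_lt_of_le hz.2 (min_le_right _ _)
    have h1 := H x z (y x + η) hx.1 hz.1.le hzb.le fun τ hτ => by
      refine le_of_lt (hball ⟨?_, ⟨hx.1.trans hτ.1, hτ.2.trans hzb.le⟩⟩)
      rw [Metric.mem_ball, Real.dist_eq, abs_of_nonneg (by linarith [hτ.1])]
      linarith [hτ.2]
    have hzx : 0 < z - x := by linarith [hz.1]
    have h2 := (le_abs_self _).trans h1
    have : (z - x)⁻¹ * (1 + y z - (1 + y x)) ≤ C * (1 + (y x + η)) := by
      rw [inv_mul_le_iff₀ hzx]; linarith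
    linarith

lemma sup_gronwall {y : ℝ → ℝ} {a b C M : ℝ} (hy : ∀ t ∈ Set.Icc a b, 0 ≤ y t)
    (hM : ∀ t ∈ Set.Icc a b, y t ≤ M) (hC : 0 ≤ C)
    (H : ∀ c d K, a ≤ c → c ≤ d → d ≤ b → (∀ τ ∈ Set.Icc c d, y τ ≤ K) →
      |y d - y c| ≤ C * (d - c) * (1 + K)) :
    ∀ t ∈ Set.Icc a b, ∀ t' ∈ Set.Icc a b, y t ≤ (1 + y t') * Real.exp (C * (b - a)) := by
  intro t ht t' ht'
  have hexp : ∀ s, s ≤ b - a → Real.exp (C * s) ≤ Real.exp (C * (b - a)) := fun s hs => by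
    gcongr
  have h0 := hy t' ht'
  rcases le_total t' t with h | h
  · have := sup_gronwall_fwd (y := y) (a := t') (b := b) (M := M) (C := C)
      (fun s hs => hM s ⟨ht'.1.trans hs.1, hs.2⟩) hC
      (fun c d K hc hcd hd hK => H c d K (ht'.1.trans hc) hcd hd hK) t ⟨h, ht.2⟩
    have h2 := hexp (t - t') (by linarith [ht'.1, ht.2])
    have h3 := mul_le_mul_of_nonneg_left h2 (show 0 ≤ 1 + y t' by linarith)
    linarith
  · have := sup_gronwall_fwd (y := fun s => y (-s)) (a := -t') (b := -a) (M := M) (C := C)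
      (fun s hs => hM (-s) ⟨by linarith [hs.2], by linarith [hs.1, ht'.2]⟩) hC
      (fun c d K hc hcd hd hK => by
        have := H (-d) (-c) K (by linarith) (by linarith) (by linarith [ht'.2]) fun τ hτ => by
          have := hK (-τ) ⟨by linarith [hτ.2], by linarith [hτ.1]⟩
          simpa using this
        rw [abs_sub_comm]
        refine this.trans (le_of_eq ?_); ring) (-t) ⟨by linarith, by linarith [ht.1]⟩
    simp only [neg_neg] at this
    have h2 := hexp (-t - -t') (by linarith [ht.1, ht'.2])
    have h3 := mul_le_mul_of_nonneg_left h2 (show 0 ≤ 1 + y t' by linarith)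
    linarith

/-- locally bounded on compact interval implies bounded -/
lemma bdd_of_loc {f : ℝ → ℝ} {a b : ℝ}
    (h : ∀ t ∈ Set.Icc a b, ∃ δ > 0, ∃ M, ∀ τ ∈ Set.Icc a b, |τ - t| < δ → f τ ≤ M) :
    ∃ M, ∀ t ∈ Set.Icc a b, f t ≤ M := by
  refine (isCompact_Icc (a := a) (b := b)).induction_on
    (p := fun s => ∃ M, ∀ t ∈ s, f t ≤ M) ⟨0, by simp⟩ ?_ ?_ ?_
  · rintro s t hst ⟨M, hM⟩
    exact ⟨M, fun x hx => hM x (hst hx)⟩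
  · rintro s t ⟨M, hM⟩ ⟨M', hM'⟩
    refine ⟨max M M', fun x hx => ?_⟩
    rcases hx with hx | hx
    · exact (hM x hx).trans (le_max_left _ _)
    · exact (hM' x hx).trans (le_max_right _ _)
  · intro t ht
    obtain ⟨δ, hδ, M, hM⟩ := h t ht
    refine ⟨Metric.ball t δ ∩ Set.Icc a b, ?_, M, fun τ hτ => hM τ hτ.2 ?_⟩
    · rw [Set.inter_comm]
      exact Filter.inter_mem self_mem_nhdsWithin (mem_nhdsWithin_of_mem_nhds (Metric.ball_mem_nhds t hδ))
    · simpa [Real.dist_eq] using hτ.1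

/-- Baire argument. -/
lemma baire_bdd {f : ℝ → ℝ} {T : ℝ}
    (hclosed : ∀ K, IsClosed {t | t ∈ Set.Icc 0 T ∧ f t ≤ K})
    (EE : ∀ K, ∃ L, ∀ a b, 0 ≤ a → a ≤ b → b ≤ T → (∃ M, ∀ t ∈ Set.Icc a b, f t ≤ M) →
      ∀ t ∈ Set.Icc a b, ∀ t' ∈ Set.Icc a b, f t' ≤ K → f t ≤ L) :
    ∃ M, ∀ t ∈ Set.Icc 0 T, f t ≤ M := by
  classical
  set Good : ℝ → Prop := fun t => ∃ δ > 0, ∃ M, ∀ τ ∈ Set.Icc 0 T, |τ - t| < δ → f τ ≤ M with hGood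
  set E : Set ℝ := {t | t ∈ Set.Icc 0 T ∧ ¬ Good t} with hE
  have hgood_open : IsOpen {t | Good t} := by
    rw [Metric.isOpen_iff]
    rintro t ⟨δ, hδ, M, hM⟩
    refine ⟨δ / 2, by positivity, fun s hs => ⟨δ / 2, by positivity, M, fun τ hτ hτs => hM τ hτ ?_⟩⟩
    rw [Metric.mem_ball, Real.dist_eq] at hs
    have : |τ - t| ≤ |τ - s| + |s - t| := abs_sub_le _ _ _
    linarith
  have hEclosed : IsClosed E := by
    have : E = Set.Icc 0 T ∩ {t | Good t}ᶜ := by ext t; simp [hE]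
    rw [this]
    exact isClosed_Icc.inter hgood_open.isClosed_compl
  -- bounded on subintervals without bad points
  have hsub : ∀ a b, 0 ≤ a → b ≤ T → (∀ t ∈ Set.Icc a b, t ∉ E) → ∃ M, ∀ t ∈ Set.Icc a b, f t ≤ M := by
    intro a b ha hb hno
    refine bdd_of_loc fun t ht => ?_
    have h1 : Good t := by
      by_contra hng
      exact hno t ht ⟨⟨ha.trans ht.1, ht.2.trans hb⟩, hng⟩
    obtain ⟨δ, hδ, M, hM⟩ := h1
    exact ⟨δ, hδ, M, fun τ hτ => hM τ ⟨ha.trans hτ.1, hτ.2.trans hb⟩⟩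
  by_cases hne : E.Nonempty
  swap
  · rw [Set.not_nonempty_iff_eq_empty] at hne
    by_cases h : 0 ≤ T
    · exact hsub 0 T le_rfl le_rfl fun t _ => by rw [hne]; simp
    · exact ⟨0, fun t ht => absurd (ht.1.trans ht.2) h⟩
  exfalso
  have hcE : CompleteSpace E := hEclosed.completeSpace_coe
  have hnE : Nonempty E := hne.to_subtype
  have hcl : ∀ n : ℕ, IsClosed {t : E | f t ≤ n} := by
    intro n
    have : {t : E | f t ≤ n} = Subtype.val ⁻¹' {t | t ∈ Set.Icc 0 T ∧ f t ≤ n} := by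
      ext t
      simp only [Set.mem_setOf_eq, Set.mem_preimage]
      exact ⟨fun h => ⟨t.2.1, h⟩, fun h => h.2⟩
    rw [this]
    exact (hclosed n).preimage continuous_subtype_val
  obtain ⟨n, ⟨t0, ht0⟩⟩ := nonempty_interior_of_iUnion_of_closed hcl (by
    ext t
    simp only [Set.mem_iUnion, Set.mem_setOf_eq, Set.mem_univ, iff_true]
    exact exists_nat_ge _)
  rw [mem_interior_iff_mem_nhds, Metric.mem_nhds_iff] at ht0
  obtain ⟨δ, hδ, hball⟩ := ht0
  have hbE : ∀ t ∈ E, |t - t0| < δ → f t ≤ n := fun t ht htd =>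
    hball (show (⟨t, ht⟩ : E) ∈ Metric.ball t0 δ by
      rw [Metric.mem_ball, Subtype.dist_eq, Real.dist_eq]; exact htd)
  obtain ⟨L, hL⟩ := EE n
  refine t0.2.2 ⟨δ, hδ, max L n, fun t ht htd => ?_⟩
  rw [abs_lt] at htd
  rcases le_total t0.1 t with h | h
  · -- right side
    set S := E ∩ Set.Icc 0 t
    have hSc : IsCompact S := by
      have : IsCompact (Set.Icc 0 t ∩ E) := isCompact_Icc.inter_right hEclosed
      rwa [Set.inter_comm] at this
    have hS0 : t0.1 ∈ S := ⟨t0.2, t0.2.1.1, h⟩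
    obtain ⟨α, hαS, hαmax⟩ := hSc.exists_isGreatest ⟨_, hS0⟩
    have hα0 := hαmax hS0
    have hαn : f α ≤ n := hbE α hαS.1 (by rw [abs_lt]; constructor <;> linarith [hαS.2.2])
    have hno : ∀ s, α < s → s ≤ t → s ∉ E := fun s hs hst hsE => by
      have := hαmax ⟨hsE, hsE.1.1, hst⟩
      linarith
    obtain ⟨L1, hL1⟩ := EE (f t)
    have hb : ∀ s, α < s → s ≤ t → f s ≤ L1 := fun s hs hst => by
      refine hL1 s t (hαS.2.1.trans hs.le) hst ht.2 (hsub s t (hαS.2.1.trans hs.le) ht.2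
        fun r hr => hno r (lt_of_lt_of_le hs hr.1) hr.2) s ⟨le_rfl, hst⟩ t ⟨hst, le_rfl⟩ le_rfl
    refine (hL α t hαS.2.1 hαS.2.2 ht.2 ⟨max L1 n, fun s hs => ?_⟩ t ⟨hαS.2.2, le_rfl⟩ α
      ⟨le_rfl, hαS.2.2⟩ hαn).trans (le_max_left _ _)
    rcases hs.1.eq_or_lt with e | e
    · rw [← e]; exact hαn.trans (le_max_right _ _)
    · exact (hb s e hs.2).trans (le_max_left _ _)
  · set S := E ∩ Set.Icc t T
    have hSc : IsCompact S := by
      have : IsCompact (Set.Icc t T ∩ E) := isCompact_Icc.inter_right hEclosed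
      rwa [Set.inter_comm] at this
    have hS0 : t0.1 ∈ S := ⟨t0.2, h, t0.2.1.2⟩
    obtain ⟨α, hαS, hαmin⟩ := hSc.exists_isLeast ⟨_, hS0⟩
    have hα0 := hαmin hS0
    have hαn : f α ≤ n := hbE α hαS.1 (by rw [abs_lt]; constructor <;> linarith [hαS.2.1])
    have hno : ∀ s, s < α → t ≤ s → s ∉ E := fun s hs hst hsE => by
      have := hαmin ⟨hsE, hst, hsE.1.2⟩
      linarith
    obtain ⟨L1, hL1⟩ := EE (f t)
    have hb : ∀ s, s < α → t ≤ s → f s ≤ L1 := fun s hs hst => by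
      refine hL1 t s ht.1 hst (hs.le.trans hαS.2.2) (hsub t s ht.1 (hs.le.trans hαS.2.2)
        fun r hr => hno r (lt_of_le_of_lt hr.2 hs) hr.1) s ⟨hst, le_rfl⟩ t ⟨le_rfl, hst⟩ le_rfl
    refine (hL t α ht.1 hαS.2.1 hαS.2.2 ⟨max L1 n, fun s hs => ?_⟩ t ⟨le_rfl, hαS.2.1⟩ α
      ⟨hαS.2.1, le_rfl⟩ hαn).trans (le_max_left _ _)
    rcases hs.2.eq_or_lt with e | e
    · rw [e]; exact hαn.trans (le_max_right _ _)
    · exact (hb s e hs.1).trans (le_max_left _ _)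

end KG

namespace KG

def ST (W : ℝ → ℝ → ℝ) : Prop := ContDiff ℝ (⊤ : ℕ∞) (fun p : ℝ × ℝ => W p.1 p.2)

noncomputable def dt (W : ℝ → ℝ → ℝ) (t x : ℝ) : ℝ := deriv (fun τ => W τ x) t

lemma ST.diff {W} (h : ST W) : Differentiable ℝ (fun p : ℝ × ℝ => W p.1 p.2) :=
  ContDiff.differentiable h (by simp)

lemma ST.hasDerivAt_x {W} (h : ST W) (t x : ℝ) :
    HasDerivAt (W t) (fderiv ℝ (fun p : ℝ × ℝ => W p.1 p.2) (t, x) (0, 1)) x := by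
  have h1 := (h.diff (t, x)).hasFDerivAt
  have h2 : HasDerivAt (fun y : ℝ => (t, y)) ((0 : ℝ), (1 : ℝ)) x :=
    (hasDerivAt_const x t).prodMk (hasDerivAt_id x)
  exact h1.comp_hasDerivAt (f := fun y : ℝ => (t, y)) x h2

lemma ST.hasDerivAt_t' {W} (h : ST W) (t x : ℝ) :
    HasDerivAt (fun τ => W τ x) (fderiv ℝ (fun p : ℝ × ℝ => W p.1 p.2) (t, x) (1, 0)) t := by
  have h1 := (h.diff (t, x)).hasFDerivAt
  have h2 : HasDerivAt (fun y : ℝ => (y, x)) ((1 : ℝ), (0 : ℝ)) t :=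
    (hasDerivAt_id t).prodMk (hasDerivAt_const t x)
  exact h1.comp_hasDerivAt (f := fun y : ℝ => (y, x)) t h2

lemma ST.dx_eq {W} (h : ST W) (t x : ℝ) :
    deriv (W t) x = fderiv ℝ (fun p : ℝ × ℝ => W p.1 p.2) (t, x) (0, 1) :=
  (h.hasDerivAt_x t x).deriv

lemma ST.dt_eq {W} (h : ST W) (t x : ℝ) :
    KG.dt W t x = fderiv ℝ (fun p : ℝ × ℝ => W p.1 p.2) (t, x) (1, 0) :=
  (h.hasDerivAt_t' t x).deriv

lemma ST.hasDerivAt_t {W} (h : ST W) (t x : ℝ) :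
    HasDerivAt (fun τ => W τ x) (KG.dt W t x) t := by
  rw [h.dt_eq]; exact h.hasDerivAt_t' t x

lemma ST.fd {W} (h : ST W) : ContDiff ℝ (⊤ : ℕ∞) (fderiv ℝ (fun p : ℝ × ℝ => W p.1 p.2)) :=
  ContDiff.fderiv_right h (by simp)

lemma ST.dx {W} (h : ST W) : ST (fun t x => deriv (W t) x) := by
  unfold ST
  have : (fun p : ℝ × ℝ => deriv (W p.1) p.2) =
      fun p => fderiv ℝ (fun p : ℝ × ℝ => W p.1 p.2) p (0, 1) := by
    ext p; exact h.dx_eq p.1 p.2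
  rw [this]
  exact h.fd.clm_apply contDiff_const

lemma ST.dt {W} (h : ST W) : ST (KG.dt W) := by
  unfold ST
  have : (fun p : ℝ × ℝ => KG.dt W p.1 p.2) =
      fun p => fderiv ℝ (fun p : ℝ × ℝ => W p.1 p.2) p (1, 0) := by
    ext p; exact h.dt_eq p.1 p.2
  rw [this]
  exact h.fd.clm_apply contDiff_const

lemma ST.congr {W V} (h : ST W) (e : ∀ t x, V t x = W t x) : ST V := by
  have : V = W := by ext t x; exact e t x
  rw [this]; exact h

lemma ST.comm {W} (h : ST W) (t x : ℝ) :
    KG.dt (fun t x => deriv (W t) x) t x = deriv (fun y => KG.dt W t y) x := by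
  rw [h.dx.dt_eq]
  rw [h.dt.dx_eq t x]
  have e1 : (fun p : ℝ × ℝ => deriv (W p.1) p.2) =
      fun p => fderiv ℝ (fun p : ℝ × ℝ => W p.1 p.2) p (0, 1) := by
    ext p; exact h.dx_eq p.1 p.2
  have e2 : (fun p : ℝ × ℝ => KG.dt W p.1 p.2) =
      fun p => fderiv ℝ (fun p : ℝ × ℝ => W p.1 p.2) p (1, 0) := by
    ext p; exact h.dt_eq p.1 p.2
  rw [e1, e2]
  have hd : DifferentiableAt ℝ (fderiv ℝ (fun p : ℝ × ℝ => W p.1 p.2)) (t, x) :=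
    (h.fd.differentiable (by simp)) (t, x)
  rw [fderiv_clm_apply hd (differentiableAt_const _), fderiv_clm_apply hd (differentiableAt_const _)]
  have hs : IsSymmSndFDerivAt ℝ (fun p : ℝ × ℝ => W p.1 p.2) (t, x) :=
    (ContDiff.contDiffAt h).isSymmSndFDerivAt (by
      rw [minSmoothness_of_isRCLikeNormedField]; exact WithTop.coe_le_coe.2 le_top)
  simp [hs (1, 0) (0, 1)]

lemma ST.iter {W} (h : ST W) (n : ℕ) : ST (fun t x => iteratedDeriv n (W t) x) := by
  induction n with
  | zero => simpa using h
  | succ n ih => exact ih.dx.congr fun t x => by rw [iteratedDeriv_succ]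

lemma ST.comm_iter {W} (h : ST W) (n : ℕ) (t x : ℝ) :
    KG.dt (fun t x => iteratedDeriv n (W t) x) t x = iteratedDeriv n (fun y => KG.dt W t y) x := by
  induction n generalizing x with
  | zero => simp
  | succ n ih =>
    have := (h.iter n).comm t x
    simp_rw [iteratedDeriv_succ]
    rw [this]
    congr 1
    ext y; exact ih y

lemma ST.mul {W V} (h : ST W) (h' : ST V) : ST (fun t x => W t x * V t x) := ContDiff.mul h h'
lemma ST.add {W V} (h : ST W) (h' : ST V) : ST (fun t x => W t x + V t x) := ContDiff.add h h'
lemma ST.sub {W V} (h : ST W) (h' : ST V) : ST (fun t x => W t x - V t x) := ContDiff.sub h h'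
lemma ST.cmul {W} (c : ℝ) (h : ST W) : ST (fun t x => c * W t x) := ContDiff.mul contDiff_const h
lemma ST.sq {W} (h : ST W) : ST (fun t x => W t x ^ 2) := ContDiff.pow h 2
lemma ST.poly {W} (h : ST W) (P : Polynomial ℝ) : ST (fun t x => P.eval (W t x)) := by
  have : ContDiff ℝ (⊤ : ℕ∞) (fun y : ℝ => P.eval y) := by
    simpa [Polynomial.coe_aeval_eq_eval] using P.contDiff_aeval (𝕜 := ℝ) (⊤ : ℕ∞)
  exact this.comp h
lemma ST.shift {W} (h : ST W) (a : ℝ) : ST (fun t x => W t (x + a)) := by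
  have : ContDiff ℝ (⊤ : ℕ∞) (fun p : ℝ × ℝ => (p.1, p.2 + a)) := by fun_prop
  exact ContDiff.comp (g := fun p : ℝ × ℝ => W p.1 p.2) h this
lemma ST.cont {W} (h : ST W) : Continuous (fun p : ℝ × ℝ => W p.1 p.2) := ContDiff.continuous h
lemma ST.cont_t {W} (h : ST W) (x : ℝ) : Continuous (fun t => W t x) :=
  h.cont.comp (by fun_prop : Continuous fun t : ℝ => (t, x))
lemma ST.cont_x {W} (h : ST W) (t : ℝ) : Continuous (W t) :=
  h.cont.comp (by fun_prop : Continuous fun x : ℝ => (t, x))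

lemma hasDerivAt_int_cpt {φ : ℝ → ℝ} (hφ : Continuous φ) {N : ℝ} (hN : ∀ x, N < |x| → φ x = 0)
    {e : ℝ → ℝ → ℝ} (he : ST e) (t : ℝ) :
    HasDerivAt (fun τ => ∫ x, φ x * e τ x) (∫ x, φ x * dt e t x) t := by
  have hc : Continuous (fun p : ℝ × ℝ => φ p.2 * dt e p.1 p.2) :=
    (hφ.comp continuous_snd).mul he.dt.cont
  obtain ⟨M, hM⟩ := ((isCompact_Icc (a := t - 1) (b := t + 1)).prod
    (isCompact_Icc (a := -N) (b := N))).exists_bound_of_continuousOn hc.continuousOn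
  have hsupp : ∀ (g : ℝ → ℝ) , Continuous g → Integrable (fun x => φ x * g x) := by
    intro g hg
    refine (hφ.mul hg).integrable_of_hasCompactSupport ?_
    refine HasCompactSupport.intro (isCompact_Icc (a := -N) (b := N)) fun x hx => ?_
    have : N < |x| := by
      by_contra hh
      exact hx (abs_le.1 (not_lt.1 hh))
    simp [hN x this]
  refine (hasDerivAt_integral_of_dominated_loc_of_deriv_le (s := Set.Icc (t - 1) (t + 1))
    (bound := (Set.Icc (-N) N).indicator fun _ => M)
    (F := fun τ x => φ x * e τ x) (F' := fun τ x => φ x * dt e τ x)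
    (Icc_mem_nhds (by linarith) (by linarith)) ?_ ?_ ?_ ?_ ?_ ?_).2
  · exact Filter.Eventually.of_forall fun τ => (hφ.mul (he.cont_x τ)).aestronglyMeasurable
  · exact hsupp _ (he.cont_x t)
  · exact (hφ.mul (he.dt.cont_x t)).aestronglyMeasurable
  · refine Filter.Eventually.of_forall fun x τ hτ => ?_
    by_cases hx : x ∈ Set.Icc (-N) N
    · rw [Set.indicator_of_mem hx]
      exact hM (τ, x) ⟨hτ, hx⟩
    · rw [Set.indicator_of_notMem hx]
      have : N < |x| := by
        by_contra hh
        exact hx (abs_le.1 (not_lt.1 hh))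
      simp [hN x this]
  · exact (integrable_indicator_iff measurableSet_Icc).2 (by
      exact (continuousOn_const).integrableOn_compact isCompact_Icc)
  · exact Filter.Eventually.of_forall fun x τ _ => (he.hasDerivAt_t τ x).const_mul _

lemma exists_cutoff : ∃ φ : ℝ → ℝ, IsS φ ∧ (∀ x, 2 < |x| → φ x = 0) ∧ (∀ x, |x| ≤ 1 → φ x = 1) ∧
    ∀ x, |φ x| ≤ 1 := by
  let B : ContDiffBump (0 : ℝ) := ⟨1, 2, by norm_num, by norm_num⟩
  refine ⟨B, ⟨HasCompactSupport.toSchwartzMap B.hasCompactSupport B.contDiff, rfl⟩, ?_, ?_, ?_⟩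
  · intro x hx
    exact B.zero_of_le_dist (by simpa using hx.le)
  · intro x hx
    exact B.one_of_mem_closedBall (by simpa using hx)
  · intro x
    rw [abs_of_nonneg B.nonneg]; exact B.le_one

lemma int_parts3 {f g : ℝ → ℝ} (hf : IsS f) (hg : IsS g) :
    ∫ x, f x * iteratedDeriv 3 g x = - ∫ x, iteratedDeriv 3 f x * g x := by
  have e3 : ∀ f : ℝ → ℝ, iteratedDeriv 3 f = deriv (deriv (deriv f)) := fun f => by
    rw [iteratedDeriv_succ, iteratedDeriv_succ, iteratedDeriv_one]
  rw [e3, e3, int_parts hf hg.deriv.deriv, int_parts hf.deriv hg.deriv,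
    int_parts hf.deriv.deriv hg, neg_neg]

lemma cl {e Q P R : ℝ → ℝ → ℝ} {c d K r : ℝ} (hcd : c ≤ d) (he : ST e)
    (heS : ∀ t ∈ Set.Icc c d, IsS (e t)) (hQ : ∀ t ∈ Set.Icc c d, IsS (Q t))
    (hP : ∀ t ∈ Set.Icc c d, IsS (P t)) (hR : ∀ t ∈ Set.Icc c d, IsS (R t))
    (heq : ∀ t ∈ Set.Icc c d, ∀ x, dt e t x + deriv (Q t) x + iteratedDeriv 3 (P t) x = R t x)
    (hQK : ∀ t ∈ Set.Icc c d, ∫ x, |Q t x| ≤ K) (hPK : ∀ t ∈ Set.Icc c d, ∫ x, |P t x| ≤ K)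
    (hRr : ∀ t ∈ Set.Icc c d, ∫ x, |R t x| ≤ r) :
    |(∫ x, e d x) - ∫ x, e c x| ≤ r * (d - c) := by
  obtain ⟨φ, hφ, hφ0, hφ1, hφb⟩ := exists_cutoff
  obtain ⟨C1, hC1, hC1b⟩ := (hφ.iter 1).bdd
  obtain ⟨C3, hC3, hC3b⟩ := (hφ.iter 3).bdd
  have hK : 0 ≤ K := (integral_nonneg fun x => abs_nonneg _).trans (hQK c ⟨le_rfl, hcd⟩)
  have key : ∀ δ : ℝ, 0 < δ → |(∫ x, φ (δ * x) * e d x) - ∫ x, φ (δ * x) * e c x| ≤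
      (δ * C1 * K + δ ^ 3 * C3 * K + r) * (d - c) := by
    intro δ hδ
    have hψc : Continuous (fun x => φ (δ * x)) := hφ.continuous.comp (by fun_prop)
    have hsupp : ∀ x, 2 / δ < |x| → φ (δ * x) = 0 := by
      intro x hx
      apply hφ0
      rw [abs_mul, abs_of_pos hδ]
      rwa [div_lt_iff₀' hδ] at hx
    have hψ : IsS (fun x => φ (δ * x)) := by
      have hcs : HasCompactSupport (fun x => φ (δ * x)) := by
        refine HasCompactSupport.intro (isCompact_Icc (a := -(2 / δ)) (b := 2 / δ)) fun x hx => ?_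
        apply hsupp
        by_contra hh
        exact hx (abs_le.1 (not_lt.1 hh))
      have hsm : ContDiff ℝ (⊤ : ℕ∞) (fun x => φ (δ * x)) :=
        hφ.contDiff.comp (contDiff_const.mul contDiff_id)
      exact ⟨hcs.toSchwartzMap hsm, rfl⟩
    have hd1 : deriv (fun x => φ (δ * x)) = fun x => δ * iteratedDeriv 1 φ (δ * x) := by
      rw [← iteratedDeriv_one, iteratedDeriv_comp_const_mul hφ.contDiff]; simp
    have hd3 : iteratedDeriv 3 (fun x => φ (δ * x)) = fun x => δ ^ 3 * iteratedDeriv 3 φ (δ * x) := by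
      rw [iteratedDeriv_comp_const_mul hφ.contDiff]
    have hder := fun t => hasDerivAt_int_cpt hψc hsupp he t
    have := (convex_Icc c d).norm_image_sub_le_of_norm_hasDerivWithin_le
      (f := fun τ => ∫ x, φ (δ * x) * e τ x) (f' := fun τ => ∫ x, φ (δ * x) * dt e τ x)
      (C := δ * C1 * K + δ ^ 3 * C3 * K + r)
      (fun t _ => (hder t).hasDerivWithinAt) ?_ (Set.left_mem_Icc.2 hcd) (Set.right_mem_Icc.2 hcd)
    · rwa [Real.norm_eq_abs, Real.norm_eq_abs, abs_of_nonneg (by linarith : 0 ≤ d - c)] at this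
    intro t ht
    have e1 : (fun x => φ (δ * x) * dt e t x) = fun x => φ (δ * x) * R t x -
        φ (δ * x) * deriv (Q t) x - φ (δ * x) * iteratedDeriv 3 (P t) x := by
      ext x; rw [← heq t ht x]; ring
    have i1 := (hψ.mul (hR t ht)).integrable
    have i2 := (hψ.mul (hQ t ht).deriv).integrable
    have i3 := (hψ.mul ((hP t ht).iter 3)).integrable
    have i12 : Integrable (fun x => φ (δ * x) * R t x - φ (δ * x) * deriv (Q t) x) := i1.sub i2
    rw [e1, integral_sub i12 i3, integral_sub i1 i2, int_parts hψ (hQ t ht),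
      int_parts3 hψ (hP t ht), Real.norm_eq_abs]
    have b1 : |∫ x, φ (δ * x) * R t x| ≤ r := by
      refine abs_integral_le_integral_abs.trans (le_trans ?_ (hRr t ht))
      refine integral_mono i1.abs (hR t ht).abs_int fun x => ?_
      simp only [abs_mul]
      exact mul_le_of_le_one_left (abs_nonneg _) (hφb _)
    have b2 : |∫ x, deriv (fun x => φ (δ * x)) x * Q t x| ≤ δ * C1 * K := by
      refine abs_integral_le_integral_abs.trans
        (le_trans ?_ (mul_le_mul_of_nonneg_left (hQK t ht) (by positivity)))
      rw [← integral_const_mul]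
      refine integral_mono (hψ.deriv.mul (hQ t ht)).integrable.abs
        ((hQ t ht).abs_int.const_mul _) fun x => ?_
      simp only [abs_mul, hd1, abs_of_pos hδ]
      have := hC1b (δ * x)
      gcongr
    have b3 : |∫ x, iteratedDeriv 3 (fun x => φ (δ * x)) x * P t x| ≤ δ ^ 3 * C3 * K := by
      refine abs_integral_le_integral_abs.trans
        (le_trans ?_ (mul_le_mul_of_nonneg_left (hPK t ht) (by positivity)))
      rw [← integral_const_mul]
      refine integral_mono ((hψ.iter 3).mul (hP t ht)).integrable.abs
        ((hP t ht).abs_int.const_mul _) fun x => ?_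
      simp only [abs_mul, hd3, abs_of_pos (pow_pos hδ 3)]
      have := hC3b (δ * x)
      gcongr
    rw [abs_le] at *
    constructor <;> linarith [b1.1, b1.2, b2.1, b2.2, b3.1, b3.2]
  have lim : ∀ t ∈ Set.Icc c d, Filter.Tendsto (fun δ : ℝ => ∫ x, φ (δ * x) * e t x)
      (nhdsWithin 0 (Set.Ioi 0)) (nhds (∫ x, e t x)) := by
    intro t ht
    refine tendsto_integral_filter_of_dominated_convergence (fun x => |e t x|) ?_ ?_ ?_ ?_
    · exact Filter.Eventually.of_forall fun δ =>
        ((hφ.continuous.comp (by fun_prop)).mul (he.cont_x t)).aestronglyMeasurable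
    · refine Filter.Eventually.of_forall fun δ => Filter.Eventually.of_forall fun x => ?_
      rw [norm_mul]
      exact mul_le_of_le_one_left (abs_nonneg _) (hφb _)
    · exact (heS t ht).abs_int
    · refine Filter.Eventually.of_forall fun x => ?_
      have : Filter.Tendsto (fun δ : ℝ => φ (δ * x) * e t x) (nhds 0) (nhds (φ (0 * x) * e t x)) :=
        ((hφ.continuous.comp (by fun_prop : Continuous fun δ : ℝ => δ * x)).mul
          continuous_const).tendsto 0
      rw [zero_mul, hφ1 0 (by simp), one_mul] at this
      exact this.mono_left nhdsWithin_le_nhds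
  have l1 := ((lim d ⟨hcd, le_rfl⟩).sub (lim c ⟨le_rfl, hcd⟩)).abs
  have l2 : Filter.Tendsto (fun δ : ℝ => (δ * C1 * K + δ ^ 3 * C3 * K + r) * (d - c))
      (nhdsWithin 0 (Set.Ioi 0)) (nhds (r * (d - c))) := by
    have : Filter.Tendsto (fun δ : ℝ => (δ * C1 * K + δ ^ 3 * C3 * K + r) * (d - c))
      (nhds 0) (nhds ((0 * C1 * K + 0 ^ 3 * C3 * K + r) * (d - c))) :=
      (by fun_prop : Continuous fun δ : ℝ => (δ * C1 * K + δ ^ 3 * C3 * K + r) * (d - c)).tendsto 0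
    have h2 := this.mono_left (nhdsWithin_le_nhds (s := Set.Ioi 0))
    simpa using h2
  refine le_of_tendsto_of_tendsto l1 l2 ?_
  filter_upwards [self_mem_nhdsWithin] with δ hδ
  exact key δ hδ

end KG

namespace KG

lemma iter3 (f : ℝ → ℝ) : iteratedDeriv 3 f = deriv (deriv (deriv f)) := by
  rw [iteratedDeriv_succ, iteratedDeriv_succ, iteratedDeriv_one]
lemma iter2 (f : ℝ → ℝ) : iteratedDeriv 2 f = deriv (deriv f) := by
  rw [iteratedDeriv_succ, iteratedDeriv_one]

lemma deriv_sq {f : ℝ → ℝ} (hf : IsS f) : deriv (fun x => f x ^ 2) = fun x => 2 * (f x * deriv f x) := by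
  ext x
  refine HasDerivAt.deriv (((hf.hasDerivAt x).fun_pow 2).congr_deriv ?_)
  simp; ring

lemma deriv_mul' {f g : ℝ → ℝ} (hf : IsS f) (hg : IsS g) :
    deriv (fun x => f x * g x) = fun x => deriv f x * g x + f x * deriv g x := by
  ext x
  exact ((hf.hasDerivAt x).mul (hg.hasDerivAt x)).deriv

lemma deriv_cmul' {f : ℝ → ℝ} (c : ℝ) (hf : IsS f) :
    deriv (fun x => c * f x) = fun x => c * deriv f x := by
  ext x
  exact ((hf.hasDerivAt x).const_mul c).deriv

lemma deriv_add' {f g : ℝ → ℝ} (hf : IsS f) (hg : IsS g) :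
    deriv (fun x => f x + g x) = fun x => deriv f x + deriv g x := by
  ext x
  exact ((hf.hasDerivAt x).add (hg.hasDerivAt x)).deriv

lemma deriv_sub' {f g : ℝ → ℝ} (hf : IsS f) (hg : IsS g) :
    deriv (fun x => f x - g x) = fun x => deriv f x - deriv g x := by
  ext x
  exact ((hf.hasDerivAt x).sub (hg.hasDerivAt x)).deriv

lemma iter3_sq {f : ℝ → ℝ} (hf : IsS f) : iteratedDeriv 3 (fun x => f x ^ 2) =
    fun x => 2 * (f x * iteratedDeriv 3 f x) + 6 * (deriv f x * iteratedDeriv 2 f x) := by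
  rw [iter3, iter3, iter2, deriv_sq hf, deriv_cmul' _ (hf.mul hf.deriv), deriv_mul' hf hf.deriv,
    deriv_cmul' 2 ((hf.deriv.mul hf.deriv).add (hf.mul hf.deriv.deriv)),
    deriv_add' (hf.deriv.mul hf.deriv) (hf.mul hf.deriv.deriv), deriv_mul' hf.deriv hf.deriv,
    deriv_mul' hf hf.deriv.deriv]
  ext x; ring

lemma dt_sq {v : ℝ → ℝ → ℝ} (hv : ST v) (t x : ℝ) :
    dt (fun t x => v t x ^ 2) t x = 2 * (v t x * dt v t x) := by
  refine HasDerivAt.deriv (((hv.hasDerivAt_t t x).fun_pow 2).congr_deriv ?_)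
  simp; ring

lemma int_abs_sq (f : ℝ → ℝ) : ∫ x, |f x ^ 2| = nrm f ^ 2 := by
  rw [nrm_sq]; congr 1; ext x; exact abs_of_nonneg (sq_nonneg _)

lemma int_abs_mul_sq {b f : ℝ → ℝ} (hb : IsS b) (hf : IsS f) {B : ℝ} (h : ∀ x, |b x| ≤ B) :
    ∫ x, |b x * f x ^ 2| ≤ B * nrm f ^ 2 := by
  rw [nrm_sq, ← integral_const_mul]
  refine integral_mono (hb.mul hf.sq).abs_int (hf.sq.integrable.const_mul _) fun x => ?_
  simp only [abs_mul, abs_of_nonneg (sq_nonneg (f x))]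
  exact mul_le_mul_of_nonneg_right (h x) (sq_nonneg _)

lemma int_abs_add {f g : ℝ → ℝ} (hf : IsS f) (hg : IsS g) :
    ∫ x, |f x + g x| ≤ (∫ x, |f x|) + ∫ x, |g x| := by
  rw [← integral_add hf.abs_int hg.abs_int]
  exact integral_mono (hf.add hg).abs_int (hf.abs_int.add hg.abs_int) fun x => abs_add_le _ _

lemma int_abs_cmul (c : ℝ) (f : ℝ → ℝ) : ∫ x, |c * f x| = |c| * ∫ x, |f x| := by
  simp_rw [abs_mul]; exact integral_const_mul _ _

lemma le_energy {v b g : ℝ → ℝ → ℝ} {c d p Y r : ℝ} (hcd : c ≤ d) (hv : ST v)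
    (hvS : ∀ t, IsS (v t)) (hbS : ∀ t, IsS (b t)) (hgS : ∀ t, IsS (g t))
    (heq : ∀ t ∈ Set.Icc c d, ∀ x,
      dt v t x = -(iteratedDeriv 3 (v t) x + b t x * deriv (v t) x + g t x))
    (hY : ∀ t ∈ Set.Icc c d, nrm (v t) ≤ Y)
    (hZ : ∃ Z, ∀ t ∈ Set.Icc c d, nrm (deriv (v t)) ≤ Z)
    (hB : ∃ B, ∀ t ∈ Set.Icc c d, ∀ x, |b t x| ≤ B)
    (hp : ∀ t ∈ Set.Icc c d, ∀ x, |deriv (b t) x| ≤ p)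
    (hr : ∀ t ∈ Set.Icc c d, nrm (g t) ≤ r) :
    |nrm (v d) ^ 2 - nrm (v c) ^ 2| ≤ (p * Y ^ 2 + 2 * (Y * r)) * (d - c) := by
  obtain ⟨Z, hZ⟩ := hZ
  obtain ⟨B, hB⟩ := hB
  have hc : c ∈ Set.Icc c d := ⟨le_rfl, hcd⟩
  have hY0 : 0 ≤ Y := (nrm_nonneg _).trans (hY c hc)
  have hB0 : 0 ≤ B := (abs_nonneg _).trans (hB c hc 0)
  have hp0 : 0 ≤ p := (abs_nonneg _).trans (hp c hc 0)
  rw [nrm_sq, nrm_sq]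
  have hQ1 : ∀ t, IsS (fun x => -3 * deriv (v t) x ^ 2) := fun t => (hvS t).deriv.sq.const_mul _
  have hQ2 : ∀ t, IsS (fun x => b t x * v t x ^ 2) := fun t => (hbS t).mul (hvS t).sq
  have hR1 : ∀ t, IsS (fun x => deriv (b t) x * v t x ^ 2) := fun t => (hbS t).deriv.mul (hvS t).sq
  have hR2 : ∀ t, IsS (fun x => -2 * (v t x * g t x)) := fun t => ((hvS t).mul (hgS t)).const_mul _
  refine cl (e := fun t x => v t x ^ 2) (Q := fun t x => -3 * deriv (v t) x ^ 2 + b t x * v t x ^ 2)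
    (P := fun t x => v t x ^ 2) (R := fun t x => deriv (b t) x * v t x ^ 2 + -2 * (v t x * g t x))
    (K := 3 * Z ^ 2 + B * Y ^ 2 + Y ^ 2)
    hcd hv.sq (fun t _ => (hvS t).sq) (fun t _ => (hQ1 t).add (hQ2 t)) (fun t _ => (hvS t).sq)
    (fun t _ => (hR1 t).add (hR2 t)) ?_ ?_ ?_ ?_
  · intro t ht x
    rw [dt_sq hv, deriv_add' (hQ1 t) (hQ2 t), deriv_cmul' _ (hvS t).deriv.sq, deriv_sq (hvS t).deriv,
      deriv_mul' (hbS t) (hvS t).sq, deriv_sq (hvS t), iter3_sq (hvS t), heq t ht x, iter2]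
    ring
  · intro t ht
    refine (int_abs_add (hQ1 t) (hQ2 t)).trans ?_
    rw [int_abs_cmul, int_abs_sq]
    have h1 := int_abs_mul_sq (hbS t) (hvS t) (hB t ht)
    have h2 : nrm (deriv (v t)) ^ 2 ≤ Z ^ 2 := pow_le_pow_left₀ (nrm_nonneg _) (hZ t ht) 2
    have h3 : nrm (v t) ^ 2 ≤ Y ^ 2 := pow_le_pow_left₀ (nrm_nonneg _) (hY t ht) 2
    have h4 := mul_le_mul_of_nonneg_left h3 hB0
    have : |(-3:ℝ)| = 3 := by norm_num
    rw [this]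
    nlinarith [sq_nonneg Y]
  · intro t ht
    rw [int_abs_sq]
    have h3 : nrm (v t) ^ 2 ≤ Y ^ 2 := pow_le_pow_left₀ (nrm_nonneg _) (hY t ht) 2
    nlinarith [sq_nonneg Z, mul_nonneg hB0 (sq_nonneg Y)]
  · intro t ht
    refine (int_abs_add (hR1 t) (hR2 t)).trans ?_
    rw [int_abs_cmul]
    have h1 := int_abs_mul_sq (hbS t).deriv (hvS t) (hp t ht)
    have h3 : nrm (v t) ^ 2 ≤ Y ^ 2 := pow_le_pow_left₀ (nrm_nonneg _) (hY t ht) 2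
    have h4 := mul_le_mul_of_nonneg_left h3 hp0
    have h5 := cs_abs (hvS t) (hgS t)
    have h6 : nrm (v t) * nrm (g t) ≤ Y * r := mul_le_mul (hY t ht) (hr t ht) (nrm_nonneg _) hY0
    have : |(-2:ℝ)| = 2 := by norm_num
    rw [this]
    linarith

lemma poly_bdd (P : Polynomial ℝ) (B : ℝ) : ∃ C, 0 ≤ C ∧ ∀ y, |y| ≤ B → |P.eval y| ≤ C := by
  obtain ⟨C, hC⟩ := (isCompact_Icc (a := -B) (b := B)).exists_bound_of_continuousOn
    P.continuous.continuousOn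
  refine ⟨max C 0, le_max_right _ _, fun y hy => (hC y (abs_le.1 hy)).trans (le_max_left _ _)⟩

structure Sol (F : Polynomial ℝ) (T : ℝ) (U : ℝ → ℝ → ℝ) : Prop where
  st : ST U
  sl : ∀ t, IsS (U t)
  f0 : F.eval 0 = 0
  eq : ∀ t ∈ Set.Icc 0 T, ∀ x,
    dt U t x = -(iteratedDeriv 3 (U t) x + F.eval (U t x) * deriv (U t) x)

lemma Sol.FS {F T U} (h : Sol F T U) (t : ℝ) : IsS (fun x => F.eval (U t x)) :=
  (h.sl t).poly F h.f0

lemma Sol.NS {F T U} (h : Sol F T U) (t : ℝ) : IsS (fun x => F.eval (U t x) * deriv (U t) x) :=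
  (h.FS t).mul (h.sl t).deriv

lemma Sol.dt_iter {F T U} (h : Sol F T U) (n : ℕ) {t : ℝ} (ht : t ∈ Set.Icc 0 T) (x : ℝ) :
    dt (fun t x => iteratedDeriv n (U t) x) t x = -(iteratedDeriv (n + 3) (U t) x +
      iteratedDeriv n (fun x => F.eval (U t x) * deriv (U t) x) x) := by
  rw [h.st.comm_iter]
  have : (fun y => dt U t y) = fun y => (-1) * (iteratedDeriv 3 (U t) y +
      F.eval (U t y) * deriv (U t) y) := by
    ext y; rw [h.eq t ht y]; ring
  rw [this, iter_cmul, iter_add ((h.sl t).iter 3) (h.NS t), iter_iter]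
  ring

lemma Sol.FB {F T U} (h : Sol F T U) {c d M : ℝ} {m : ℕ} (hm : 1 ≤ m)
    (hM : ∀ t ∈ Set.Icc c d, hNorm m (U t) ≤ M) :
    ∃ B, ∀ t ∈ Set.Icc c d, ∀ x, |F.eval (U t x)| ≤ B := by
  obtain ⟨C, _, hC⟩ := poly_bdd F M
  exact ⟨C, fun t ht x => hC _ ((sup_le_hNorm0 hm (h.sl t) x).trans (hM t ht))⟩

/-- the commutator remainder -/
noncomputable def rem (F : Polynomial ℝ) (f : ℝ → ℝ) (n : ℕ) (x : ℝ) : ℝ :=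
  iteratedDeriv n (fun x => F.eval (f x) * deriv f x) x - F.eval (f x) * iteratedDeriv (n + 1) f x

lemma rem_isS {F : Polynomial ℝ} (hF : F.eval 0 = 0) {f : ℝ → ℝ} (hf : IsS f) (n : ℕ) :
    IsS (rem F f n) :=
  ((((hf.poly F hF).mul hf.deriv).iter n).sub ((hf.poly F hF).mul (hf.iter (n + 1)))).congr
    fun _ => rfl

lemma rem_deriv {F : Polynomial ℝ} (hF : F.eval 0 = 0) {f : ℝ → ℝ} (hf : IsS f) (n : ℕ) :
    deriv (rem F f n) = fun x => rem F f (n + 1) x -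
      deriv (fun x => F.eval (f x)) x * iteratedDeriv (n + 1) f x := by
  have h1 := (((hf.poly F hF).mul hf.deriv).iter n)
  have h2 := ((hf.poly F hF).mul (hf.iter (n + 1)))
  have : rem F f n = fun x => iteratedDeriv n (fun x => F.eval (f x) * deriv f x) x -
    F.eval (f x) * iteratedDeriv (n + 1) f x := rfl
  rw [this, deriv_sub' h1 h2, deriv_mul' (hf.poly F hF) (hf.iter (n + 1))]
  ext x
  unfold rem
  have q1 : deriv (iteratedDeriv n fun x => F.eval (f x) * deriv f x) =
      iteratedDeriv (n + 1) fun x => F.eval (f x) * deriv f x := by rw [← iteratedDeriv_succ]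
  have q2 : deriv (iteratedDeriv (n + 1) f) = iteratedDeriv (n + 1 + 1) f := by
    rw [← iteratedDeriv_succ]
  simp only [q1, q2]
  ring

lemma deriv_shift (f : ℝ → ℝ) (h x : ℝ) : deriv (fun x => f (x + h)) x = deriv f (x + h) :=
  deriv_comp_add_const f h x

lemma iter_shift (f : ℝ → ℝ) (h : ℝ) (n : ℕ) (x : ℝ) :
    iteratedDeriv n (fun x => f (x + h)) x = iteratedDeriv n f (x + h) := by
  induction n generalizing x with
  | zero => simp
  | succ n ih =>
    rw [iteratedDeriv_succ, iteratedDeriv_succ, ← deriv_shift]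
    congr 1; ext y; exact ih y

lemma el_energy {F T U} (h : Sol F T U) {c d p Y r : ℝ} {m : ℕ} (hc0 : 0 ≤ c) (hcd : c ≤ d)
    (hdT : d ≤ T) (hM : ∃ M, ∀ t ∈ Set.Icc c d, hNorm (m + 1) (U t) ≤ M)
    (hp : ∀ t ∈ Set.Icc c d, ∀ x, |deriv (fun x => F.eval (U t x)) x| ≤ p)
    (hY : ∀ t ∈ Set.Icc c d, nrm (iteratedDeriv (m + 1) (U t)) ≤ Y)
    (hr : ∀ t ∈ Set.Icc c d, nrm (rem F (U t) (m + 1)) ≤ r) :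
    |nrm (iteratedDeriv (m + 1) (U d)) ^ 2 - nrm (iteratedDeriv (m + 1) (U c)) ^ 2| ≤
      (5 * p * Y ^ 2 + 2 * (Y * r)) * (d - c) := by
  obtain ⟨M, hM⟩ := hM
  have hcm : c ∈ Set.Icc c d := ⟨le_rfl, hcd⟩
  have hY0 : 0 ≤ Y := (nrm_nonneg _).trans (hY c hcm)
  have hp0 : 0 ≤ p := (abs_nonneg _).trans (hp c hcm 0)
  have hW : ∀ t, IsS (iteratedDeriv m (U t)) := fun t => (h.sl t).iter m
  have hsucc : ∀ t, deriv (iteratedDeriv m (U t)) = iteratedDeriv (m + 1) (U t) := fun t => by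
    rw [iteratedDeriv_succ]
  have key : ∀ η : ℝ, 0 < η →
      |nrm (fun x => η⁻¹ * (iteratedDeriv m (U d) (x + η) - iteratedDeriv m (U d) x)) ^ 2 -
        nrm (fun x => η⁻¹ * (iteratedDeriv m (U c) (x + η) - iteratedDeriv m (U c) x)) ^ 2| ≤
      (5 * p * Y ^ 2 + 2 * (Y * r)) * (d - c) := by
    intro η hη
    set v : ℝ → ℝ → ℝ := fun t x => η⁻¹ * (iteratedDeriv m (U t) (x + η) - iteratedDeriv m (U t) x)
      with hvdef
    have hvST : ST v := (((h.st.iter m).shift η).sub (h.st.iter m)).cmul _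
    have hvS : ∀ t, IsS (v t) := fun t => dq_isS (hW t) η
    set b : ℝ → ℝ → ℝ := fun t x => F.eval (U t (x + η)) with hbdef
    have hbS : ∀ t, IsS (b t) := fun t => (h.FS t).shift η
    set g1 : ℝ → ℝ → ℝ := fun t x => η⁻¹ * (F.eval (U t (x + η)) - F.eval (U t x)) *
        iteratedDeriv (m + 1) (U t) x with hg1
    set g2 : ℝ → ℝ → ℝ := fun t x => η⁻¹ * (rem F (U t) m (x + η) - rem F (U t) m x) with hg2
    have hdq : ∀ t, IsS (fun x => η⁻¹ * (F.eval (U t (x + η)) - F.eval (U t x))) :=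
      fun t => dq_isS (h.FS t) η
    have hg1S : ∀ t, IsS (g1 t) := fun t => (hdq t).mul ((h.sl t).iter (m + 1))
    have hg2S : ∀ t, IsS (g2 t) := fun t => dq_isS (rem_isS h.f0 (h.sl t) m) η
    have hdv : ∀ t x, deriv (v t) x = η⁻¹ * (iteratedDeriv (m + 1) (U t) (x + η) -
        iteratedDeriv (m + 1) (U t) x) := by
      intro t x
      simp only [hvdef]
      rw [deriv_cmul' _ (((hW t).shift η).sub (hW t)), deriv_sub' ((hW t).shift η) (hW t), hsucc]
      simp only [deriv_shift, hsucc]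
    have hdv3 : ∀ t x, iteratedDeriv 3 (v t) x = η⁻¹ * (iteratedDeriv (m + 3) (U t) (x + η) -
        iteratedDeriv (m + 3) (U t) x) := by
      intro t x
      simp only [hvdef]
      rw [iter_cmul, iter_sub ((hW t).shift η) (hW t)]
      simp only [iter_shift, iter_iter, add_comm 3 m]
    have hle := le_energy (v := v) (b := b) (g := fun t x => g1 t x + g2 t x) (c := c) (d := d)
      (p := p) (Y := Y) (r := 2 * p * Y + r) hcd hvST hvS hbS
      (fun t => (hg1S t).add (hg2S t)) ?_ ?_ ?_ ?_ ?_ ?_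
    · refine hle.trans (le_of_eq ?_)
      ring
    · intro t ht x
      have htT : t ∈ Set.Icc 0 T := ⟨hc0.trans ht.1, ht.2.trans hdT⟩
      have e1 : dt v t x = η⁻¹ * (dt (fun t x => iteratedDeriv m (U t) x) t (x + η) -
          dt (fun t x => iteratedDeriv m (U t) x) t x) :=
        ((((h.st.iter m).hasDerivAt_t t (x + η)).sub ((h.st.iter m).hasDerivAt_t t x)).const_mul
          η⁻¹).deriv
      rw [e1, h.dt_iter m htT, h.dt_iter m htT, hdv, hdv3]
      simp only [hg1, hg2, hbdef, rem]
      ring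
    · intro t ht
      refine (dq_le (hW t) hη).trans ?_
      rw [hsucc]; exact hY t ht
    · refine ⟨|η⁻¹| * (Y + Y), fun t ht => ?_⟩
      have : deriv (v t) = fun x => η⁻¹ * (iteratedDeriv (m + 1) (U t) (x + η) -
        iteratedDeriv (m + 1) (U t) x) := funext (hdv t)
      rw [this, nrm_const_mul]
      refine mul_le_mul_of_nonneg_left ?_ (abs_nonneg _)
      refine (nrm_sub (((h.sl t).iter (m + 1)).shift η) ((h.sl t).iter (m + 1))).trans ?_
      rw [nrm_shift (iteratedDeriv (m + 1) (U t))]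
      exact add_le_add (hY t ht) (hY t ht)
    · obtain ⟨B, hB⟩ := h.FB (by omega) hM
      exact ⟨B, fun t ht x => hB t ht (x + η)⟩
    · intro t ht x
      simp only [hbdef]
      rw [deriv_shift (fun x => F.eval (U t x))]
      exact hp t ht _
    · intro t ht
      refine (nrm_add (hg1S t) (hg2S t)).trans ?_
      have b1 : nrm (g1 t) ≤ p * Y := by
        refine (nrm_mul_le (hdq t) ((h.sl t).iter (m + 1)) (B := p) fun x => ?_).trans
          (mul_le_mul_of_nonneg_left (hY t ht) hp0)
        obtain ⟨y, _, e⟩ := dq_point (h.FS t) hη x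
        rw [e]; exact hp t ht y
      have b2 : nrm (g2 t) ≤ r + p * Y := by
        refine (dq_le (rem_isS h.f0 (h.sl t) m) hη).trans ?_
        rw [rem_deriv h.f0 (h.sl t)]
        refine (nrm_sub (rem_isS h.f0 (h.sl t) (m + 1))
          ((h.FS t).deriv.mul ((h.sl t).iter (m + 1)))).trans ?_
        refine add_le_add (hr t ht) ?_
        exact (nrm_mul_le (h.FS t).deriv ((h.sl t).iter (m + 1)) (hp t ht)).trans
          (mul_le_mul_of_nonneg_left (hY t ht) hp0)
      linarith
  have l1 := (((dq_tendsto (hW d)).pow 2).sub ((dq_tendsto (hW c)).pow 2)).abs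
  rw [hsucc, hsucc] at l1
  refine le_of_tendsto l1 ?_
  filter_upwards [self_mem_nhdsWithin] with η hη
  exact key η hη

lemma lsc {U : ℝ → ℝ → ℝ} (hst : ST U) (hs : ∀ t, IsS (U t)) (N : ℕ) (T K : ℝ) :
    IsClosed {t | t ∈ Set.Icc 0 T ∧ hNorm N (U t) ≤ K} := by
  apply IsSeqClosed.isClosed
  intro τ t hτ hlim
  refine ⟨isClosed_Icc.mem_of_tendsto hlim (Filter.Eventually.of_forall fun n => (hτ n).1), ?_⟩
  have hK : 0 ≤ K := (hNorm_nonneg _ _).trans (hτ 0).2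
  set E : ℝ → ℝ → ℝ := fun t x => ∑ n ∈ Finset.range (N + 1), iteratedDeriv n (U t) x ^ 2 with hE
  have hES : ∀ t, IsS (E t) := fun t => IsS.sum _ fun n _ => ((hs t).iter n).sq
  have hE0 : ∀ t x, 0 ≤ E t x := fun t x => Finset.sum_nonneg fun n _ => sq_nonneg _
  have hIntE : ∀ t, hNorm N (U t) ^ 2 = ∫ x, E t x := fun t => by
    rw [hNorm_sq, integral_finsetSum _ fun n _ => ((hs t).iter n).sq.integrable]
    exact Finset.sum_congr rfl fun n _ => nrm_sq _
  have hlint : ∀ t, ∫⁻ x, ENNReal.ofReal (E t x) = ENNReal.ofReal (hNorm N (U t) ^ 2) := fun t => by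
    rw [hIntE, ofReal_integral_eq_lintegral_ofReal (hES t).integrable
      (Filter.Eventually.of_forall (hE0 t))]
  have hcont : ∀ x, Filter.Tendsto (fun n => ENNReal.ofReal (E (τ n) x)) Filter.atTop
      (nhds (ENNReal.ofReal (E t x))) := by
    intro x
    refine ENNReal.tendsto_ofReal ?_
    have : Continuous (fun t => E t x) :=
      continuous_finsetSum _ fun n _ => ((hst.iter n).cont_t x).pow 2
    exact (this.tendsto t).comp hlim
  have fat := lintegral_liminf_le (μ := volume) (u := Filter.atTop) (f := fun n x => ENNReal.ofReal (E (τ n) x))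
    fun n => ((hES (τ n)).continuous.measurable.ennreal_ofReal)
  have e1 : ∀ x, Filter.liminf (fun n => ENNReal.ofReal (E (τ n) x)) Filter.atTop =
      ENNReal.ofReal (E t x) := fun x => (hcont x).liminf_eq
  simp_rw [e1, hlint] at fat
  have : ENNReal.ofReal (hNorm N (U t) ^ 2) ≤ ENNReal.ofReal (K ^ 2) := by
    refine fat.trans (Filter.liminf_le_of_frequently_le' ?_)
    refine Filter.Eventually.frequently (Filter.Eventually.of_forall fun n => ?_)
    exact ENNReal.ofReal_le_ofReal (pow_le_pow_left₀ (hNorm_nonneg _ _) (hτ n).2 2)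
  rw [ENNReal.ofReal_le_ofReal_iff (sq_nonneg _)] at this
  exact abs_le_of_sq_le_sq' this hK |>.2

end KG

namespace KG

lemma exists_antideriv (F : Polynomial ℝ) :
    ∃ G : Polynomial ℝ, G.derivative = F ∧ G.eval 0 = 0 := by
  induction F using Polynomial.induction_on' with
  | add p q hp hq =>
    obtain ⟨G, h1, h2⟩ := hp
    obtain ⟨H, h3, h4⟩ := hq
    exact ⟨G + H, by simp [h1, h3], by simp [h2, h4]⟩
  | monomial n a =>
    refine ⟨Polynomial.monomial (n + 1) (a / (n + 1)), ?_, by simp [Polynomial.eval_monomial]⟩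
    rw [Polynomial.derivative_monomial]
    congr 1
    have : ((n : ℝ) + 1) ≠ 0 := by positivity
    push_cast
    field_simp

lemma exists_fac (P : Polynomial ℝ) (h : P.eval 0 = 0) :
    ∃ Q : Polynomial ℝ, P = Polynomial.X * Q := by
  have h : Polynomial.X ∣ P := by
    rw [Polynomial.X_dvd_iff, Polynomial.coeff_zero_eq_eval_zero, h]
  exact h

lemma poly_nrm (P : Polynomial ℝ) (h0 : P.eval 0 = 0) (B : ℝ) :
    ∃ C, 0 ≤ C ∧ ∀ f, IsS f → (∀ x, |f x| ≤ B) → nrm (fun x => P.eval (f x)) ≤ C * nrm f := by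
  obtain ⟨Q, rfl⟩ := exists_fac P h0
  obtain ⟨C, hC, hCb⟩ := poly_bdd Q B
  refine ⟨C, hC, fun f hf hB => ?_⟩
  rw [← abs_of_nonneg hC, ← nrm_const_mul]
  refine nrm_mono (hf.poly _ h0) (hf.const_mul _) fun x => ?_
  simp only [Polynomial.eval_mul, Polynomial.eval_X, abs_mul]
  rw [mul_comm, abs_of_nonneg hC]
  exact mul_le_mul_of_nonneg_right (hCb _ (hB x)) (abs_nonneg _)

lemma poly_int (P : Polynomial ℝ) (h0 : P.eval 0 = 0) (h1 : P.derivative.eval 0 = 0) (B : ℝ) :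
    ∃ C, 0 ≤ C ∧ ∀ f, IsS f → (∀ x, |f x| ≤ B) → ∫ x, |P.eval (f x)| ≤ C * nrm f ^ 2 := by
  obtain ⟨Q, rfl⟩ := exists_fac P h0
  have hQ : Q.eval 0 = 0 := by simpa using h1
  obtain ⟨R, rfl⟩ := exists_fac Q hQ
  obtain ⟨C, hC, hCb⟩ := poly_bdd R B
  refine ⟨C, hC, fun f hf hB => ?_⟩
  rw [nrm_sq, ← integral_const_mul]
  refine integral_mono (hf.poly _ h0).abs_int (hf.sq.integrable.const_mul _) fun x => ?_
  simp only [Polynomial.eval_mul, Polynomial.eval_X, abs_mul]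
  rw [← mul_assoc, ← sq, sq_abs, mul_comm]
  exact mul_le_mul_of_nonneg_right (hCb _ (hB x)) (sq_nonneg _)

lemma deriv_poly {f : ℝ → ℝ} (hf : IsS f) (P : Polynomial ℝ) (x : ℝ) :
    HasDerivAt (fun x => P.eval (f x)) (P.derivative.eval (f x) * deriv f x) x :=
  (P.hasDerivAt (f x)).comp x (hf.hasDerivAt x)

lemma dt_poly {U : ℝ → ℝ → ℝ} (h : ST U) (P : Polynomial ℝ) (t x : ℝ) :
    HasDerivAt (fun τ => P.eval (U τ x)) (P.derivative.eval (U t x) * dt U t x) t :=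
  HasDerivAt.comp (h₂ := fun y => P.eval y) t (P.hasDerivAt (U t x)) (h.hasDerivAt_t t x)

lemma bdd_of_hNorm {U : ℝ → ℝ → ℝ} (hs : ∀ t, IsS (U t)) {a b M : ℝ} {m : ℕ} (hm : 1 ≤ m)
    (hM : ∀ t ∈ Set.Icc a b, hNorm m (U t) ≤ M) : ∀ t ∈ Set.Icc a b, ∀ x, |U t x| ≤ M :=
  fun t ht x => (sup_le_hNorm0 hm (hs t) x).trans (hM t ht)

/-- conservation of mass, one-directional in time -/
lemma l2_aux {F T U} (h : Sol F T U) {c d : ℝ} (hc0 : 0 ≤ c) (hcd : c ≤ d) (hdT : d ≤ T)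
    (hM : ∃ M, ∀ t ∈ Set.Icc c d, hNorm 2 (U t) ≤ M) : nrm (U d) ^ 2 = nrm (U c) ^ 2 := by
  obtain ⟨M, hM⟩ := hM
  obtain ⟨H, hH1, hH0⟩ := exists_antideriv (Polynomial.X * F)
  obtain ⟨C, hC, hCb⟩ := poly_int H hH0 (by rw [hH1]; simp) M
  have hcm : c ∈ Set.Icc c d := ⟨le_rfl, hcd⟩
  have hM0 : 0 ≤ M := (hNorm_nonneg _ _).trans (hM c hcm)
  have hB := bdd_of_hNorm h.sl (by norm_num) hM
  have hU : ∀ t ∈ Set.Icc c d, nrm (U t) ≤ M := fun t ht => by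
    have := (nrm_le_hNorm (n := 0) (m := 2) (by omega) (U t)).trans (hM t ht)
    simpa using this
  have hU1 : ∀ t ∈ Set.Icc c d, nrm (deriv (U t)) ≤ M := fun t ht => by
    have := (nrm_le_hNorm (n := 1) (m := 2) (by omega) (U t)).trans (hM t ht)
    simpa using this
  have hQ1 : ∀ t, IsS (fun x => -3 * deriv (U t) x ^ 2) := fun t => (h.sl t).deriv.sq.const_mul _
  have hHS : ∀ t, IsS (fun x => H.eval (U t x)) := fun t => (h.sl t).poly H hH0
  have hQ2 : ∀ t, IsS (fun x => 2 * H.eval (U t x)) := fun t => (hHS t).const_mul _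
  have := cl (e := fun t x => U t x ^ 2) (Q := fun t x => -3 * deriv (U t) x ^ 2 + 2 * H.eval (U t x))
    (P := fun t x => U t x ^ 2) (R := fun t x => 0) (c := c) (d := d)
    (K := 3 * M ^ 2 + 2 * (C * M ^ 2) + M ^ 2) (r := 0)
    hcd h.st.sq (fun t _ => (h.sl t).sq) (fun t _ => (hQ1 t).add (hQ2 t)) (fun t _ => (h.sl t).sq)
    (fun t _ => IsS.zero) ?_ ?_ ?_ ?_
  · rw [zero_mul] at this
    rw [nrm_sq, nrm_sq]
    exact sub_eq_zero.1 (abs_eq_zero.1 (le_antisymm this (abs_nonneg _)))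
  · intro t ht x
    have htT : t ∈ Set.Icc 0 T := ⟨hc0.trans ht.1, ht.2.trans hdT⟩
    rw [dt_sq h.st, deriv_add' (hQ1 t) (hQ2 t), deriv_cmul' _ (h.sl t).deriv.sq,
      deriv_sq (h.sl t).deriv, deriv_cmul' _ (hHS t), iter3_sq (h.sl t), h.eq t htT x, iter2]
    simp only [(deriv_poly (h.sl t) H x).deriv, hH1, Polynomial.eval_mul, Polynomial.eval_X]
    ring
  · intro t ht
    refine (int_abs_add (hQ1 t) (hQ2 t)).trans ?_
    rw [int_abs_cmul, int_abs_sq, int_abs_cmul]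
    have h1 := hCb _ (h.sl t) (hB t ht)
    have h2 : nrm (deriv (U t)) ^ 2 ≤ M ^ 2 := pow_le_pow_left₀ (nrm_nonneg _) (hU1 t ht) 2
    have h3 : nrm (U t) ^ 2 ≤ M ^ 2 := pow_le_pow_left₀ (nrm_nonneg _) (hU t ht) 2
    have h4 := mul_le_mul_of_nonneg_left h3 hC
    have e3 : |(-3:ℝ)| = 3 := by norm_num
    have e2 : |(2:ℝ)| = 2 := by norm_num
    rw [e3, e2]
    nlinarith [sq_nonneg M]
  · intro t ht
    rw [int_abs_sq]
    have h3 : nrm (U t) ^ 2 ≤ M ^ 2 := pow_le_pow_left₀ (nrm_nonneg _) (hU t ht) 2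
    nlinarith [sq_nonneg M, mul_nonneg hC (sq_nonneg M)]
  · intro t _; simp

lemma sym_of_aux {f : ℝ → ℝ} {a b : ℝ} (H : ∀ c d, a ≤ c → c ≤ d → d ≤ b → f d = f c) :
    ∀ t ∈ Set.Icc a b, ∀ t' ∈ Set.Icc a b, f t = f t' := by
  intro t ht t' ht'
  rcases le_total t t' with h | h
  · exact (H t t' ht.1 h ht'.2).symm
  · exact H t' t ht'.1 h ht.2

lemma l2 {F T U} (h : Sol F T U) {a b : ℝ} (ha0 : 0 ≤ a) (hbT : b ≤ T)
    (hM : ∃ M, ∀ t ∈ Set.Icc a b, hNorm 2 (U t) ≤ M) :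
    ∀ t ∈ Set.Icc a b, ∀ t' ∈ Set.Icc a b, nrm (U t) = nrm (U t') := by
  obtain ⟨M, hM⟩ := hM
  intro t ht t' ht'
  have := sym_of_aux (f := fun t => nrm (U t) ^ 2) (a := a) (b := b)
    (fun c d h1 h2 h3 => l2_aux h (ha0.trans h1) h2 (h3.trans hbT)
      ⟨M, fun t ht => hM t ⟨h1.trans ht.1, ht.2.trans h3⟩⟩) t ht t' ht'
  exact (sq_eq_sq₀ (nrm_nonneg _) (nrm_nonneg _)).1 this

lemma h1_aux {F T U} (h : Sol F T U) {G GG : Polynomial ℝ} (hG : G.derivative = F)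
    (hG0 : G.eval 0 = 0) (hGG : GG.derivative = G) (hGG0 : GG.eval 0 = 0)
    {c d : ℝ} (hc0 : 0 ≤ c) (hcd : c ≤ d) (hdT : d ≤ T)
    (hM : ∃ M, ∀ t ∈ Set.Icc c d, hNorm 3 (U t) ≤ M) :
    (1 / 2 * nrm (deriv (U d)) ^ 2 - ∫ x, GG.eval (U d x)) =
      1 / 2 * nrm (deriv (U c)) ^ 2 - ∫ x, GG.eval (U c x) := by
  obtain ⟨M, hM⟩ := hM
  have hcm : c ∈ Set.Icc c d := ⟨le_rfl, hcd⟩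
  have hM0 : 0 ≤ M := (hNorm_nonneg _ _).trans (hM c hcm)
  obtain ⟨CF, hCF, hCFb⟩ := poly_bdd F M
  obtain ⟨CG, hCG, hCGb⟩ := poly_nrm G hG0 M
  have hB := bdd_of_hNorm h.sl (by norm_num) hM
  have hUn : ∀ n ≤ 3, ∀ t ∈ Set.Icc c d, nrm (iteratedDeriv n (U t)) ≤ M := fun n hn t ht =>
    (nrm_le_hNorm (n := n) (m := 3) hn (U t)).trans (hM t ht)
  have hGS : ∀ t, IsS (fun x => G.eval (U t x)) := fun t => (h.sl t).poly G hG0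
  have hGGS : ∀ t, IsS (fun x => GG.eval (U t x)) := fun t => (h.sl t).poly GG hGG0
  have hA : ∀ t, IsS (fun x => iteratedDeriv 2 (U t) x + G.eval (U t x)) := fun t =>
    ((h.sl t).iter 2).add (hGS t)
  have hAx : ∀ t, IsS (fun x => iteratedDeriv 3 (U t) x + F.eval (U t x) * deriv (U t) x) := fun t =>
    ((h.sl t).iter 3).add (h.NS t)
  have hQ1 := fun t => (h.sl t).deriv.mul (hAx t)
  have hQ2 := fun t => (hA t).sq.const_mul (-1 / 2)
  have he : ∀ t, IsS (fun x => 1 / 2 * deriv (U t) x ^ 2 - GG.eval (U t x)) := fun t =>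
    ((h.sl t).deriv.sq.const_mul _).sub (hGGS t)
  have heint : ∀ t, ∫ x, (1 / 2 * deriv (U t) x ^ 2 - GG.eval (U t x)) =
      1 / 2 * nrm (deriv (U t)) ^ 2 - ∫ x, GG.eval (U t x) := fun t => by
    rw [integral_sub ((h.sl t).deriv.sq.const_mul _).integrable (hGGS t).integrable,
      integral_const_mul, nrm_sq]
  have s2 : ∀ f : ℝ → ℝ, deriv (iteratedDeriv 2 f) = iteratedDeriv 3 f := fun f => by
    rw [iteratedDeriv_succ (n := 2)]
  have := cl (e := fun t x => 1 / 2 * deriv (U t) x ^ 2 - GG.eval (U t x))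
    (Q := fun t x => deriv (U t) x * (iteratedDeriv 3 (U t) x + F.eval (U t x) * deriv (U t) x) +
      -1 / 2 * (iteratedDeriv 2 (U t) x + G.eval (U t x)) ^ 2)
    (P := fun t x => 0) (R := fun t x => 0) (c := c) (d := d)
    (K := M * (M + CF * M) + 1 / 2 * (M + CG * M) ^ 2) (r := 0)
    hcd ((h.st.dx.sq.cmul _).sub (h.st.poly GG)) (fun t _ => he t) (fun t _ => (hQ1 t).add (hQ2 t))
    (fun t _ => IsS.zero) (fun t _ => IsS.zero) ?_ ?_ ?_ ?_
  · rw [zero_mul, heint, heint] at this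
    exact sub_eq_zero.1 (abs_eq_zero.1 (le_antisymm this (abs_nonneg _)))
  · intro t ht x
    have htT : t ∈ Set.Icc 0 T := ⟨hc0.trans ht.1, ht.2.trans hdT⟩
    have hutx : dt (fun t x => deriv (U t) x) t x = -(iteratedDeriv 4 (U t) x +
        deriv (fun x => F.eval (U t x) * deriv (U t) x) x) := by
      have := h.dt_iter 1 htT x
      simpa [iteratedDeriv_one] using this
    have e1 : dt (fun t x => 1 / 2 * deriv (U t) x ^ 2 - GG.eval (U t x)) t x =
        deriv (U t) x * dt (fun t x => deriv (U t) x) t x - G.eval (U t x) * dt U t x := by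
      refine HasDerivAt.deriv ((((h.st.dx.hasDerivAt_t t x).fun_pow 2).const_mul (1 / 2)).sub
        (dt_poly h.st GG t x) |>.congr_deriv ?_)
      rw [hGG]; simp; ring
    have e3 : iteratedDeriv 3 (fun _ : ℝ => (0:ℝ)) x = 0 := by
      rw [iter3]; simp
    have s3 : deriv (iteratedDeriv 3 (U t)) = iteratedDeriv 4 (U t) := by
      rw [iteratedDeriv_succ (n := 3)]
    have e4 : deriv (fun x => G.eval (U t x)) x = F.eval (U t x) * deriv (U t) x := by
      rw [(deriv_poly (h.sl t) G x).deriv, hG]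
    rw [e1, hutx, h.eq t htT x, deriv_add' (hQ1 t) (hQ2 t), deriv_cmul' _ (hA t).sq,
      deriv_sq (hA t), deriv_mul' (h.sl t).deriv (hAx t), deriv_add' ((h.sl t).iter 2) (hGS t),
      deriv_add' ((h.sl t).iter 3) (h.NS t), e3]
    simp only [s2, s3, e4]
    rw [iter2]
    ring
  · intro t ht
    refine (int_abs_add (hQ1 t) (hQ2 t)).trans ?_
    rw [int_abs_cmul, int_abs_sq]
    have a1 := cs_abs (h.sl t).deriv (hAx t)
    have a2 : nrm (deriv (U t)) ≤ M := by
      have := hUn 1 (by norm_num) t ht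
      simpa using this
    have a3 : nrm (fun x => iteratedDeriv 3 (U t) x + F.eval (U t x) * deriv (U t) x) ≤ M + CF * M := by
      refine (nrm_add ((h.sl t).iter 3) (h.NS t)).trans (add_le_add (hUn 3 le_rfl t ht) ?_)
      exact (nrm_mul_le (h.FS t) (h.sl t).deriv fun x => hCFb _ (hB t ht x)).trans
        (mul_le_mul_of_nonneg_left a2 hCF)
    have a4 : nrm (fun x => iteratedDeriv 2 (U t) x + G.eval (U t x)) ≤ M + CG * M := by
      refine (nrm_add ((h.sl t).iter 2) (hGS t)).trans (add_le_add (hUn 2 (by norm_num) t ht) ?_)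
      have a0 := hUn 0 (by norm_num) t ht
      rw [iteratedDeriv_zero] at a0
      exact (hCGb _ (h.sl t) (hB t ht)).trans (mul_le_mul_of_nonneg_left a0 hCG)
    have a5 := mul_le_mul a2 a3 (nrm_nonneg _) hM0
    have a6 := pow_le_pow_left₀ (nrm_nonneg _) a4 2
    have e2 : |(-1 / 2:ℝ)| = 1 / 2 := by norm_num
    rw [e2]
    linarith
  · intro t ht
    simp only [abs_zero, integral_zero]
    positivity
  · intro t _; simp

lemma h1c {F T U} (h : Sol F T U) {G GG : Polynomial ℝ} (hG : G.derivative = F)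
    (hG0 : G.eval 0 = 0) (hGG : GG.derivative = G) (hGG0 : GG.eval 0 = 0)
    {a b : ℝ} (ha0 : 0 ≤ a) (hbT : b ≤ T)
    (hM : ∃ M, ∀ t ∈ Set.Icc a b, hNorm 3 (U t) ≤ M) :
    ∀ t ∈ Set.Icc a b, ∀ t' ∈ Set.Icc a b,
    (1 / 2 * nrm (deriv (U t)) ^ 2 - ∫ x, GG.eval (U t x)) =
      1 / 2 * nrm (deriv (U t')) ^ 2 - ∫ x, GG.eval (U t' x) := by
  obtain ⟨M, hM⟩ := hM
  intro t ht t' ht'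
  exact sym_of_aux (f := fun t => 1 / 2 * nrm (deriv (U t)) ^ 2 - ∫ x, GG.eval (U t x))
    (a := a) (b := b)
    (fun c d h1 h2 h3 => h1_aux h hG hG0 hGG hGG0 (ha0.trans h1) h2 (h3.trans hbT)
      ⟨M, fun t ht => hM t ⟨h1.trans ht.1, ht.2.trans h3⟩⟩) t ht t' ht'

end KG

namespace KG

def BS (c d : ℝ) (f : ℝ → ℝ → ℝ) : Prop := ∃ K, 0 ≤ K ∧ ∀ t ∈ Set.Icc c d, ∀ x, |f t x| ≤ K
def BN (c d : ℝ) (f : ℝ → ℝ → ℝ) : Prop := ∃ K, 0 ≤ K ∧ ∀ t ∈ Set.Icc c d, nrm (f t) ≤ K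
def BI (c d : ℝ) (f : ℝ → ℝ → ℝ) : Prop :=
  (∀ t, IsS (f t)) ∧ ∃ K, 0 ≤ K ∧ ∀ t ∈ Set.Icc c d, ∫ x, |f t x| ≤ K

lemma BS.mul {c d f g} (hf : BS c d f) (hg : BS c d g) : BS c d (fun t x => f t x * g t x) := by
  obtain ⟨K, hK, hf⟩ := hf
  obtain ⟨L, hL, hg⟩ := hg
  refine ⟨K * L, by positivity, fun t ht x => ?_⟩
  rw [abs_mul]
  exact mul_le_mul (hf t ht x) (hg t ht x) (abs_nonneg _) hK

lemma BN.smul {c d : ℝ} {f g : ℝ → ℝ → ℝ} (hf : BS c d f) (hg : BN c d g)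
    (hgS : ∀ t, IsS (g t)) (hfgS : ∀ t, IsS (fun x => f t x * g t x)) :
    BN c d (fun t x => f t x * g t x) := by
  obtain ⟨K, hK, hf⟩ := hf
  obtain ⟨L, hL, hg⟩ := hg
  refine ⟨K * L, by positivity, fun t ht => ?_⟩
  refine le_trans ?_ (mul_le_mul_of_nonneg_left (hg t ht) hK)
  have h1 : nrm (fun x => K * g t x) = K * nrm (g t) := by
    rw [nrm_const_mul, abs_of_nonneg hK]
  rw [← h1]
  refine nrm_mono (hfgS t) ((hgS t).const_mul _) fun x => ?_
  rw [abs_mul, abs_mul, abs_of_nonneg hK]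
  exact mul_le_mul_of_nonneg_right (hf t ht x) (abs_nonneg _)

lemma BI.of {c d : ℝ} {f g : ℝ → ℝ → ℝ} (k : ℝ) (hf : BN c d f) (hg : BN c d g)
    (hfS : ∀ t, IsS (f t)) (hgS : ∀ t, IsS (g t)) :
    BI c d (fun t x => k * (f t x * g t x)) := by
  obtain ⟨K, hK, hf⟩ := hf
  obtain ⟨L, hL, hg⟩ := hg
  refine ⟨fun t => ((hfS t).mul (hgS t)).const_mul _, |k| * (K * L), by positivity, fun t ht => ?_⟩
  rw [int_abs_cmul]
  refine mul_le_mul_of_nonneg_left ?_ (abs_nonneg _)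
  exact (cs_abs (hfS t) (hgS t)).trans (mul_le_mul (hf t ht) (hg t ht) (nrm_nonneg _) hK)

lemma BI.add {c d : ℝ} {f g : ℝ → ℝ → ℝ} (hf : BI c d f) (hg : BI c d g) :
    BI c d (fun t x => f t x + g t x) := by
  obtain ⟨hfS, K, hK, hf⟩ := hf
  obtain ⟨hgS, L, hL, hg⟩ := hg
  refine ⟨fun t => (hfS t).add (hgS t), K + L, by positivity, fun t ht => ?_⟩
  exact (int_abs_add (hfS t) (hgS t)).trans (add_le_add (hf t ht) (hg t ht))

lemma h2_aux {F T U} (h : Sol F T U) {c d B B1 Y C0 C3 : ℝ} (hc0 : 0 ≤ c) (hcd : c ≤ d) (hdT : d ≤ T)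
    (hM : ∃ M, ∀ t ∈ Set.Icc c d, hNorm 3 (U t) ≤ M)
    (hB : ∀ t ∈ Set.Icc c d, ∀ x, |U t x| ≤ B)
    (hB1 : ∀ t ∈ Set.Icc c d, nrm (deriv (U t)) ≤ B1)
    (hY : ∀ t ∈ Set.Icc c d, nrm (iteratedDeriv 2 (U t)) ≤ Y)
    (hC0 : 0 ≤ C0) (hC3 : 0 ≤ C3)
    (h0 : ∀ y, |y| ≤ B → |F.eval y * F.derivative.eval y| ≤ C0)
    (h3 : ∀ y, |y| ≤ B → |F.derivative.derivative.derivative.eval y| ≤ C3) :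
    |(nrm (iteratedDeriv 2 (U d)) ^ 2 - 5 / 3 * ∫ x, F.eval (U d x) * deriv (U d) x ^ 2) -
      (nrm (iteratedDeriv 2 (U c)) ^ 2 - 5 / 3 * ∫ x, F.eval (U c x) * deriv (U c) x ^ 2)| ≤
      ((C3 + 2 * C0) * (1 + B1 ^ 2 * Y ^ 2) * B1 ^ 2) * (d - c) := by
  obtain ⟨M, hM⟩ := hM
  have hcm : c ∈ Set.Icc c d := ⟨le_rfl, hcd⟩
  have hM0 : 0 ≤ M := (hNorm_nonneg _ _).trans (hM c hcm)
  have hB10 : 0 ≤ B1 := (nrm_nonneg _).trans (hB1 c hcm)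
  have hY0 : 0 ≤ Y := (nrm_nonneg _).trans (hY c hcm)
  set F1 := F.derivative with hF1
  set F2 := F1.derivative with hF2
  set F3 := F2.derivative with hF3
  have s1 : ∀ f : ℝ → ℝ, deriv (deriv f) = iteratedDeriv 2 f := fun f => (iter2 f).symm
  have s2 : ∀ f : ℝ → ℝ, deriv (iteratedDeriv 2 f) = iteratedDeriv 3 f := fun f => by
    rw [iteratedDeriv_succ (n := 2)]
  have s3 : ∀ f : ℝ → ℝ, deriv (iteratedDeriv 3 f) = iteratedDeriv 4 f := fun f => by
    rw [iteratedDeriv_succ (n := 3)]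
  have s4 : ∀ f : ℝ → ℝ, iteratedDeriv 3 (iteratedDeriv 2 f) = iteratedDeriv 5 f := fun f => by
    rw [iter_iter]
  have hn : ∀ n ≤ 3, BN c d (fun t x => iteratedDeriv n (U t) x) := fun n hn =>
    ⟨M, hM0, fun t ht => (nrm_le_hNorm (n := n) (m := 3) hn (U t)).trans (hM t ht)⟩
  have na : BN c d (fun t x => deriv (U t) x) := by
    have := hn 1 (by norm_num)
    simpa [iteratedDeriv_one] using this
  have sa : BS c d (fun t x => deriv (U t) x) :=
    ⟨M, hM0, fun t ht x => by
      have := (sup_le_hNorm (n := 1) (m := 3) (by norm_num) (h.sl t) x).trans (hM t ht)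
      simpa [iteratedDeriv_one] using this⟩
  have sP : ∀ P : Polynomial ℝ, BS c d (fun t x => P.eval (U t x)) := fun P => by
    obtain ⟨C, hC, hCb⟩ := poly_bdd P M
    exact ⟨C, hC, fun t ht x => hCb _ ((sup_le_hNorm0 (by norm_num) (h.sl t) x).trans (hM t ht))⟩
  have Sa : ∀ t, IsS (fun x => deriv (U t) x) := fun t => (h.sl t).deriv
  have Sb : ∀ t, IsS (fun x => iteratedDeriv 2 (U t) x) := fun t => (h.sl t).iter 2
  have Sc : ∀ t, IsS (fun x => iteratedDeriv 3 (U t) x) := fun t => (h.sl t).iter 3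
  have SFa : ∀ t, IsS (fun x => F.eval (U t x) * deriv (U t) x) := fun t => (h.sl t).polymul (Sa t) F
  have SFb : ∀ t, IsS (fun x => F.eval (U t x) * iteratedDeriv 2 (U t) x) := fun t =>
    (h.sl t).polymul (Sb t) F
  have SF2 : ∀ t, IsS (fun x => (F2.eval (U t x) * (deriv (U t) x * deriv (U t) x)) * deriv (U t) x) :=
    fun t => ((h.sl t).polymul ((Sa t).mul (Sa t)) F2).mul (Sa t)
  have SF1 : ∀ t, IsS (fun x => (F1.eval (U t x) * deriv (U t) x) * deriv (U t) x) :=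
    fun t => ((h.sl t).polymul (Sa t) F1).mul (Sa t)
  have nFa := BN.smul (sP F) na Sa SFa
  have q1 := BI.of (-3) (hn 3 le_rfl) (hn 3 le_rfl) Sc Sc
  have q2 := BI.of (8 / 3) (BN.smul (sP F) (hn 2 (by norm_num)) Sb SFb) (hn 2 (by norm_num)) SFb Sb
  have q3 := BI.of (1 / 12) (BN.smul ((sP F2).mul (sa.mul sa)) na Sa SF2) na SF2 Sa
  have q4 := BI.of (-10 / 3) nFa (hn 3 le_rfl) SFa Sc
  have q5 := BI.of (5 / 3) (BN.smul ((sP F1).mul sa) na Sa SF1) (hn 2 (by norm_num)) SF1 Sb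
  have q6 := BI.of (-5 / 3) nFa nFa SFa SFa
  obtain ⟨QS, K, hK, hKb⟩ := ((((q1.add q2).add q3).add q4).add q5).add q6
  have he1 : ∀ t, IsS (fun x => iteratedDeriv 2 (U t) x ^ 2) := fun t => (Sb t).sq
  have he2 : ∀ t, IsS (fun x => F.eval (U t x) * deriv (U t) x ^ 2) := fun t => (h.FS t).mul (Sa t).sq
  have heint : ∀ t, ∫ x, (iteratedDeriv 2 (U t) x ^ 2 - 5 / 3 * (F.eval (U t x) * deriv (U t) x ^ 2)) =
      nrm (iteratedDeriv 2 (U t)) ^ 2 - 5 / 3 * ∫ x, F.eval (U t x) * deriv (U t) x ^ 2 := fun t => by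
    rw [integral_sub (he1 t).integrable ((he2 t).const_mul _).integrable,
      integral_const_mul, nrm_sq]
  have SR : ∀ t, IsS (fun x => 1 / 12 * (F3.eval (U t x) * deriv (U t) x ^ 3) +
      5 / 3 * (F.eval (U t x) * (F1.eval (U t x) * deriv (U t) x))) := fun t =>
    (((h.sl t).polymul ((Sa t).pow_succ 2) F3).const_mul _).add
      (((h.sl t).polymul ((h.sl t).polymul (Sa t) F1) F).const_mul _)
  rw [← heint, ← heint]
  refine cl (e := fun t x => iteratedDeriv 2 (U t) x ^ 2 - 5 / 3 * (F.eval (U t x) * deriv (U t) x ^ 2))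
    (P := fun t x => iteratedDeriv 2 (U t) x ^ 2)
    (R := fun t x => (1 / 12 * (F3.eval (U t x) * deriv (U t) x ^ 3) +
      5 / 3 * (F.eval (U t x) * (F1.eval (U t x) * deriv (U t) x))) * deriv (U t) x ^ 2)
    (K := K + M ^ 2)
    hcd ((h.st.iter 2).sq.sub (((h.st.poly F).mul h.st.dx.sq).cmul _))
    (fun t _ => (he1 t).sub ((he2 t).const_mul _)) (fun t _ => QS t) (fun t _ => he1 t)
    (fun t _ => (SR t).mul (Sa t).sq) ?_ (fun t ht => (hKb t ht).trans ?_) ?_ ?_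
  · intro t ht x
    have htT : t ∈ Set.Icc 0 T := ⟨hc0.trans ht.1, ht.2.trans hdT⟩
    have dU : HasDerivAt (U t) (deriv (U t) x) x := (h.sl t).hasDerivAt x
    have da : HasDerivAt (fun x => deriv (U t) x) (iteratedDeriv 2 (U t) x) x := by
      rw [← s1]; exact (Sa t).hasDerivAt x
    have db : HasDerivAt (fun x => iteratedDeriv 2 (U t) x) (iteratedDeriv 3 (U t) x) x := by
      rw [← s2]; exact (Sb t).hasDerivAt x
    have dc : HasDerivAt (fun x => iteratedDeriv 3 (U t) x) (iteratedDeriv 4 (U t) x) x := by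
      rw [← s3]; exact (Sc t).hasDerivAt x
    have dF : HasDerivAt (fun x => F.eval (U t x)) (F1.eval (U t x) * deriv (U t) x) x :=
      deriv_poly (h.sl t) F x
    have dF1 : HasDerivAt (fun x => F1.eval (U t x)) (F2.eval (U t x) * deriv (U t) x) x :=
      deriv_poly (h.sl t) F1 x
    have dF2 : HasDerivAt (fun x => F2.eval (U t x)) (F3.eval (U t x) * deriv (U t) x) x :=
      deriv_poly (h.sl t) F2 x
    have hdQ := (((((((dc.fun_mul dc).const_mul (-3)).fun_add
      (((dF.fun_mul db).fun_mul db).const_mul (8 / 3))).fun_add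
      ((((dF2.fun_mul (da.fun_mul da)).fun_mul da).fun_mul da).const_mul (1 / 12))).fun_add
      (((dF.fun_mul da).fun_mul dc).const_mul (-10 / 3))).fun_add
      ((((dF1.fun_mul da).fun_mul da).fun_mul db).const_mul (5 / 3))).fun_add
      (((dF.fun_mul da).fun_mul (dF.fun_mul da)).const_mul (-5 / 3))).deriv
    rw [hdQ]
    have dN : deriv (fun x => F.eval (U t x) * deriv (U t) x) = fun x =>
        F1.eval (U t x) * deriv (U t) x * deriv (U t) x +
        F.eval (U t x) * iteratedDeriv 2 (U t) x := by
      ext y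
      rw [((deriv_poly (h.sl t) F y).fun_mul ((Sa t).hasDerivAt y)).deriv, s1]
    have at' : dt (fun t x => deriv (U t) x) t x = -(iteratedDeriv 4 (U t) x +
        (F1.eval (U t x) * deriv (U t) x * deriv (U t) x +
        F.eval (U t x) * iteratedDeriv 2 (U t) x)) := by
      have := h.dt_iter 1 htT x
      simp only [iteratedDeriv_one] at this
      rw [this, dN]
    have bt' : dt (fun t x => iteratedDeriv 2 (U t) x) t x = -(iteratedDeriv 5 (U t) x +
        (F2.eval (U t x) * deriv (U t) x ^ 3 +
          3 * (F1.eval (U t x) * deriv (U t) x * iteratedDeriv 2 (U t) x) +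
        F.eval (U t x) * iteratedDeriv 3 (U t) x)) := by
      have := h.dt_iter 2 htT x
      rw [this, iter2 (fun x => F.eval (U t x) * deriv (U t) x), dN,
        (((dF1.fun_mul da).fun_mul da).fun_add (dF.fun_mul db)).deriv]
      ring
    have e1 : dt (fun t x => iteratedDeriv 2 (U t) x ^ 2 -
        5 / 3 * (F.eval (U t x) * deriv (U t) x ^ 2)) t x =
        2 * (iteratedDeriv 2 (U t) x * dt (fun t x => iteratedDeriv 2 (U t) x) t x) -
        5 / 3 * (F1.eval (U t x) * dt U t x * deriv (U t) x ^ 2 +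
          F.eval (U t x) * (2 * (deriv (U t) x * dt (fun t x => deriv (U t) x) t x))) := by
      refine HasDerivAt.deriv ((((h.st.iter 2).hasDerivAt_t t x).fun_pow 2).fun_sub
        (((dt_poly h.st F t x).fun_mul ((h.st.dx.hasDerivAt_t t x).fun_pow 2)).const_mul
          (5 / 3)) |>.congr_deriv ?_)
      simp only [Nat.cast_ofNat, Nat.add_one_sub_one, pow_one]
      ring
    rw [e1, at', bt', h.eq t htT x, iter3_sq (Sb t), s4, s2, iter_iter]
    ring
  · linarith [sq_nonneg M]
  · intro t ht
    rw [int_abs_sq]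
    have := pow_le_pow_left₀ (nrm_nonneg _) ((nrm_le_hNorm (n := 2) (m := 3) (by norm_num) (U t)).trans (hM t ht)) 2
    linarith
  · intro t ht
    have hb : ∀ x, |1 / 12 * (F3.eval (U t x) * deriv (U t) x ^ 3) +
      5 / 3 * (F.eval (U t x) * (F1.eval (U t x) * deriv (U t) x))| ≤
        (C3 + 2 * C0) * (1 + B1 ^ 2 * Y ^ 2) := by
      intro x
      have k1 := sobolev (Sa t) x
      have k1' : nrm (fun x => deriv (U t) x) * nrm (deriv fun x => deriv (U t) x) ≤ B1 * Y := by
        have := hY t ht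
        rw [← s1] at this
        exact mul_le_mul (hB1 t ht) this (nrm_nonneg _) hB10
      set α := |deriv (U t) x| with hα
      have hα0 : 0 ≤ α := abs_nonneg _
      have k2 : α ^ 2 ≤ B1 * Y := by rw [hα, sq_abs]; linarith
      have k4 : α ^ 4 ≤ B1 ^ 2 * Y ^ 2 := by
        have := pow_le_pow_left₀ (sq_nonneg α) k2 2
        calc α ^ 4 = (α ^ 2) ^ 2 := by ring
          _ ≤ _ := this
          _ = _ := by ring
      have k5 : α ≤ 1 + α ^ 4 := by nlinarith [sq_nonneg (α - 1), sq_nonneg (α ^ 2 - 1)]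
      have k6 : α ^ 3 ≤ 1 + α ^ 4 := by
        rcases le_total α 1 with hh | hh
        · have : α ^ 3 ≤ 1 := pow_le_one₀ hα0 hh
          have := pow_nonneg hα0 4
          linarith
        · have : α ^ 3 ≤ α ^ 4 := pow_le_pow_right₀ hh (by norm_num)
          linarith
      have p3 := h3 _ (hB t ht x)
      have p0 := h0 _ (hB t ht x)
      rw [← mul_assoc (F.eval (U t x))]
      refine (abs_add_le _ _).trans ?_
      rw [abs_mul, abs_mul, abs_mul, abs_mul (_ * _), abs_pow, ← hα]
      have m1 := mul_le_mul p3 (k6.trans (by linarith : 1 + α ^ 4 ≤ 1 + B1 ^ 2 * Y ^ 2)) (by positivity) hC3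
      have m2 := mul_le_mul p0 (k5.trans (by linarith : 1 + α ^ 4 ≤ 1 + B1 ^ 2 * Y ^ 2)) hα0 hC0
      have e1 : |(1 / 12 : ℝ)| = 1 / 12 := by norm_num
      have e2 : |(5 / 3 : ℝ)| = 5 / 3 := by norm_num
      rw [e1, e2]
      have n1 : 0 ≤ C3 * (1 + B1 ^ 2 * Y ^ 2) := by positivity
      have n2 : 0 ≤ C0 * (1 + B1 ^ 2 * Y ^ 2) := by positivity
      linarith
    refine (int_abs_mul_sq (SR t) (Sa t) hb).trans ?_
    have := pow_le_pow_left₀ (nrm_nonneg _) (hB1 t ht) 2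
    refine mul_le_mul_of_nonneg_left this (by positivity)

end KG

namespace KG

lemma hNorm2_sq (f : ℝ → ℝ) : hNorm 2 f ^ 2 =
    nrm f ^ 2 + nrm (deriv f) ^ 2 + nrm (iteratedDeriv 2 f) ^ 2 := by
  rw [hNorm_sq, Finset.sum_range_succ, Finset.sum_range_succ, Finset.sum_range_succ]
  simp

lemma abs_int_le (f : ℝ → ℝ) : |∫ x, f x| ≤ ∫ x, |f x| := abs_integral_le_integral_abs

/-- a priori bound in H², given a sup bound -/
lemma eeh2 (F : Polynomial ℝ) (T B K : ℝ) : ∃ L, ∀ U, Sol F T U → ∀ a b, 0 ≤ a → a ≤ b → b ≤ T →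
    (∀ t ∈ Set.Icc a b, ∀ x, |U t x| ≤ B) → (∃ M, ∀ t ∈ Set.Icc a b, hNorm 3 (U t) ≤ M) →
    ∀ t ∈ Set.Icc a b, ∀ t' ∈ Set.Icc a b, hNorm 2 (U t') ≤ K → hNorm 2 (U t) ≤ L := by
  obtain ⟨G, hG, hG0⟩ := exists_antideriv F
  obtain ⟨GG, hGG, hGG0⟩ := exists_antideriv G
  obtain ⟨C, hC, hCb⟩ := poly_int GG hGG0 (by rw [hGG, hG0]) B
  obtain ⟨C0, hC0, h0⟩ := poly_bdd (F * F.derivative) B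
  obtain ⟨C3, hC3, h3⟩ := poly_bdd (F.derivative.derivative.derivative) B
  obtain ⟨CF, hCF, hF⟩ := poly_bdd F B
  set q := K ^ 2 * (1 + 4 * C) with hq
  have hq0 : 0 ≤ q := by positivity
  set Cc := (C3 + 2 * C0) * (1 + q) * q with hCc
  have hCc0 : 0 ≤ Cc := by positivity
  refine ⟨√(K ^ 2 + q + (1 + (K ^ 2 + 10 / 3 * (CF * q))) * Real.exp (Cc * T)), ?_⟩
  rintro U h a b ha hab hbT hB ⟨M, hM⟩ t ht t' ht' hK
  have hK0 : 0 ≤ K := (hNorm_nonneg _ _).trans hK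
  have hM2 : ∃ M, ∀ t ∈ Set.Icc a b, hNorm 2 (U t) ≤ M :=
    ⟨M, fun t ht => (hNorm_mono (by norm_num) _).trans (hM t ht)⟩
  have hKsq : hNorm 2 (U t') ^ 2 ≤ K ^ 2 := pow_le_pow_left₀ (hNorm_nonneg _ _) hK 2
  rw [hNorm2_sq] at hKsq
  have s1 := sq_nonneg (nrm (U t'))
  have s2 := sq_nonneg (nrm (deriv (U t')))
  have s3 := sq_nonneg (nrm (iteratedDeriv 2 (U t')))
  have hL2 : ∀ τ ∈ Set.Icc a b, nrm (U τ) ^ 2 ≤ K ^ 2 := fun τ hτ => by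
    rw [l2 h ha hbT hM2 τ hτ t' ht']; linarith
  have hI : ∀ τ ∈ Set.Icc a b, |∫ x, GG.eval (U τ x)| ≤ C * K ^ 2 := fun τ hτ => by
    have := hCb _ (h.sl τ) (hB τ hτ)
    have h2 := mul_le_mul_of_nonneg_left (hL2 τ hτ) hC
    exact (abs_int_le _).trans (this.trans h2)
  have hH1 : ∀ τ ∈ Set.Icc a b, nrm (deriv (U τ)) ^ 2 ≤ q := fun τ hτ => by
    have e := h1c h hG hG0 hGG hGG0 ha hbT ⟨M, hM⟩ τ hτ t' ht'
    have e1 := abs_le.1 (hI τ hτ)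
    have e2 := abs_le.1 (hI t' ht')
    rw [hq]; linarith
  have hJ : ∀ τ ∈ Set.Icc a b, |∫ x, F.eval (U τ x) * deriv (U τ) x ^ 2| ≤ CF * q := fun τ hτ => by
    have := int_abs_mul_sq (h.FS τ) (h.sl τ).deriv (fun x => hF _ (hB τ hτ x))
    exact (abs_int_le _).trans (this.trans (mul_le_mul_of_nonneg_left (hH1 τ hτ) hCF))
  set y : ℝ → ℝ := fun τ => (nrm (iteratedDeriv 2 (U τ)) ^ 2 -
    5 / 3 * ∫ x, F.eval (U τ x) * deriv (U τ) x ^ 2) + 5 / 3 * (CF * q) with hy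
  have hyl : ∀ τ ∈ Set.Icc a b, nrm (iteratedDeriv 2 (U τ)) ^ 2 ≤ y τ := fun τ hτ => by
    have e1 := abs_le.1 (hJ τ hτ)
    simp only [hy]; linarith
  have hyu : ∀ τ ∈ Set.Icc a b, y τ ≤ nrm (iteratedDeriv 2 (U τ)) ^ 2 + 10 / 3 * (CF * q) :=
    fun τ hτ => by
    have e1 := abs_le.1 (hJ τ hτ)
    simp only [hy]; linarith
  have hg := sup_gronwall (y := y) (a := a) (b := b) (C := Cc) (M := M ^ 2 + 10 / 3 * (CF * q))
    (fun τ hτ => (sq_nonneg _).trans (hyl τ hτ))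
    (fun τ hτ => by
      have e := (nrm_le_hNorm (n := 2) (m := 3) (by norm_num) (U τ)).trans (hM τ hτ)
      have e2 := pow_le_pow_left₀ (nrm_nonneg _) e 2
      have := hyu τ hτ
      linarith) hCc0
    (fun c d K' hac hcd hdb hK' => by
      have hsub : ∀ τ ∈ Set.Icc c d, τ ∈ Set.Icc a b := fun τ hτ =>
        ⟨hac.trans hτ.1, hτ.2.trans hdb⟩
      have hcm : c ∈ Set.Icc c d := ⟨le_rfl, hcd⟩
      have hK'0 : 0 ≤ K' := ((sq_nonneg _).trans (hyl c (hsub c hcm))).trans (hK' c hcm)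
      have := h2_aux h (c := c) (d := d) (B := B) (B1 := √q) (Y := √K') (ha.trans hac) hcd
        (hdb.trans hbT) ⟨M, fun τ hτ => hM τ (hsub τ hτ)⟩ (fun τ hτ => hB τ (hsub τ hτ))
        (fun τ hτ => Real.le_sqrt_of_sq_le (hH1 τ (hsub τ hτ)))
        (fun τ hτ => Real.le_sqrt_of_sq_le ((hyl τ (hsub τ hτ)).trans (hK' τ hτ)))
        hC0 hC3 (fun y hy => by simpa using h0 y hy) h3
      rw [Real.sq_sqrt hq0, Real.sq_sqrt hK'0] at this
      have e : y d - y c = (nrm (iteratedDeriv 2 (U d)) ^ 2 - 5 / 3 * ∫ x, F.eval (U d x) * deriv (U d) x ^ 2) -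
          (nrm (iteratedDeriv 2 (U c)) ^ 2 - 5 / 3 * ∫ x, F.eval (U c x) * deriv (U c) x ^ 2) := by
        simp only [hy]; ring
      rw [e]
      refine this.trans ?_
      have e3 : 1 + q * K' ≤ (1 + q) * (1 + K') := by nlinarith
      have hdc : 0 ≤ d - c := by linarith
      have : (C3 + 2 * C0) * (1 + q * K') * q * (d - c) ≤
          (C3 + 2 * C0) * ((1 + q) * (1 + K')) * q * (d - c) := by gcongr
      refine this.trans (le_of_eq ?_)
      rw [hCc]; ring) t ht t' ht'
  have hyt := hyl t ht
  have hyt' := hyu t' ht'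
  have hexp : Real.exp (Cc * (b - a)) ≤ Real.exp (Cc * T) := by
    gcongr; linarith
  have hfin : (1 + y t') * Real.exp (Cc * (b - a)) ≤
      (1 + (K ^ 2 + 10 / 3 * (CF * q))) * Real.exp (Cc * T) := by
    have : 0 ≤ y t' := (sq_nonneg _).trans (hyl t' ht')
    have : 0 ≤ CF * q := by positivity
    refine mul_le_mul (by linarith) hexp (Real.exp_pos _).le (by positivity)
  apply Real.le_sqrt_of_sq_le
  rw [hNorm2_sq]
  have := hL2 t ht
  have := hH1 t ht
  linarith

/-- a priori bound in `H^{N+1}` given `H^N`, `N ≥ 2` -/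
lemma step (F : Polynomial ℝ) (T B K : ℝ) {N : ℕ} (hN : 2 ≤ N) : ∃ L, ∀ U, Sol F T U →
    ∀ a b, 0 ≤ a → a ≤ b → b ≤ T →
    (∀ t ∈ Set.Icc a b, hNorm N (U t) ≤ B) → (∃ M, ∀ t ∈ Set.Icc a b, hNorm (N + 1) (U t) ≤ M) →
    ∀ t ∈ Set.Icc a b, ∀ t' ∈ Set.Icc a b, hNorm (N + 1) (U t') ≤ K → hNorm (N + 1) (U t) ≤ L := by
  by_cases hF0 : F.eval 0 = 0
  swap
  · exact ⟨0, fun U h => absurd h.f0 hF0⟩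
  obtain ⟨L1, hL1, H1⟩ := hNorm_polyP (m := N) (by omega) F hF0 B
  obtain ⟨L2, hL2, H2⟩ := poly_tame (m := N) (by omega) F hF0 B
  by_cases hB : 0 ≤ B
  swap
  · refine ⟨0, fun U h a b ha hab hbT hN' => absurd ((hNorm_nonneg _ _).trans (hN' a ⟨le_rfl, hab⟩)) hB⟩
  set D := 2 ^ (N + 1) * (L1 + L2 * B) * (2 + B) with hD
  have hD0 : 0 ≤ D := by positivity
  set Cc := 5 * L1 + 4 * D with hCc
  have hCc0 : 0 ≤ Cc := by positivity
  refine ⟨√(B ^ 2 + (1 + K ^ 2) * Real.exp (Cc * T)), ?_⟩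
  rintro U h a b ha hab hbT hB' ⟨M, hM⟩ t ht t' ht' hK
  have hK0 : 0 ≤ K := (hNorm_nonneg _ _).trans hK
  set y : ℝ → ℝ := fun τ => nrm (iteratedDeriv (N + 1) (U τ)) ^ 2 with hy
  have hg := sup_gronwall (y := y) (a := a) (b := b) (C := Cc) (M := M ^ 2)
    (fun τ hτ => sq_nonneg _)
    (fun τ hτ => pow_le_pow_left₀ (nrm_nonneg _) ((nrm_le_hNorm le_rfl _).trans (hM τ hτ)) 2) hCc0
    (fun c d K' hac hcd hdb hK' => by
      have hsub : ∀ τ ∈ Set.Icc c d, τ ∈ Set.Icc a b := fun τ hτ =>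
        ⟨hac.trans hτ.1, hτ.2.trans hdb⟩
      have hcm : c ∈ Set.Icc c d := ⟨le_rfl, hcd⟩
      have hK'0 : 0 ≤ K' := (sq_nonneg _).trans (hK' c hcm)
      set Y := √K' with hY
      have hYs : Y ^ 2 = K' := Real.sq_sqrt hK'0
      have hY0 : 0 ≤ Y := Real.sqrt_nonneg _
      have hYn : ∀ τ ∈ Set.Icc c d, nrm (iteratedDeriv (N + 1) (U τ)) ≤ Y := fun τ hτ =>
        Real.le_sqrt_of_sq_le (hK' τ hτ)
      have hfull : ∀ τ ∈ Set.Icc c d, hNorm (N + 1) (U τ) ≤ B + Y := fun τ hτ => by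
        refine abs_le_of_sq_le_sq' ?_ (by positivity) |>.2
        rw [hNorm_sq_succ]
        have e1 := pow_le_pow_left₀ (hNorm_nonneg _ _) (hB' τ (hsub τ hτ)) 2
        have e2 := pow_le_pow_left₀ (nrm_nonneg _) (hYn τ hτ) 2
        nlinarith [mul_nonneg hB hY0]
      have := el_energy h (c := c) (d := d) (p := L1) (Y := Y) (r := D * (1 + Y)) (m := N)
        (ha.trans hac) hcd (hdb.trans hbT) ⟨M, fun τ hτ => hM τ (hsub τ hτ)⟩
        (fun τ hτ x => by
          have e := sup_le_hNorm (n := 1) (m := N) (by omega) (h.FS τ) x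
          rw [iteratedDeriv_one] at e
          exact e.trans (H1 _ (h.sl τ) (hB' τ (hsub τ hτ)))) hYn
        (fun τ hτ => by
          have e := comm_tame (h.FS τ) (h.sl τ) hN
          refine e.trans ?_
          have e1 := H1 _ (h.sl τ) (hB' τ (hsub τ hτ))
          have e2 := H2 _ (h.sl τ) (hB' τ (hsub τ hτ))
          have e3 := hfull τ hτ
          have e4 := hB' τ (hsub τ hτ)
          have n1 := hNorm_nonneg (N + 1) (U τ)
          have n2 := hNorm_nonneg N (U τ)
          have n3 := hNorm_nonneg (N + 1) (fun x => F.eval (U τ x))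
          have n4 := hNorm_nonneg N (fun x => F.eval (U τ x))
          calc 2 ^ (N + 1) * (hNorm N (fun x => F.eval (U τ x)) * hNorm (N + 1) (U τ) +
                hNorm (N + 1) (fun x => F.eval (U τ x)) * hNorm N (U τ))
              ≤ 2 ^ (N + 1) * (L1 * (B + Y) + (L2 * (1 + (B + Y))) * B) := by
                have : hNorm (N + 1) (fun x => F.eval (U τ x)) ≤ L2 * (1 + (B + Y)) :=
                  e2.trans (by gcongr)
                gcongr
            _ ≤ D * (1 + Y) := by
                rw [hD]
                have p2 : (0:ℝ) ≤ 2 ^ (N + 1) := by positivity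
                have f1 : L1 * (B + Y) ≤ L1 * ((2 + B) * (1 + Y)) := by gcongr; nlinarith
                have f2 : L2 * (1 + (B + Y)) * B ≤ L2 * ((2 + B) * (1 + Y)) * B := by
                  gcongr; nlinarith
                calc _ ≤ 2 ^ (N + 1) * (L1 * ((2 + B) * (1 + Y)) + L2 * ((2 + B) * (1 + Y)) * B) := by
                      gcongr
                  _ = _ := by ring)
      refine this.trans ?_
      have hdc : 0 ≤ d - c := by linarith
      rw [mul_right_comm Cc]
      gcongr
      rw [hCc, hYs]
      have : Y ≤ 1 + K' := by nlinarith [sq_nonneg (Y - 1)]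
      have f3 : Y * (D * (1 + Y)) ≤ 2 * D * (1 + K') := by
        have : Y * (1 + Y) ≤ 2 * (1 + K') := by nlinarith
        nlinarith
      nlinarith) t ht t' ht'
  have hexp : Real.exp (Cc * (b - a)) ≤ Real.exp (Cc * T) := by
    gcongr; linarith
  have hyt' : y t' ≤ K ^ 2 :=
    pow_le_pow_left₀ (nrm_nonneg _) ((nrm_le_hNorm le_rfl _).trans hK) 2
  have hfin : (1 + y t') * Real.exp (Cc * (b - a)) ≤ (1 + K ^ 2) * Real.exp (Cc * T) :=
    mul_le_mul (by linarith) hexp (Real.exp_pos _).le (by positivity)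
  apply Real.le_sqrt_of_sq_le
  rw [hNorm_sq_succ]
  have e1 := pow_le_pow_left₀ (hNorm_nonneg _ _) (hB' t ht) 2
  have e2 : nrm (iteratedDeriv (N + 1) (U t)) ^ 2 = y t := rfl
  linarith

/-- a priori bound in H³ given a sup bound -/
lemma ee3 (F : Polynomial ℝ) (T B K : ℝ) : ∃ L, ∀ U, Sol F T U → ∀ a b, 0 ≤ a → a ≤ b → b ≤ T →
    (∀ t ∈ Set.Icc a b, ∀ x, |U t x| ≤ B) → (∃ M, ∀ t ∈ Set.Icc a b, hNorm 3 (U t) ≤ M) →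
    ∀ t ∈ Set.Icc a b, ∀ t' ∈ Set.Icc a b, hNorm 3 (U t') ≤ K → hNorm 3 (U t) ≤ L := by
  obtain ⟨L2, h2⟩ := eeh2 F T B K
  obtain ⟨L, h3⟩ := step F T L2 K (N := 2) le_rfl
  refine ⟨L, fun U h a b ha hab hbT hB hM t ht t' ht' hK => ?_⟩
  refine h3 U h a b ha hab hbT (fun τ hτ => ?_) hM t ht t' ht' hK
  exact h2 U h a b ha hab hbT hB hM τ hτ t' ht' ((hNorm_mono (by norm_num) _).trans hK)

lemma all_of_three {F T U} (h : Sol F T U) (h3 : ∃ M, ∀ t ∈ Set.Icc 0 T, hNorm 3 (U t) ≤ M) (N : ℕ) :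
    ∃ M, ∀ t ∈ Set.Icc 0 T, hNorm N (U t) ≤ M := by
  have key : ∀ n, ∃ M, ∀ t ∈ Set.Icc 0 T, hNorm (n + 3) (U t) ≤ M := by
    intro n
    induction n with
    | zero => exact h3
    | succ n ih =>
      obtain ⟨B, hB⟩ := ih
      refine baire_bdd (f := fun t => hNorm (n + 3 + 1) (U t)) (fun K => lsc h.st h.sl _ T K) fun K => ?_
      obtain ⟨L, hL⟩ := step F T B K (N := n + 3) (by omega)
      exact ⟨L, fun a b ha hab hbT hM => hL U h a b ha hab hbT
        (fun t ht => hB t ⟨ha.trans ht.1, ht.2.trans hbT⟩) hM⟩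
  obtain ⟨M, hM⟩ := key N
  exact ⟨M, fun t ht => (hNorm_mono (by omega) _).trans (hM t ht)⟩

lemma all_of_bdd {F T U} (h : Sol F T U) {B : ℝ} (hB : ∀ t ∈ Set.Icc 0 T, ∀ x, |U t x| ≤ B) (N : ℕ) :
    ∃ M, ∀ t ∈ Set.Icc 0 T, hNorm N (U t) ≤ M := by
  refine all_of_three h ?_ N
  refine baire_bdd (f := fun t => hNorm 3 (U t)) (fun K => lsc h.st h.sl _ T K) fun K => ?_
  obtain ⟨L, hL⟩ := ee3 F T B K
  exact ⟨L, fun a b ha hab hbT hM => hL U h a b ha hab hbT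
    (fun t ht => hB t ⟨ha.trans ht.1, ht.2.trans hbT⟩) hM⟩

/-- sup bound for KdV -/
lemma kdv_sup {T U} (h : Sol Polynomial.X T U) {a b K : ℝ} (ha : 0 ≤ a) (hbT : b ≤ T)
    (hM : ∃ M, ∀ t ∈ Set.Icc a b, hNorm 3 (U t) ≤ M) :
    ∀ t ∈ Set.Icc a b, ∀ t' ∈ Set.Icc a b, hNorm 3 (U t') ≤ K → ∀ x, |U t x| ≤
      K + (2 + 4 * K ^ 2 + 2 * K ^ 3) := by
  obtain ⟨M, hM⟩ := hM
  intro t ht t' ht' hK x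
  have hK0 : 0 ≤ K := (hNorm_nonneg _ _).trans hK
  have hM2 : ∃ M, ∀ t ∈ Set.Icc a b, hNorm 2 (U t) ≤ M :=
    ⟨M, fun t ht => (hNorm_mono (by norm_num) _).trans (hM t ht)⟩
  set G : Polynomial ℝ := Polynomial.C (1 / 2) * Polynomial.X ^ 2 with hG
  set GG : Polynomial ℝ := Polynomial.C (1 / 6) * Polynomial.X ^ 3 with hGG
  have hm' : nrm (U t') ≤ K := by
    have := (nrm_le_hNorm (n := 0) (m := 3) (by norm_num) (U t')).trans hK
    simpa using this
  have hm : nrm (U t) ≤ K := by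
    rw [l2 h ha hbT hM2 t ht t' ht']; exact hm'
  have hz' : nrm (deriv (U t')) ≤ K := by
    have := (nrm_le_hNorm (n := 1) (m := 3) (by norm_num) (U t')).trans hK
    simpa using this
  have e := h1c h (G := G) (GG := GG) (by
      rw [hG, Polynomial.derivative_C_mul, Polynomial.derivative_X_pow, ← mul_assoc,
        ← Polynomial.C_mul]; norm_num) (by simp [hG]) (by
      rw [hG, hGG, Polynomial.derivative_C_mul, Polynomial.derivative_X_pow, ← mul_assoc,
        ← Polynomial.C_mul]; norm_num) (by simp [hGG]) ha hbT ⟨M, hM⟩ t ht t' ht'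
  have key : ∀ τ, nrm (U τ) ≤ K →
      |∫ x, GG.eval (U τ x)| ≤ 1 / 6 * (K + nrm (deriv (U τ))) * K ^ 2 := fun τ hτ => by
    have n1 := nrm_nonneg (U τ)
    have n2 := nrm_nonneg (deriv (U τ))
    have hs : ∀ x, |1 / 6 * U τ x| ≤ 1 / 6 * (K + nrm (deriv (U τ))) := fun x => by
      rw [abs_mul, abs_of_nonneg (by norm_num : (0:ℝ) ≤ 1 / 6)]
      gcongr
      refine abs_le_of_sq_le_sq ?_ (by positivity)
      have := sobolev (h.sl τ) x
      nlinarith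
    have := int_abs_mul_sq ((h.sl τ).const_mul (1 / 6)) (h.sl τ) hs
    have e : ∀ x, GG.eval (U τ x) = 1 / 6 * U τ x * U τ x ^ 2 := fun x => by
      simp [hGG]; ring
    simp_rw [e]
    refine (abs_int_le _).trans (this.trans ?_)
    gcongr
  have k1 := abs_le.1 (key t hm)
  have k2 := abs_le.1 (key t' hm')
  set z := nrm (deriv (U t)) with hz
  have hz0 : 0 ≤ z := nrm_nonneg _
  have n3 := nrm_nonneg (deriv (U t'))
  have f1 : 1 / 6 * (K + nrm (deriv (U t'))) * K ^ 2 ≤ 1 / 6 * (K + K) * K ^ 2 := by gcongr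
  have f2 := pow_le_pow_left₀ n3 hz' 2
  have hzz : z ^ 2 ≤ K ^ 2 + 1 / 3 * (K + z) * K ^ 2 + 2 / 3 * K ^ 3 := by nlinarith
  have hzb : z ≤ 2 + 4 * K ^ 2 + 2 * K ^ 3 := by
    by_contra hcon
    push Not at hcon
    have hK3 : 0 ≤ K ^ 3 := by positivity
    have hK2 : 0 ≤ K ^ 2 := by positivity
    have : z * (2 + 4 * K ^ 2 + 2 * K ^ 3) ≤ z ^ 2 := by nlinarith
    have h1z : 1 ≤ z := by linarith
    nlinarith [mul_nonneg hz0 hK2, mul_nonneg hz0 hK3]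
  refine (abs_le_of_sq_le_sq (?_ : U t x ^ 2 ≤ (K + z) ^ 2) (by positivity)).trans (by linarith)
  have := sobolev (h.sl t) x
  have n1 := nrm_nonneg (U t)
  nlinarith

lemma kdv_all {T U} (h : Sol Polynomial.X T U) (N : ℕ) :
    ∃ M, ∀ t ∈ Set.Icc 0 T, hNorm N (U t) ≤ M := by
  refine all_of_three h ?_ N
  refine baire_bdd (f := fun t => hNorm 3 (U t)) (fun K => lsc h.st h.sl _ T K) fun K => ?_
  obtain ⟨L, hL⟩ := ee3 Polynomial.X T (K + (2 + 4 * K ^ 2 + 2 * K ^ 3)) K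
  exact ⟨L, fun a b ha hab hbT hM t ht t' ht' hK => hL U h a b ha hab hbT
    (fun τ hτ => kdv_sup h ha hbT hM τ hτ t' ht' hK) hM t ht t' ht' hK⟩

end KG

namespace KG

/-- constant in the quantitative energy estimate -/
noncomputable def cg (k m : ℕ) : ℝ := (m + 1) * ((5 + 2 * 2 ^ m) * ((m + 1) * cm m ^ k))

lemma cg_pos (k m : ℕ) : 0 < cg k m := by
  unfold cg
  have := cm_ge_one m
  have : 0 < cm m := by linarith
  positivity

lemma growth {F T U} (h : Sol F T U) {k m : ℕ} {a : ℕ → ℝ} {A c d K : ℝ} (hm : 2 ≤ m)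
    (hF : ∀ y, F.eval y = ∑ j ∈ Finset.Icc 1 k, a j * y ^ j) (hA0 : 0 ≤ A)
    (hA : ∀ j ∈ Finset.Icc 1 k, |a j| ≤ A) (hc : 0 ≤ c) (hcd : c ≤ d) (hdT : d ≤ T)
    (hK : ∀ t ∈ Set.Icc c d, hNorm m (U t) ≤ K) :
    |hNorm m (U d) ^ 2 - hNorm m (U c) ^ 2| ≤
      cg k m * (A * ∑ j ∈ Finset.Icc 1 k, K ^ j) * K ^ 2 * (d - c) := by
  have hcm : c ∈ Set.Icc c d := ⟨le_rfl, hcd⟩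
  have hK0 : 0 ≤ K := (hNorm_nonneg _ _).trans (hK c hcm)
  have hcm1 : 0 ≤ cm m := by have := cm_ge_one m; linarith
  set P := (m + 1) * cm m ^ k * (A * ∑ j ∈ Finset.Icc 1 k, K ^ j) with hP
  have hS0 : 0 ≤ ∑ j ∈ Finset.Icc 1 k, K ^ j := Finset.sum_nonneg fun j _ => by positivity
  have hP0 : 0 ≤ P := by positivity
  have hdc : 0 ≤ d - c := by linarith
  have hFP : ∀ t ∈ Set.Icc c d, hNorm m (fun x => F.eval (U t x)) ≤ P := fun t ht => by
    simp_rw [hF]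
    refine (hNorm_polyF (h.sl t) (by omega) k a hA).trans ?_
    rw [hP]
    have := hK t ht
    have := hNorm_nonneg m (U t)
    gcongr
  have each : ∀ n ≤ m, |nrm (iteratedDeriv n (U d)) ^ 2 - nrm (iteratedDeriv n (U c)) ^ 2| ≤
      (5 + 2 * 2 ^ m) * P * K ^ 2 * (d - c) := by
    intro n hn
    rcases n with _ | n
    · simp only [iteratedDeriv_zero]
      rw [l2 h hc hdT ⟨K, fun t ht => (hNorm_mono hm _).trans (hK t ht)⟩ d ⟨hcd, le_rfl⟩ c hcm]
      simp only [sub_self, abs_zero]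
      positivity
    · have := el_energy h (c := c) (d := d) (p := P) (Y := K) (r := 2 ^ m * (P * K)) (m := n) hc hcd
        hdT ⟨K, fun t ht => (hNorm_mono hn _).trans (hK t ht)⟩
        (fun t ht x => by
          have e := sup_le_hNorm (n := 1) (m := m) (by omega) (h.FS t) x
          rw [iteratedDeriv_one] at e
          exact e.trans (hFP t ht))
        (fun t ht => (nrm_le_hNorm hn _).trans (hK t ht))
        (fun t ht => by
          refine (comm_quant (h.FS t) (h.sl t) hn hm).trans ?_
          have := hNorm_nonneg m (U t)
          have := hK t ht
          have := hFP t ht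
          gcongr)
      refine this.trans (le_of_eq ?_)
      ring
  rw [hNorm_sq, hNorm_sq, ← Finset.sum_sub_distrib]
  refine (Finset.abs_sum_le_sum_abs _ _).trans ?_
  refine (Finset.sum_le_card_nsmul _ _ _ fun n hn =>
    each n (by have := Finset.mem_range.1 hn; omega)).trans (le_of_eq ?_)
  rw [Finset.card_range, nsmul_eq_mul, hP]
  unfold cg
  push_cast
  ring

lemma bootstrap {f : ℝ → ℝ} {T Λ y : ℝ} (hy : 0 < y) (hΛ : 0 ≤ Λ) (hf0 : f 0 ≤ y)
    (Lip : ∀ c d, 0 ≤ c → c ≤ d → d ≤ T → |f d - f c| ≤ Λ * (d - c))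
    (H : ∀ d ∈ Set.Icc 0 T, (∀ τ ∈ Set.Icc 0 d, f τ ≤ 4 * y) → f d ≤ 3 * y) :
    ∀ t ∈ Set.Icc 0 T, f t ≤ 4 * y := by
  set δ := y / (Λ + 1) with hδ
  have hδ0 : 0 < δ := by positivity
  have hΛδ : Λ * δ ≤ y := by
    rw [hδ, ← mul_div_assoc, div_le_iff₀ (by positivity)]; nlinarith
  have key : ∀ n : ℕ, ∀ t ∈ Set.Icc 0 T, t ≤ n * δ → f t ≤ 4 * y := by
    intro n
    induction n with
    | zero =>
      intro t ht h
      have : t = 0 := le_antisymm (by simpa using h) ht.1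
      subst this; linarith
    | succ n ih =>
      intro t ht h
      push_cast at h
      rcases le_total t (n * δ) with h1 | h1
      · exact ih t ht h1
      have hn0 : 0 ≤ (n:ℝ) * δ := by positivity
      have h2 := H (n * δ) ⟨hn0, h1.trans ht.2⟩ (fun τ hτ => ih τ ⟨hτ.1, hτ.2.trans (h1.trans ht.2)⟩ hτ.2)
      have h3 := (abs_le.1 (Lip (n * δ) t hn0 h1 ht.2)).2
      have h4 : Λ * (t - n * δ) ≤ Λ * δ := by gcongr; linarith
      linarith
  intro t ht
  obtain ⟨n, hn⟩ := exists_nat_ge (t / δ)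
  exact key n t ht ((div_le_iff₀ hδ0).1 hn)

lemma apriori {F T U} (h : Sol F T U) {k m : ℕ} {a : ℕ → ℝ} {A : ℝ} (hm : 2 ≤ m)
    (hF : ∀ y, F.eval y = ∑ j ∈ Finset.Icc 1 k, a j * y ^ j) (hA0 : 0 ≤ A)
    (hA : ∀ j ∈ Finset.Icc 1 k, |a j| ≤ A) (hb : ∃ M, ∀ t ∈ Set.Icc 0 T, hNorm m (U t) ≤ M)
    (h0 : 0 < hNorm m (U 0))
    (hT : T * (A * ∑ j ∈ Finset.Icc 1 k, hNorm m (U 0) ^ j) ≤ 1 / (2 * cg k m * 2 ^ k)) :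
    ∀ t ∈ Set.Icc 0 T, hNorm m (U t) ≤ 2 * hNorm m (U 0) := by
  obtain ⟨M, hM⟩ := hb
  set z := hNorm m (U 0) with hz
  have hg := cg_pos k m
  set M' := max M 0
  have hM'0 : 0 ≤ M' := le_max_right _ _
  have hM' : ∀ t ∈ Set.Icc 0 T, hNorm m (U t) ≤ M' := fun t ht => (hM t ht).trans (le_max_left _ _)
  have hS0 : 0 ≤ ∑ j ∈ Finset.Icc 1 k, M' ^ j := Finset.sum_nonneg fun j _ => by positivity
  have hz0 : 0 ≤ ∑ j ∈ Finset.Icc 1 k, z ^ j := Finset.sum_nonneg fun j _ => by positivity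
  have main := bootstrap (f := fun t => hNorm m (U t) ^ 2) (T := T) (y := z ^ 2)
    (Λ := cg k m * (A * ∑ j ∈ Finset.Icc 1 k, M' ^ j) * M' ^ 2) (by positivity) (by positivity) le_rfl
    (fun c d hc hcd hd => growth h hm hF hA0 hA hc hcd hd
      fun t ht => hM' t ⟨hc.trans ht.1, ht.2.trans hd⟩)
    (fun d hd hτ => by
      have g := growth h hm hF hA0 hA le_rfl hd.1 hd.2 (K := 2 * z) (fun t ht =>
        abs_le_of_sq_le_sq' (by have := hτ t ht; nlinarith) (by positivity) |>.2)
      have g2 := (abs_le.1 g).2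
      have hsum : ∑ j ∈ Finset.Icc 1 k, (2 * z) ^ j ≤ 2 ^ k * ∑ j ∈ Finset.Icc 1 k, z ^ j := by
        rw [Finset.mul_sum]
        refine Finset.sum_le_sum fun j hj => ?_
        rw [mul_pow]
        have : (2:ℝ) ^ j ≤ 2 ^ k := pow_le_pow_right₀ (by norm_num) (Finset.mem_Icc.1 hj).2
        gcongr
      have hd0 := hd.1
      have e : cg k m * (A * ∑ j ∈ Finset.Icc 1 k, (2 * z) ^ j) * (2 * z) ^ 2 * (d - 0) ≤ 2 * z ^ 2 := by
        calc _ ≤ cg k m * (A * (2 ^ k * ∑ j ∈ Finset.Icc 1 k, z ^ j)) * (2 * z) ^ 2 * T := by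
              have := hd.2
              rw [sub_zero]
              gcongr
          _ = 4 * z ^ 2 * (cg k m * 2 ^ k) * (T * (A * ∑ j ∈ Finset.Icc 1 k, z ^ j)) := by ring
          _ ≤ 4 * z ^ 2 * (cg k m * 2 ^ k) * (1 / (2 * cg k m * 2 ^ k)) := by gcongr
          _ = 2 * z ^ 2 := by field_simp; norm_num
      linarith)
  intro t ht
  refine abs_le_of_sq_le_sq' ?_ (by positivity) |>.2
  have := main t ht
  nlinarith

lemma hNorm_pos {m : ℕ} (hm : 1 ≤ m) (g : SchwartzMap ℝ ℝ) (hg : g ≠ 0) : 0 < hNorm m (⇑g) := by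
  refine (hNorm_nonneg _ _).lt_of_ne fun e => hg ?_
  ext x
  have := sup_le_hNorm0 hm (isS g) x
  rw [← e] at this
  simpa using this

lemma toSol {F : Polynomial ℝ} {f : ℝ → ℝ} (hf : ∀ y, F.eval y = f y) (h0 : f 0 = 0) {T : ℝ}
    {U : ℝ → SchwartzMap ℝ ℝ} (h : IsSchwartzSolution f T U) : Sol F T (fun t => ⇑(U t)) where
  st := h.1
  sl := fun t => isS (U t)
  f0 := by rw [hf, h0]
  eq := fun t ht x => by
    have := h.2 t ht x
    rw [hf]
    unfold dt
    linarith

/-- difference estimate -/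
lemma diff_est {F₁ F₂ : Polynomial ℝ} {T r : ℝ} {u U : ℝ → ℝ → ℝ} (h1 : Sol F₁ T u) (h2 : Sol F₂ T U)
    {s : ℕ} (hT : 0 ≤ T) {M : ℝ} (hM1 : ∀ t ∈ Set.Icc 0 T, hNorm (s + 1) (u t) ≤ M)
    (hM2 : ∀ t ∈ Set.Icc 0 T, hNorm (s + 1) (U t) ≤ M)
    (hr : ∀ t ∈ Set.Icc 0 T, hNorm s (fun x => F₁.eval (u t x) * deriv (u t) x) +
      hNorm s (fun x => F₂.eval (U t x) * deriv (U t) x) ≤ r) :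
    ∀ t ∈ Set.Icc 0 T, hNorm s (fun x => u t x - U t x) ≤
      (s + 1) * (hNorm s (fun x => u 0 x - U 0 x) + 2 * T * r) := by
  have h0m : (0:ℝ) ∈ Set.Icc 0 T := ⟨le_rfl, hT⟩
  have hr0 : 0 ≤ r := (add_nonneg (hNorm_nonneg _ _) (hNorm_nonneg _ _)).trans (hr 0 h0m)
  intro t ht
  refine hNorm_le_of (add_nonneg (hNorm_nonneg _ _) (by positivity)) fun n hn => ?_
  set v : ℝ → ℝ → ℝ := fun t x => iteratedDeriv n (u t) x - iteratedDeriv n (U t) x with hv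
  have hvS : ∀ t, IsS (v t) := fun t => ((h1.sl t).iter n).sub ((h2.sl t).iter n)
  have hvw : ∀ t, iteratedDeriv n (fun x => u t x - U t x) = v t := fun t =>
    iter_sub (h1.sl t) (h2.sl t) n
  have hvb : ∀ τ ∈ Set.Icc 0 T, nrm (v τ) ≤ M + M := fun τ hτ =>
    (nrm_sub ((h1.sl τ).iter n) ((h2.sl τ).iter n)).trans
      (add_le_add ((nrm_le_hNorm (by omega) _).trans (hM1 τ hτ))
        ((nrm_le_hNorm (by omega) _).trans (hM2 τ hτ)))
  have hdv : ∀ t, deriv (v t) = fun x => iteratedDeriv (n + 1) (u t) x - iteratedDeriv (n + 1) (U t) x :=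
    fun t => by
    rw [← hvw, ← iteratedDeriv_succ]
    exact iter_sub (h1.sl t) (h2.sl t) (n + 1)
  set g : ℝ → ℝ → ℝ := fun t x => iteratedDeriv n (fun x => F₁.eval (u t x) * deriv (u t) x) x -
    iteratedDeriv n (fun x => F₂.eval (U t x) * deriv (U t) x) x with hg
  have est : ∀ Y, (∀ τ ∈ Set.Icc 0 T, nrm (v τ) ≤ Y) → ∀ τ ∈ Set.Icc 0 T,
      nrm (v τ) ^ 2 ≤ nrm (v 0) ^ 2 + 2 * (Y * r) * T := by
    intro Y hY τ hτ
    have hsub : ∀ σ ∈ Set.Icc 0 τ, σ ∈ Set.Icc 0 T := fun σ hσ => ⟨hσ.1, hσ.2.trans hτ.2⟩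
    have hY0 : 0 ≤ Y := (nrm_nonneg _).trans (hY 0 h0m)
    have := le_energy (v := v) (b := fun _ _ => 0) (g := g) (c := 0) (d := τ) (p := 0) (Y := Y) (r := r)
      hτ.1 ((h1.st.iter n).sub (h2.st.iter n)) hvS (fun _ => IsS.zero)
      (fun t => ((h1.NS t).iter n).sub ((h2.NS t).iter n))
      (fun σ hσ x => by
        have e1 := h1.dt_iter n (hsub σ hσ) x
        have e2 := h2.dt_iter n (hsub σ hσ) x
        have e3 : dt v σ x = dt (fun t x => iteratedDeriv n (u t) x) σ x -
            dt (fun t x => iteratedDeriv n (U t) x) σ x :=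
          (((h1.st.iter n).hasDerivAt_t σ x).sub ((h2.st.iter n).hasDerivAt_t σ x)).deriv
        have e4 : iteratedDeriv 3 (v σ) x =
            iteratedDeriv (n + 3) (u σ) x - iteratedDeriv (n + 3) (U σ) x := by
          have : iteratedDeriv 3 (v σ) = iteratedDeriv (n + 3) (fun x => u σ x - U σ x) := by
            rw [← hvw, iter_iter, add_comm 3 n]
          rw [this, iter_sub (h1.sl σ) (h2.sl σ)]
        rw [e3, e1, e2, e4]
        simp only [hg]
        ring)
      (fun σ hσ => hY σ (hsub σ hσ))
      ⟨M + M, fun σ hσ => by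
        rw [hdv]
        exact (nrm_sub ((h1.sl σ).iter _) ((h2.sl σ).iter _)).trans
          (add_le_add ((nrm_le_hNorm (by omega) _).trans (hM1 σ (hsub σ hσ)))
          ((nrm_le_hNorm (by omega) _).trans (hM2 σ (hsub σ hσ))))⟩
      ⟨0, fun _ _ _ => by simp⟩ (fun _ _ _ => by simp)
      (fun σ hσ => by
        refine (nrm_sub ((h1.NS σ).iter n) ((h2.NS σ).iter n)).trans ?_
        exact (add_le_add (nrm_le_hNorm hn _) (nrm_le_hNorm hn _)).trans (hr σ (hsub σ hσ)))
    have e := (abs_le.1 this).2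
    have : (0 * Y ^ 2 + 2 * (Y * r)) * (τ - 0) ≤ 2 * (Y * r) * T := by
      rw [zero_mul, zero_add, sub_zero]
      have := hτ.2
      gcongr
    linarith
  have : Nonempty (Set.Icc (0:ℝ) T) := ⟨⟨0, h0m⟩⟩
  set S := ⨆ τ : Set.Icc (0:ℝ) T, nrm (v τ) with hS
  have hbdd : BddAbove (Set.range fun τ : Set.Icc (0:ℝ) T => nrm (v τ)) :=
    ⟨M + M, by rintro _ ⟨τ, rfl⟩; exact hvb τ τ.2⟩
  have hSle : ∀ τ ∈ Set.Icc 0 T, nrm (v τ) ≤ S := fun τ hτ =>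
    le_ciSup (f := fun τ : Set.Icc (0:ℝ) T => nrm (v τ)) hbdd ⟨τ, hτ⟩
  have hS0 : 0 ≤ S := (nrm_nonneg _).trans (hSle 0 h0m)
  have hS1 : S ≤ √(nrm (v 0) ^ 2 + 2 * (S * r) * T) :=
    ciSup_le fun τ => Real.le_sqrt_of_sq_le (est S hSle τ τ.2)
  have hS2 : S ^ 2 ≤ nrm (v 0) ^ 2 + 2 * (S * r) * T := by
    have := pow_le_pow_left₀ hS0 hS1 2
    rwa [Real.sq_sqrt (by positivity)] at this
  have hv0 := nrm_nonneg (v 0)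
  have hS3 : S ≤ nrm (v 0) + 2 * T * r := by
    by_contra hcon
    push Not at hcon
    have hTr : 0 ≤ T * r := by positivity
    nlinarith
  rw [hvw]
  refine (hSle t ht).trans (hS3.trans ?_)
  gcongr
  rw [← hvw]
  exact nrm_le_hNorm hn _

lemma pow_le_max {ε : ℝ} (hε : 0 < ε) {j k : ℕ} (h1 : 1 ≤ j) (h2 : j ≤ k) :
    ε ^ (j + 1) ≤ max (ε ^ 2) (ε ^ (k + 1)) := by
  rcases le_total ε 1 with h | h
  · exact le_max_of_le_left (pow_le_pow_of_le_one hε.le h (by omega))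
  · exact le_max_of_le_right (pow_le_pow_right₀ h (by omega))

lemma nonlin_est {F : Polynomial ℝ} {f : ℝ → ℝ} (hf : IsS f) {s k : ℕ} (hs : 1 ≤ s) {a : ℕ → ℝ}
    {A c ε : ℝ} (hε : 0 < ε) (hc : 0 < c)
    (hF : ∀ y, F.eval y = ∑ j ∈ Finset.Icc 1 k, a j * y ^ j) (hA0 : 0 ≤ A)
    (hA : ∀ j ∈ Finset.Icc 1 k, |a j| ≤ A) (h : hNorm (s + 1) f ≤ c * ε) :
    hNorm s (fun x => F.eval (f x) * deriv f x) ≤ ((s + 1) * 2 ^ s *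
      ((s + 1) * cm s ^ k * (A * ∑ j ∈ Finset.Icc 1 k, c ^ (j + 1)))) * max (ε ^ 2) (ε ^ (k + 1)) := by
  have hF0 : F.eval 0 = 0 := by
    rw [hF]
    exact Finset.sum_eq_zero fun j hj => by
      rw [zero_pow (by have := (Finset.mem_Icc.1 hj).1; omega), mul_zero]
  have hcm : 0 ≤ cm s := by have := cm_ge_one s; linarith
  have hfs : hNorm s f ≤ c * ε := (hNorm_mono (by omega) _).trans h
  have e1 := hNorm_mul (hf.poly F hF0) hf.deriv hs
  have e2 : hNorm s (fun x => F.eval (f x)) ≤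
      (s + 1) * cm s ^ k * (A * ∑ j ∈ Finset.Icc 1 k, (c * ε) ^ j) := by
    simp_rw [hF]
    refine (hNorm_polyF hf hs k a hA).trans ?_
    have := hNorm_nonneg s f
    gcongr
  have e3 : hNorm s (deriv f) ≤ c * ε := (hNorm_deriv_le s f).trans h
  have hS : (∑ j ∈ Finset.Icc 1 k, (c * ε) ^ j) * (c * ε) ≤
      (∑ j ∈ Finset.Icc 1 k, c ^ (j + 1)) * max (ε ^ 2) (ε ^ (k + 1)) := by
    rw [Finset.sum_mul, Finset.sum_mul]
    refine Finset.sum_le_sum fun j hj => ?_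
    rw [← pow_succ, mul_pow]
    have hj := Finset.mem_Icc.1 hj
    have := pow_le_max hε hj.1 hj.2
    gcongr
  have hs0 : 0 ≤ ∑ j ∈ Finset.Icc 1 k, (c * ε) ^ j := Finset.sum_nonneg fun j _ => by positivity
  have := hNorm_nonneg s (deriv f)
  calc _ ≤ (s + 1) * 2 ^ s * (hNorm s (fun x => F.eval (f x)) * hNorm s (deriv f)) := e1
    _ ≤ (s + 1) * 2 ^ s * (((s + 1) * cm s ^ k * (A * ∑ j ∈ Finset.Icc 1 k, (c * ε) ^ j)) * (c * ε)) := by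
      gcongr
    _ = (s + 1) * 2 ^ s * ((s + 1) * cm s ^ k * (A * ((∑ j ∈ Finset.Icc 1 k, (c * ε) ^ j) * (c * ε)))) := by
      ring
    _ ≤ (s + 1) * 2 ^ s * ((s + 1) * cm s ^ k * (A * ((∑ j ∈ Finset.Icc 1 k, c ^ (j + 1)) *
        max (ε ^ 2) (ε ^ (k + 1))))) := by gcongr
    _ = _ := by ring

lemma coefA_nonneg (k : ℕ) (a : ℕ → ℝ) : 0 ≤ coefA k a := NNReal.coe_nonneg _

lemma le_coefA (k : ℕ) (a : ℕ → ℝ) : ∀ j ∈ Finset.Icc 1 k, |a j| ≤ coefA k a := fun j hj => by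
  have h := Finset.le_sup (f := fun j : ℕ => (j : NNReal) * ‖a j‖₊) hj
  have h2 : ((j : NNReal) * ‖a j‖₊ : NNReal).toReal ≤ coefA k a := NNReal.coe_le_coe.2 h
  have h3 : ((j : NNReal) * ‖a j‖₊ : NNReal).toReal = j * |a j| := by simp
  rw [h3] at h2
  have h4 : (1:ℝ) ≤ j := by exact_mod_cast (Finset.mem_Icc.1 hj).1
  nlinarith [abs_nonneg (a j)]

lemma mul_le_of_le_mul_inv {T c X : ℝ} (hc : 0 ≤ c) (hX : 0 ≤ X) (h : T ≤ c * X⁻¹) : T * X ≤ c := by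
  rcases hX.eq_or_lt with rfl | hX
  · simpa using hc
  · calc T * X ≤ c * X⁻¹ * X := by gcongr
      _ = c := by field_simp

lemma linf_le {m : ℕ} (hm : 1 ≤ m) {f : ℝ → ℝ} (hf : IsS f) : linfNorm f ≤ hNorm m f :=
  ciSup_le fun x => sup_le_hNorm0 hm hf x

lemma le_linf {f : ℝ → ℝ} (hf : IsS f) (x : ℝ) : |f x| ≤ linfNorm f :=
  le_ciSup (f := fun x => |f x|)
    ⟨hNorm 1 f, by rintro _ ⟨y, rfl⟩; exact sup_le_hNorm0 le_rfl hf y⟩ x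

end KG

open KG
theorem kdv_gkdv_Hs_proximity (k : ℕ) (hk : 1 ≤ k) (s : ℕ) (hs : 1 ≤ s) (M : ℝ) :
    ∃ cs : ℝ, 0 < cs ∧
      ∀ a : ℕ → ℝ, |a k| = M → a k ≠ 0 →
        ∀ c₀ C₀ C T : ℝ, 0 < c₀ → 0 < C₀ → 0 < C → 0 < T →
          ∃ Ct : ℝ, 0 < Ct ∧
            ∀ ε : ℝ, 0 < ε →
              ∀ u U : ℝ → SchwartzMap ℝ ℝ,
                IsSchwartzSolution (fun y => y) T u →
                IsSchwartzSolution (fun y => ∑ j ∈ Finset.Icc 1 k, a j * y ^ j) T U →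
                u 0 ≠ 0 → U 0 ≠ 0 →
                T ≤ cs * min
                      (coefA k a * ∑ j ∈ Finset.Icc 1 k, hNorm (s + 1) (⇑(U 0)) ^ j)⁻¹
                      (hNorm (s + 1) (⇑(u 0)))⁻¹ →
                hNorm (s + 1) (⇑(u 0)) ≤ c₀ * ε →
                hNorm (s + 1) (⇑(U 0)) ≤ C₀ * ε →
                hNorm s (fun x => u 0 x - U 0 x) ≤ C * max (ε ^ 2) (ε ^ (k + 1)) →
                (⨆ t : Set.Icc (0 : ℝ) T, linfNorm (fun x => u (t : ℝ) x - U (t : ℝ) x))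
                    ≤ (⨆ t : Set.Icc (0 : ℝ) T,
                        hNorm s (fun x => u (t : ℝ) x - U (t : ℝ) x)) ∧
                  (⨆ t : Set.Icc (0 : ℝ) T, hNorm s (fun x => u (t : ℝ) x - U (t : ℝ) x))
                    ≤ Ct * max (ε ^ 2) (ε ^ (k + 1)) := by
  have g1 := cg_pos 1 (s + 1)
  have g2 := cg_pos k (s + 1)
  set cs := min (1 / (2 * cg k (s + 1) * 2 ^ k)) (1 / (2 * cg 1 (s + 1) * 2 ^ 1)) with hcs
  have hcs0 : 0 < cs := lt_min (by positivity) (by positivity)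
  refine ⟨cs, hcs0, ?_⟩
  intro a _ _ c₀ C₀ C T hc₀ hC₀ hC hT
  have hcm : 0 ≤ cm s := by have := cm_ge_one s; linarith
  have hA0 := coefA_nonneg k a
  have hA := le_coefA k a
  set D₁ : ℝ := (s + 1) * 2 ^ s *
      ((s + 1) * cm s ^ 1 * (1 * ∑ j ∈ Finset.Icc 1 1, (2 * c₀) ^ (j + 1))) with hD₁
  set D₂ : ℝ := (s + 1) * 2 ^ s *
      ((s + 1) * cm s ^ k * (coefA k a * ∑ j ∈ Finset.Icc 1 k, (2 * C₀) ^ (j + 1))) with hD₂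
  have hD₁0 : 0 ≤ D₁ := by
    have : 0 ≤ ∑ j ∈ Finset.Icc 1 1, (2 * c₀) ^ (j + 1) := Finset.sum_nonneg fun j _ => by positivity
    positivity
  have hD₂0 : 0 ≤ D₂ := by
    have : 0 ≤ ∑ j ∈ Finset.Icc 1 k, (2 * C₀) ^ (j + 1) := Finset.sum_nonneg fun j _ => by positivity
    positivity
  refine ⟨(s + 1) * (C + 2 * T * (D₁ + D₂)), by positivity, ?_⟩
  intro ε hε u U hu hU hu0 hU0 hTc hsu hsU hsw
  have : Nonempty (Set.Icc (0:ℝ) T) := ⟨⟨0, le_rfl, hT.le⟩⟩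
  have h0m : (0:ℝ) ∈ Set.Icc 0 T := ⟨le_rfl, hT.le⟩
  set F : Polynomial ℝ := ∑ j ∈ Finset.Icc 1 k, Polynomial.C (a j) * Polynomial.X ^ j with hFdef
  have hF : ∀ y, F.eval y = ∑ j ∈ Finset.Icc 1 k, a j * y ^ j := fun y => by
    simp [hFdef, Polynomial.eval_finsetSum]
  have Su : Sol Polynomial.X T (fun t => ⇑(u t)) := toSol (fun y => by simp) rfl hu
  have SU : Sol F T (fun t => ⇑(U t)) := toSol hF (Finset.sum_eq_zero fun j hj => by
      rw [zero_pow (by have := (Finset.mem_Icc.1 hj).1; omega), mul_zero]) hU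
  have hwS : ∀ t, IsS (fun x => u t x - U t x) := fun t => (isS (u t)).sub (isS (U t))
  by_cases hb : BddAbove (Set.range fun t : Set.Icc (0:ℝ) T => linfNorm (fun x => u t x - U t x))
  swap
  · have hb2 : ¬ BddAbove (Set.range fun t : Set.Icc (0:ℝ) T => hNorm s (fun x => u t x - U t x)) := by
      rintro ⟨B, hB⟩
      refine hb ⟨B, ?_⟩
      rintro _ ⟨t, rfl⟩
      exact (linf_le hs (hwS t)).trans (hB ⟨t, rfl⟩)
    rw [Real.iSup_of_not_bddAbove hb, Real.iSup_of_not_bddAbove hb2]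
    exact ⟨le_rfl, by positivity⟩
  obtain ⟨B, hB⟩ := hb
  have hwb : ∀ t ∈ Set.Icc 0 T, ∀ x, |u t x - U t x| ≤ B := fun t ht x =>
    (le_linf (hwS t) x).trans (hB ⟨⟨t, ht⟩, rfl⟩)
  obtain ⟨Mu, hMu⟩ := kdv_all Su (s + 1)
  have hUb : ∀ t ∈ Set.Icc 0 T, ∀ x, |U t x| ≤ B + Mu := fun t ht x => by
    have e1 := abs_le.1 (hwb t ht x)
    have e2 := abs_le.1 ((sup_le_hNorm0 (by omega) (isS (u t)) x).trans (hMu t ht))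
    exact abs_le.2 ⟨by linarith, by linarith⟩
  obtain ⟨MU, hMU⟩ := all_of_bdd SU hUb (s + 1)
  have hX0 : 0 ≤ ∑ j ∈ Finset.Icc 1 k, hNorm (s + 1) (⇑(U 0)) ^ j :=
    Finset.sum_nonneg fun j _ => pow_nonneg (hNorm_nonneg _ _) _
  have apU := apriori SU (m := s + 1) (by omega) hF hA0 hA ⟨MU, hMU⟩ (hNorm_pos (by omega) _ hU0) (by
    have : T ≤ cs * (coefA k a * ∑ j ∈ Finset.Icc 1 k, hNorm (s + 1) (⇑(U 0)) ^ j)⁻¹ :=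
      hTc.trans (mul_le_mul_of_nonneg_left (min_le_left _ _) hcs0.le)
    exact (mul_le_of_le_mul_inv hcs0.le (by positivity) this).trans (min_le_left _ _))
  have hX : ∀ y, (Polynomial.X : Polynomial ℝ).eval y =
      ∑ j ∈ Finset.Icc 1 1, (fun _ : ℕ => (1:ℝ)) j * y ^ j := fun y => by simp
  have apu := apriori Su (m := s + 1) (k := 1) (a := fun _ => 1) (A := 1) (by omega) hX zero_le_one
    (fun j _ => by simp) ⟨Mu, hMu⟩ (hNorm_pos (by omega) _ hu0) (by
    have : T ≤ cs * (hNorm (s + 1) (⇑(u 0)))⁻¹ :=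
      hTc.trans (mul_le_mul_of_nonneg_left (min_le_right _ _) hcs0.le)
    have := (mul_le_of_le_mul_inv hcs0.le (hNorm_nonneg _ _) this).trans (min_le_right _ _)
    simpa using this)
  have hmx : max (ε ^ 2) (ε ^ (1 + 1)) ≤ max (ε ^ 2) (ε ^ (k + 1)) := by
    simp
  have de := diff_est Su SU (s := s) hT.le (M := max Mu MU)
    (r := (D₁ + D₂) * max (ε ^ 2) (ε ^ (k + 1)))
    (fun t ht => (hMu t ht).trans (le_max_left _ _)) (fun t ht => (hMU t ht).trans (le_max_right _ _))
    (fun t ht => by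
      have e1 := nonlin_est (isS (u t)) hs (c := 2 * c₀) hε (by positivity) hX zero_le_one
        (fun j _ => by simp) ((apu t ht).trans (by linarith))
      have e2 := nonlin_est (isS (U t)) hs (c := 2 * C₀) hε (by positivity) hF hA0 hA
        ((apU t ht).trans (by linarith))
      have e3 : D₁ * max (ε ^ 2) (ε ^ (1 + 1)) ≤ D₁ * max (ε ^ 2) (ε ^ (k + 1)) := by gcongr
      have e4 := add_le_add (e1.trans e3) e2
      rw [add_mul]
      exact e4)
  have hfin : ∀ t ∈ Set.Icc 0 T, hNorm s (fun x => u t x - U t x) ≤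
      (s + 1) * (C + 2 * T * (D₁ + D₂)) * max (ε ^ 2) (ε ^ (k + 1)) := fun t ht => by
    refine (de t ht).trans ?_
    have : (s + 1) * (hNorm s (fun x => u 0 x - U 0 x) +
        2 * T * ((D₁ + D₂) * max (ε ^ 2) (ε ^ (k + 1)))) ≤
      (s + 1) * (C * max (ε ^ 2) (ε ^ (k + 1)) +
        2 * T * ((D₁ + D₂) * max (ε ^ 2) (ε ^ (k + 1)))) := by gcongr
    refine this.trans (le_of_eq ?_)
    ring
  refine ⟨ciSup_le fun t => ?_, ciSup_le fun t => hfin t t.2⟩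
  refine (linf_le hs (hwS t)).trans ?_
  exact le_ciSup (f := fun t : Set.Icc (0:ℝ) T => hNorm s (fun x => u t x - U t x))
    ⟨_, by rintro _ ⟨τ, rfl⟩; exact hfin τ τ.2⟩ t
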